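/- arXiv:2008.00755 — 6 statements merged into one kernel-verified Lean document; each statement's English description precedes it below -/
import Mathlib

section
/- Let L/K be a finitely σ-generated Galois extension of difference fields. Then there exists a chain K ⊆ L₁ ⊆ L₂ ⊆ … ⊆ L_n ⊆ L of intermediate σ-fields such that L₁ = π₀^σ(L/K), for i = 1,…,n−1 the extension L_{i+1}/L_i is benign with Galois group isomorphic, as an expansive profinite group, to the full one-sided group shift on some finite simple group Γ_i, and L/L_n is σ-radicial. Moreover, the length n of such a chain and the isomorphism classes of the finite simple groups Γ_i are uniquely determined by L/K. -/
open Function Set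

/-- The shift map on the full one-sided group shift `Γ^ℕ`, as a group homomorphism. -/
def shiftHom (Γ : Type*) [Group Γ] : (ℕ → Γ) →* (ℕ → Γ) where
  toFun a := fun n => a (n + 1)
  map_one' := rfl
  map_mul' _ _ := rfl

/-- A finite simple group, bundled with its (discrete) topology. -/
structure FinSimpleGroup : Type 1 where
  carrier : Type
  [group : Group carrier]
  [finite : Finite carrier]
  [simple : IsSimpleGroup carrier]

attribute [instance] FinSimpleGroup.group FinSimpleGroup.finite FinSimpleGroup.simple

instance (Γ : FinSimpleGroup) : TopologicalSpace Γ.carrier := ⊥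
instance (Γ : FinSimpleGroup) : DiscreteTopology Γ.carrier := ⟨rfl⟩

section DifferenceGalois

variable {K L : Type*} [Field K] [Field L] [Algebra K L]

/-- `M/K` is σ-separable: `σ` maps every `K`-linearly independent finite family of
elements of `M` to a `K`-linearly independent family. -/
def SigmaSeparable (σ : L →+* L) (M : IntermediateField K L) : Prop :=
  ∀ (k : ℕ) (f : Fin k → L), (∀ j, f j ∈ M) →
    LinearIndependent K f → LinearIndependent K (⇑σ ∘ f)

/-- The defining property of `π₀^σ(L/K)`: an intermediate σ-field `M` of `L/K` such that
`M/K` is finite, Galois and σ-separable. `π₀^σ(L/K)` is the largest such `M`. -/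
def IsPi0Field (σ : L →+* L) (M : IntermediateField K L) : Prop :=
  (∀ x ∈ M, σ x ∈ M) ∧ FiniteDimensional K ↥M ∧ IsGalois K ↥M ∧ SigmaSeparable σ M

/-- The extension `E/F` (of intermediate σ-fields of `L/K`) is benign: there is an
intermediate field `F ⊆ M ⊆ E` with `M/F` finite Galois, `E = F⟨M⟩`,
`[F(σⁿ(M)) : F] = [M : F]` for all `n`, and the fields `F(σⁿ(M))` linearly disjoint over
`F` (expressed by `[F(M ∪ σ(M) ∪ ⋯ ∪ σⁿ(M)) : F] = [M : F]^{n+1}`). -/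
def BenignExtension (σ : L →+* L) (F E : IntermediateField K L) (h : F ≤ E) : Prop :=
  ∃ M : IntermediateField ↥F L,
    M ≤ IntermediateField.extendScalars h ∧
    FiniteDimensional ↥F ↥M ∧
    IsGalois ↥F ↥M ∧
    IntermediateField.adjoin ↥F (⋃ n : ℕ, (⇑σ)^[n] '' (M : Set L)) =
      IntermediateField.extendScalars h ∧
    (∀ n : ℕ,
      Module.finrank ↥F ↥(IntermediateField.adjoin ↥F ((⇑σ)^[n] '' (M : Set L))) =
        Module.finrank ↥F ↥M) ∧
    (∀ n : ℕ,
      Module.finrank ↥F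
          ↥(IntermediateField.adjoin ↥F (⋃ k : Fin (n + 1), (⇑σ)^[(k : ℕ)] '' (M : Set L))) =
        Module.finrank ↥F ↥M ^ (n + 1))

/-- The Galois group of `E/F` (for intermediate σ-fields `F ≤ E` of `L/K`), together with
its induced endomorphism `g ↦ g^σ`, is isomorphic as an expansive profinite group to the
full one-sided group shift on `Γ`.  This is encoded via the restriction surjection
`Gal(L/F) → Gal(E/F)`: there is a continuous surjective homomorphism
`ψ : Gal(L/F) → Γ^ℕ`, equivariant for `g ↦ g^σ` and the shift, whose kernel is
`Gal(L/E)`; since all groups involved are compact Hausdorff this faithfully encodes a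
σ-equivariant isomorphism of topological groups `Gal(E/F) ≅ Γ^ℕ`. -/
def GaloisFactorIsFullShift (σ : L →+* L) (F E : IntermediateField K L)
    (Γ : FinSimpleGroup) : Prop :=
  ∃ ψ : (L ≃ₐ[↥F] L) →* (ℕ → Γ.carrier),
    Continuous ψ ∧ Function.Surjective ψ ∧
    (∀ g h : L ≃ₐ[↥F] L, (∀ x : L, σ (h x) = g (σ x)) →
      ψ h = shiftHom Γ.carrier (ψ g)) ∧
    (∀ g : L ≃ₐ[↥F] L, ψ g = 1 ↔ ∀ x ∈ E, g x = x)

/-- A chain `K ⊆ L₁ ⊆ ⋯ ⊆ L_n ⊆ L` (here `Li i = L_{i+1}`) witnessing Babbitt's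
decomposition: all members are intermediate σ-fields; `L₁ = π₀^σ(L/K)`; each extension
`L_{i+1}/L_i` is benign with Galois group isomorphic (as an expansive profinite group) to
the full one-sided group shift on the finite simple group `Γ i`; and `L/L_n` is
σ-radicial. -/
def BabbittSeries (σ : L →+* L) (n : ℕ) (Li : ℕ → IntermediateField K L)
    (Γ : ℕ → FinSimpleGroup) : Prop :=
  1 ≤ n ∧
  (∀ i, i < n → ∀ x ∈ Li i, σ x ∈ Li i) ∧
  ∃ hchain : ∀ i, i + 1 < n → Li i ≤ Li (i + 1),
    (IsPi0Field σ (Li 0) ∧ ∀ M : IntermediateField K L, IsPi0Field σ M → M ≤ Li 0) ∧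
    (∀ i, ∀ hi : i + 1 < n,
      BenignExtension σ (Li i) (Li (i + 1)) (hchain i hi) ∧
      GaloisFactorIsFullShift σ (Li i) (Li (i + 1)) (Γ i)) ∧
    (∀ a : L, ∃ k : ℕ, (⇑σ)^[k] a ∈ Li (n - 1))

end DifferenceGalois


set_option linter.unusedSectionVars false
set_option linter.style.haveILetI false

section Dyn

theorem antitone_nat_stab (f : ℕ → ℕ) (r : ℕ) (h : ∀ k, r ≤ k → f (k+1) ≤ f k) :
    ∃ n, r ≤ n ∧ ∀ k, n ≤ k → f k = f n := by
  have hanti : ∀ a b, r ≤ a → a ≤ b → f b ≤ f a := by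
    intro a b ha hab
    induction b, hab using Nat.le_induction with
    | base => exact le_rfl
    | succ b hb ih => exact (h b (by omega)).trans ih
  have hne : (Set.image f {k | r ≤ k}).Nonempty := ⟨f r, r, le_refl r, rfl⟩
  obtain ⟨n, hn, hn2⟩ := Nat.sInf_mem hne
  refine ⟨n, hn, fun k hk => le_antisymm (hanti _ _ hn hk) ?_⟩
  rw [hn2]
  exact Nat.sInf_le ⟨k, le_trans hn hk, rfl⟩

variable {G : Type*} [Group G]

/-- iterate as a homomorphism -/
def iterHom (s : G →* G) (k : ℕ) : G →* G where
  toFun := s^[k]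
  map_one' := iterate_map_one s k
  map_mul' := iterate_map_mul s k

/-- finite-level subgroups -/
def Un (s : G →* G) (U : Subgroup G) (k : ℕ) : Subgroup G where
  carrier := {x | ∀ j, j < k → s^[j] x ∈ U}
  one_mem' := by intro j _; rw [iterate_map_one]; exact U.one_mem
  mul_mem' := by
    intro a b ha hb j hj; rw [iterate_map_mul]; exact U.mul_mem (ha j hj) (hb j hj)
  inv_mem' := by
    intro a ha j hj; rw [iterate_map_inv]; exact U.inv_mem (ha j hj)

/-- kernel of the iterate -/
def Dk (s : G →* G) (k : ℕ) : Subgroup G where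
  carrier := {x | s^[k] x = 1}
  one_mem' := iterate_map_one s k
  mul_mem' := by
    intro a b ha hb
    simp only [mem_ofPred_eq] at *
    rw [iterate_map_mul, ha, hb, one_mul]
  inv_mem' := by
    intro a ha
    simp only [mem_ofPred_eq] at *
    rw [iterate_map_inv, ha, inv_one]

theorem mem_Un {s : G →* G} {U : Subgroup G} {k : ℕ} {x : G} :
    x ∈ Un s U k ↔ ∀ j, j < k → s^[j] x ∈ U := Iff.rfl

theorem mem_Dk {s : G →* G} {k : ℕ} {x : G} : x ∈ Dk s k ↔ s^[k] x = 1 := Iff.rfl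

theorem Dk_mono {s : G →* G} {k l : ℕ} (h : k ≤ l) : Dk s k ≤ Dk s l := by
  intro x hx
  rw [mem_Dk] at *
  obtain ⟨m, rfl⟩ := Nat.exists_eq_add_of_le' h
  rw [iterate_add_apply, hx, iterate_map_one]

/-- union of the kernels of the iterates -/
def DD (s : G →* G) : Subgroup G where
  carrier := {x | ∃ k, x ∈ Dk s k}
  one_mem' := ⟨0, rfl⟩
  mul_mem' := by
    rintro a b ⟨k, hk⟩ ⟨l, hl⟩
    exact ⟨max k l, (Dk s _).mul_mem (Dk_mono (le_max_left _ _) hk) (Dk_mono (le_max_right _ _) hl)⟩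
  inv_mem' := by
    rintro a ⟨k, hk⟩
    exact ⟨k, (Dk s k).inv_mem hk⟩

theorem mem_DD {s : G →* G} {x : G} : x ∈ DD s ↔ ∃ k, s^[k] x = 1 := Iff.rfl

instance Dk_normal (s : G →* G) (k : ℕ) : (Dk s k).Normal := by
  constructor
  intro n hn g
  rw [mem_Dk] at *
  rw [iterate_map_mul, iterate_map_mul, hn, iterate_map_inv]; group

instance DD_normal (s : G →* G) : (DD s).Normal := by
  constructor
  rintro n ⟨k, hn⟩ g
  exact ⟨k, (Dk_normal s k).conj_mem n hn g⟩

theorem DD_of_s {s : G →* G} {x : G} (h : s x ∈ DD s) : x ∈ DD s := by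
  obtain ⟨k, hk⟩ := h
  exact ⟨k+1, by rw [mem_Dk, iterate_succ_apply]; exact hk⟩

theorem DD_s {s : G →* G} {x : G} (h : x ∈ DD s) : s x ∈ DD s := by
  obtain ⟨k, hk⟩ := h
  refine ⟨k, ?_⟩
  rw [mem_Dk] at *
  rw [← iterate_succ_apply, iterate_succ_apply', hk, map_one]

instance Un_normal (s : G →* G) (U : Subgroup G) [hU : U.Normal] (k : ℕ) : (Un s U k).Normal := by
  constructor
  intro n hn g j hj
  rw [iterate_map_mul, iterate_map_mul, iterate_map_inv]
  exact hU.conj_mem _ (hn j hj) _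

theorem Un_anti {s : G →* G} {U : Subgroup G} {k l : ℕ} (h : k ≤ l) : Un s U l ≤ Un s U k :=
  fun _ hx j hj => hx j (by omega)

theorem Un_succ {s : G →* G} {U : Subgroup G} {k : ℕ} {x : G} :
    x ∈ Un s U (k+1) ↔ x ∈ U ∧ s x ∈ Un s U k := by
  constructor
  · intro h
    exact ⟨h 0 (by omega), fun j hj => by rw [← iterate_succ_apply]; exact h (j+1) (by omega)⟩
  · rintro ⟨h0, h⟩ j hj
    cases j with
    | zero => exact h0
    | succ j => rw [iterate_succ_apply]; exact h j (by omega)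

variable [TopologicalSpace G]

/-- expansive endomorphism -/
structure IsExp (s : G →* G) : Prop where
  cont : Continuous s
  exp : ∃ U : Subgroup G, IsOpen (U : Set G) ∧ ∀ x, (∀ n, s^[n] x ∈ U) → x = 1

variable [IsTopologicalGroup G] [CompactSpace G]

theorem open_finiteIndex (U : Subgroup G) (hU : IsOpen (U : Set G)) : U.FiniteIndex :=
  haveI := Subgroup.quotient_finite_of_isOpen U hU
  Subgroup.finiteIndex_of_finite_quotient

theorem IsExp.normal {s : G →* G} (h : IsExp s) : ∃ U : Subgroup G, U.Normal ∧ IsOpen (U : Set G) ∧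
    ∀ x, (∀ n, s^[n] x ∈ U) → x = 1 := by
  obtain ⟨U, hU, h2⟩ := h.exp
  haveI := open_finiteIndex U hU
  refine ⟨U.normalCore, inferInstance, ?_, fun x hx => h2 x fun n => U.normalCore_le (hx n)⟩
  exact Subgroup.isOpen_of_isClosed_of_finiteIndex _
    (U.normalCore_isClosed (Subgroup.isClosed_of_isOpen U hU))

theorem cpt_seq (C : ℕ → Set G) (hC : ∀ m n, m ≤ n → C n ⊆ C m) (hcl : ∀ n, IsClosed (C n))
    (V : Set G) (hV : IsOpen V) (h : ∀ x, (∀ n, x ∈ C n) → x ∈ V) : ∃ n, C n ⊆ V := by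
  apply exists_subset_nhds_of_compactSpace (V := C)
  · intro m n
    exact ⟨max m n, hC _ _ (le_max_left _ _), hC _ _ (le_max_right _ _)⟩
  · exact hcl
  · intro x hx
    exact hV.mem_nhds (h x (by simpa using hx))

theorem cpt_ne (C : ℕ → Set G) (hC : ∀ m n, m ≤ n → C n ⊆ C m) (hcl : ∀ n, IsClosed (C n))
    (h : ∀ n, (C n).Nonempty) : ∃ x, ∀ n, x ∈ C n := by
  by_contra hh
  push Not at hh
  obtain ⟨n, hn⟩ := cpt_seq C hC hcl ∅ isOpen_empty (fun x hx => by
    obtain ⟨n, hn⟩ := hh x; exact hn (hx n))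
  obtain ⟨x, hx⟩ := h n
  exact hn hx

theorem Un_open {s : G →* G} (hs : Continuous s) {U : Subgroup G} (hU : IsOpen (U : Set G))
    (k : ℕ) : IsOpen (Un s U k : Set G) := by
  have : (Un s U k : Set G) = ⋂ j ∈ Finset.range k, s^[j] ⁻¹' U := by
    ext x; simp [mem_Un]
  rw [this]
  exact isOpen_biInter_finset fun j _ => hU.preimage (hs.iterate j)

theorem Un_closed {s : G →* G} (hs : Continuous s) {U : Subgroup G} (hU : IsOpen (U : Set G))
    (k : ℕ) : IsClosed (Un s U k : Set G) :=
  Subgroup.isClosed_of_isOpen _ (Un_open hs hU k)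

theorem Un_small {s : G →* G} (hs : Continuous s) {U : Subgroup G} (hU : IsOpen (U : Set G))
    (he : ∀ x, (∀ n, s^[n] x ∈ U) → x = 1) {V : Set G} (hV : IsOpen V) (h1 : (1 : G) ∈ V) :
    ∃ k, (Un s U k : Set G) ⊆ V := by
  apply cpt_seq _ (fun m n h => Un_anti h) (Un_closed hs hU) V hV
  intro x hx
  rw [he x (fun n => hx (n+1) n (by omega))]; exact h1

theorem Dk_finite {s : G →* G} (h : IsExp s) (k : ℕ) : Finite (Dk s k) := by
  obtain ⟨U, hU, he⟩ := h.exp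
  haveI := Subgroup.quotient_finite_of_isOpen _ (Un_open h.cont hU k)
  apply Finite.of_injective (fun x : Dk s k => (QuotientGroup.mk x.1 : G ⧸ Un s U k))
  intro x y hxy
  have h1 := QuotientGroup.eq.1 hxy
  have h2 : x.1⁻¹ * y.1 ∈ Dk s k := (Dk s k).mul_mem ((Dk s k).inv_mem x.2) y.2
  have : x.1⁻¹ * y.1 = 1 := he _ fun n => by
    rcases lt_or_ge n k with hn | hn
    · exact h1 n hn
    · rw [mem_Dk.1 (Dk_mono hn h2)]; exact U.one_mem
  exact Subtype.ext (inv_mul_eq_one.1 this)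

variable [T2Space G]

theorem Un_surj {s : G →* G} (hs : Continuous s) {U : Subgroup G} [U.Normal]
    (hU : IsOpen (U : Set G))
    (he : ∀ x, (∀ n, s^[n] x ∈ U) → x = 1) :
    ∃ r, ∀ k, r ≤ k → ∀ x ∈ Un s U k, ∃ y ∈ Un s U (k+1), s y = x := by
  have fi : ∀ k, (Un s U k).FiniteIndex := fun k => open_finiteIndex _ (Un_open hs hU k)
  have key : ∀ k, 1 ≤ k → (Un s U (k+2)).relIndex (Un s U (k+1)) =
      (Un s U (k+1)).relIndex ((Un s U (k+1)).map s) := by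
    intro k hk
    rw [← Subgroup.relIndex_comap, ← Subgroup.inf_relIndex_right ((Un s U (k+1)).comap s)]
    congr 1
    ext x
    simp only [Subgroup.mem_inf, Subgroup.mem_comap]
    constructor
    · intro h; exact ⟨(Un_succ.1 h).2, Un_anti (by omega) h⟩
    · rintro ⟨h1, h2⟩; exact Un_succ.2 ⟨(Un_succ.1 h2).1, h1⟩
  have hle : ∀ k, (Un s U (k+1)).map s ≤ Un s U k := by
    intro k; rintro _ ⟨x, hx, rfl⟩; exact (Un_succ.1 hx).2
  have mult : ∀ k, 1 ≤ k → (Un s U (k+2)).relIndex (Un s U (k+1)) *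
      ((Un s U (k+1)).map s ⊔ Un s U (k+1)).relIndex (Un s U k) =
      (Un s U (k+1)).relIndex (Un s U k) := by
    intro k hk
    rw [key k hk, ← Subgroup.relIndex_sup_right]
    exact Subgroup.relIndex_mul_relIndex _ _ _ le_sup_right (sup_le (hle k) (Un_anti (by omega)))
  have pos : ∀ k, (Un s U (k+1)).relIndex (Un s U k) ≠ 0 := fun k => by
    have := fi (k+1); exact (Subgroup.isFiniteRelIndex_of_finiteIndex).relIndex_ne_zero
  obtain ⟨r, hr, hst⟩ := antitone_nat_stab (fun k => (Un s U (k+1)).relIndex (Un s U k)) 1 (by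
    intro k hk
    have h1 := mult k hk
    apply Nat.le_of_dvd (Nat.pos_of_ne_zero (pos k))
    exact ⟨_, h1.symm⟩)
  have step : ∀ k, r ≤ k → Un s U k ≤ (Un s U (k+1)).map s ⊔ Un s U (k+1) := by
    intro k hk
    have h1 := mult k (by omega)
    have h2 := hst k hk
    have h3 := hst (k+1) (by omega)
    beta_reduce at h2 h3
    rw [h3, h2] at h1
    rw [← Subgroup.relIndex_eq_one]
    have := pos r
    exact (Nat.mul_eq_left this).1 h1
  have step2 : ∀ k, r ≤ k → ∀ l, k ≤ l → ∀ x ∈ Un s U k, ∃ y ∈ Un s U (k+1), (s y)⁻¹ * x ∈ Un s U l := by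
    intro k hk l hl
    induction l, hl using Nat.le_induction with
    | base => intro x hx; exact ⟨1, Subgroup.one_mem _, by simpa using hx⟩
    | succ l hl ih =>
      intro x hx
      obtain ⟨y, hy, h⟩ := ih x hx
      have := step l (by omega) h
      rw [← SetLike.mem_coe, Subgroup.mul_normal] at this
      obtain ⟨_, ⟨z, hz, rfl⟩, w, hw, hzw⟩ := this
      refine ⟨y * z, Subgroup.mul_mem _ hy (Un_anti (by omega) hz), ?_⟩
      have : (s (y*z))⁻¹ * x = w := by
        simp only at hzw
        rw [map_mul, mul_inv_rev, mul_assoc, ← hzw]; group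
      rw [this]; exact hw
  refine ⟨r, fun k hk x hx => ?_⟩
  obtain ⟨y, hy⟩ := cpt_ne (fun l => {y | y ∈ Un s U (k+1) ∧ (s y)⁻¹ * x ∈ Un s U l})
    (fun m n h y hy => ⟨hy.1, Un_anti h hy.2⟩)
    (fun l => (Un_closed hs hU _).inter
      ((Un_closed hs hU l).preimage (by fun_prop : Continuous fun y => (s y)⁻¹ * x)))
    (fun l => by
      obtain ⟨y, hy, h⟩ := step2 k hk (max k l) (le_max_left _ _) x hx
      exact ⟨y, hy, Un_anti (le_max_right _ _) h⟩)
  refine ⟨y, (hy 0).1, ?_⟩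
  have := he ((s y)⁻¹ * x) fun n => (hy (n+1)).2 n (by omega)
  exact inv_mul_eq_one.1 this

/-- Key structural lemma: there is an open normal `V` such that it is in the closure of `DD`,
  it lies in the image of every iterate. -/
theorem open_key {s : G →* G} (h : IsExp s) : ∃ V : Subgroup G, V.Normal ∧ IsOpen (V : Set G) ∧
    V ≤ (DD s).topologicalClosure ∧ (∀ k, ∀ x ∈ V, ∃ y, s^[k] y = x) ∧
    (∀ x ∈ V, ∃ y ∈ V, s y = x) := by
  obtain ⟨U, hn, hU, he⟩ := h.normal
  obtain ⟨r, hr⟩ := Un_surj h.cont hU he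
  have hrj : ∀ j, ∀ k, r ≤ k → ∀ x ∈ Un s U k, ∃ y ∈ Un s U (k+j), s^[j] y = x := by
    intro j
    induction j with
    | zero => intro k _ x hx; exact ⟨x, hx, rfl⟩
    | succ j ih =>
      intro k hk x hx
      obtain ⟨y, hy, rfl⟩ := ih k hk x hx
      obtain ⟨z, hz, rfl⟩ := hr (k+j) (by omega) y hy
      exact ⟨z, hz, by rw [iterate_succ_apply]⟩
  refine ⟨Un s U r, inferInstance, Un_open h.cont hU r, ?_, ?_, ?_⟩
  · -- W j
    let W : ℕ → Subgroup G := fun j => (Un s U r).map (iterHom s j)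
    have hW : ∀ j x, x ∈ W j ↔ ∃ y ∈ Un s U r, s^[j] y = x := by
      intro j x
      exact Iff.rfl
    have hmono : ∀ j, W j ≤ W (j+1) := by
      intro j x hx
      obtain ⟨y, hy, rfl⟩ := (hW _ _).1 hx
      obtain ⟨z, hz, rfl⟩ := hr r le_rfl y hy
      exact (hW _ _).2 ⟨z, Un_anti (by omega) hz, by rw [iterate_succ_apply]⟩
    have hmono2 : Monotone W := monotone_nat_of_le_succ hmono
    have h0 : Un s U r ≤ W 0 := fun x hx => (hW _ _).2 ⟨x, hx, rfl⟩
    haveI := open_finiteIndex _ (Un_open h.cont hU r)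
    have fi : ∀ j, (W j).FiniteIndex := fun j =>
      Subgroup.finiteIndex_of_le (h0.trans (hmono2 (Nat.zero_le j)))
    obtain ⟨J, -, hJ⟩ := antitone_nat_stab (fun j => (W j).index) 0 (fun j _ => by
      haveI := fi j
      exact Subgroup.index_antitone (hmono j))
    have hst : ∀ j, J ≤ j → W j = W J := by
      intro j hj
      have h1 := Subgroup.relIndex_mul_index (hmono2 hj)
      have h2 : (W j).index = (W J).index := hJ j hj
      rw [h2] at h1
      have h3 : (W J).index ≠ 0 := (fi J).index_ne_zero
      exact le_antisymm (Subgroup.relIndex_eq_one.1 ((Nat.mul_eq_right h3).1 h1)) (hmono2 hj)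
    intro x hx
    rw [← SetLike.mem_coe, Subgroup.topologicalClosure_coe, mem_closure_iff_nhds]
    intro t ht
    have ht' : (fun g => x * g) ⁻¹' t ∈ nhds (1:G) := by
      apply (continuous_const_mul x).continuousAt.preimage_mem_nhds; simpa using ht
    obtain ⟨t', h1, h2, h3⟩ := mem_nhds_iff.1 ht'
    obtain ⟨k, hk⟩ := Un_small h.cont hU he h2 h3
    -- x ∈ DD * Un (r+k)
    have hx1 : s^[J + k] x ∈ W (J+k) := (hW _ _).2 ⟨x, hx, rfl⟩
    rw [hst _ (by omega)] at hx1
    obtain ⟨y, hy, hyx⟩ := (hW _ _).1 hx1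
    obtain ⟨z, hz, rfl⟩ := hrj k r le_rfl y hy
    rw [← iterate_add_apply] at hyx
    refine ⟨x * z⁻¹, h1 (hk ?_), ⟨J + k, ?_⟩⟩
    · exact Subgroup.inv_mem _ (Un_anti (by omega) hz)
    · rw [mem_Dk, iterate_map_mul, iterate_map_inv, hyx, mul_inv_cancel]
  · intro k x hx
    obtain ⟨y, -, hy⟩ := hrj k r le_rfl x hx
    exact ⟨y, hy⟩
  · intro x hx
    obtain ⟨y, hy, hyx⟩ := hr r le_rfl x hx
    exact ⟨y, Un_anti (by omega) hy, hyx⟩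

theorem clD_open {s : G →* G} (h : IsExp s) : IsOpen ((DD s).topologicalClosure : Set G) := by
  obtain ⟨V, -, hV, hVD, -⟩ := open_key h
  exact Subgroup.isOpen_mono hVD hV

instance clD_normal (s : G →* G) : ((DD s).topologicalClosure).Normal :=
  Subgroup.is_normal_topologicalClosure _

theorem clD_preimage {s : G →* G} (h : IsExp s) (x : G) :
    s x ∈ (DD s).topologicalClosure ↔ x ∈ (DD s).topologicalClosure := by
  obtain ⟨V, hVn, hV, hVD, -, hs⟩ := open_key h
  constructor
  · intro hx
    rw [← SetLike.mem_coe, Subgroup.topologicalClosure_coe, mem_closure_iff_nhds] at hx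
    obtain ⟨d, hd1, hd2⟩ := hx ((fun g => (s x)⁻¹ * g) ⁻¹' V)
      ((hV.preimage (continuous_const_mul _)).mem_nhds (by simp [V.one_mem]))
    obtain ⟨y, hy, hyx⟩ := hs _ hd1
    have : x * y ∈ DD s := by
      apply DD_of_s
      rw [map_mul, hyx]
      simpa using hd2
    have h2 := Subgroup.mul_mem _ ((DD s).le_topologicalClosure this) (Subgroup.inv_mem _ (hVD hy))
    simpa using h2
  · intro hx
    rw [← SetLike.mem_coe, Subgroup.topologicalClosure_coe] at *
    have := image_closure_subset_closure_image h.cont (mem_image_of_mem s hx)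
    refine closure_mono ?_ this
    rintro _ ⟨y, hy, rfl⟩
    exact DD_s hy

end Dyn

set_option linter.unusedSectionVars false
set_option linter.style.haveILetI false

section Res
variable {G : Type*} [Group G]

/-- restriction of an endomorphism to a stable subgroup -/
def resHom (s : G →* G) (H : Subgroup G) (h : ∀ x ∈ H, s x ∈ H) : H →* H :=
  (s.comp H.subtype).codRestrict H (fun x => h x.1 x.2)

theorem resHom_iter (s : G →* G) (H : Subgroup G) (h : ∀ x ∈ H, s x ∈ H) (n : ℕ) (x : H) :
    (((resHom s H h)^[n] x : H) : G) = s^[n] x.1 := by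
  induction n generalizing x with
  | zero => rfl
  | succ n ih => rw [iterate_succ_apply, iterate_succ_apply, ih]; rfl

theorem res_mem_DD (s : G →* G) (H : Subgroup G) (h : ∀ x ∈ H, s x ∈ H) (x : H) :
    x ∈ DD (resHom s H h) ↔ x.1 ∈ DD s := by
  simp only [mem_DD]
  refine exists_congr fun k => ?_
  rw [← resHom_iter s H h, ← Subtype.coe_inj]; rfl

theorem IsExp.res [TopologicalSpace G] {s : G →* G} (hs : IsExp s) (H : Subgroup G)
    (h : ∀ x ∈ H, s x ∈ H) : IsExp (resHom s H h) := by
  obtain ⟨U, hU, he⟩ := hs.exp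
  refine ⟨?_, U.subgroupOf H, ?_, ?_⟩
  · exact Continuous.subtype_mk (hs.cont.comp continuous_subtype_val) _
  · exact hU.preimage continuous_subtype_val
  · intro x hx
    apply Subtype.ext
    apply he
    intro n
    have := hx n
    rw [Subgroup.mem_subgroupOf, resHom_iter] at this
    exact this

end Res

section Step
variable {G : Type*} [Group G] [TopologicalSpace G] [IsTopologicalGroup G] [CompactSpace G]
  [T2Space G]

theorem dense_ind {s : G →* G} (hd : (DD s).topologicalClosure = ⊤) (C : Set G) (hC : IsClosed C)
    (h : ∀ x ∈ DD s, x ∈ C) (x : G) : x ∈ C := by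
  have : x ∈ (DD s).topologicalClosure := by rw [hd]; trivial
  rw [← SetLike.mem_coe, Subgroup.topologicalClosure_coe] at this
  exact closure_minimal h hC this

/-- the coding map -/
def psi {Γ : Type*} [Group Γ] (s : G →* G) (f : G →* Γ) : G →* (ℕ → Γ) where
  toFun x := fun n => f (s^[n] x)
  map_one' := by ext n; simp [iterate_map_one]
  map_mul' x y := by ext n; simp [iterate_map_mul]

theorem psi_apply {Γ : Type*} [Group Γ] (s : G →* G) (f : G →* Γ) (x : G) (n : ℕ) :
    psi s f x n = f (s^[n] x) := rfl

theorem mem_psi_ker {Γ : Type*} [Group Γ] {s : G →* G} {f : G →* Γ} {x : G} :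
    x ∈ (psi s f).ker ↔ ∀ n, f (s^[n] x) = 1 := by
  rw [MonoidHom.mem_ker, funext_iff]; rfl

theorem approx {Γ : Type*} [Group Γ] {s : G →* G} {f : G →* Γ} (hs : Surjective s)
    (hA : ∀ γ, ∃ a, s a = 1 ∧ f a = γ) (n : ℕ) (γ : ℕ → Γ) :
    ∃ x, s^[n] x = 1 ∧ ∀ i, i < n → f (s^[i] x) = γ i := by
  induction n generalizing γ with
  | zero => exact ⟨1, rfl, fun i hi => by omega⟩
  | succ n ih =>
    obtain ⟨y, hy, h⟩ := ih (fun i => γ (i+1))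
    obtain ⟨x, rfl⟩ := hs y
    obtain ⟨a, ha, hfa⟩ := hA (γ 0 * (f x)⁻¹)
    refine ⟨a * x, ?_, ?_⟩
    · rw [iterate_succ_apply, map_mul, ha, one_mul, hy]
    · intro i hi
      cases i with
      | zero => simp [hfa]
      | succ i => rw [iterate_succ_apply, map_mul, ha, one_mul]; exact h i (by omega)

section fixf
variable {s : G →* G} (hs : Surjective s) (he : IsExp s) (hd : (DD s).topologicalClosure = ⊤)
variable {Γ : Type*} [Group Γ] [TopologicalSpace Γ] [DiscreteTopology Γ] {f : G →* Γ}
  (hf : Continuous f) (hA : ∀ γ, ∃ a, s a = 1 ∧ f a = γ)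

include he hf in
theorem psi_cont : Continuous (psi s f) :=
  continuous_pi fun n => hf.comp (he.cont.iterate n)

include he hf in
theorem psi_ker_closed : IsClosed ((psi s f).ker : Set G) := by
  have : ((psi s f).ker : Set G) = psi s f ⁻¹' {1} := by ext; simp [MonoidHom.mem_ker]
  rw [this]
  exact isClosed_singleton.preimage (psi_cont he hf)

include hs he hf hA in
theorem psi_surj : Surjective (psi s f) := by
  intro γ
  obtain ⟨x, hx⟩ := cpt_ne (fun n => {x | ∀ i, i < n → f (s^[i] x) = γ i})
    (fun m n h x hx i hi => hx i (by omega))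
    (fun n => by
      have : {x | ∀ i, i < n → f (s^[i] x) = γ i} =
        ⋂ i, ⋂ (_ : i < n), (fun x => f (s^[i] x)) ⁻¹' {γ i} := by ext; simp
      rw [this]
      exact isClosed_iInter fun i => isClosed_iInter fun _ =>
        isClosed_singleton.preimage (hf.comp (he.cont.iterate i)))
    (fun n => by
      obtain ⟨x, -, hx⟩ := approx hs hA n γ
      exact ⟨x, hx⟩)
  exact ⟨x, funext fun n => hx (n+1) n (by omega)⟩

theorem ker_s {x : G} (hx : x ∈ (psi s f).ker) : s x ∈ (psi s f).ker := by
  rw [mem_psi_ker] at *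
  intro n; rw [← iterate_succ_apply]; exact hx _

include hs hA in
theorem ker_surj {x : G} (hx : x ∈ (psi s f).ker) : ∃ y ∈ (psi s f).ker, s y = x := by
  obtain ⟨y, rfl⟩ := hs x
  obtain ⟨a, ha, hfa⟩ := hA (f y)⁻¹
  refine ⟨a * y, ?_, by rw [map_mul, ha, one_mul]⟩
  rw [mem_psi_ker] at *
  intro n
  cases n with
  | zero => simp [hfa]
  | succ n => rw [iterate_succ_apply, map_mul, ha, one_mul]; exact hx n

variable (s f) in
/-- closure of the locally nilpotent part of the kernel -/
def H0 : Subgroup G := (DD s ⊓ (psi s f).ker).topologicalClosure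

instance H0_normal : (H0 s f).Normal := Subgroup.is_normal_topologicalClosure _

theorem H0_closed : IsClosed (H0 s f : Set G) := Subgroup.isClosed_topologicalClosure _

theorem mem_H0 {x : G} (h1 : x ∈ DD s) (h2 : x ∈ (psi s f).ker) : x ∈ H0 s f :=
  Subgroup.le_topologicalClosure _ ⟨h1, h2⟩

include he hf in
theorem H0_le : H0 s f ≤ (psi s f).ker :=
  Subgroup.topologicalClosure_minimal _ inf_le_right (psi_ker_closed he hf)

include hs he hA in
theorem H0_surj {x : G} (hx : x ∈ H0 s f) : ∃ y ∈ H0 s f, s y = x := by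
  have hcl : IsClosed (s '' (H0 s f)) := (H0_closed.isCompact.image he.cont).isClosed
  have : (H0 s f : Set G) ⊆ s '' (H0 s f) := by
    rw [H0, Subgroup.topologicalClosure_coe]
    apply closure_minimal _ (by rw [← Subgroup.topologicalClosure_coe]; exact hcl)
    rintro x ⟨h1, h2⟩
    obtain ⟨y, hy, rfl⟩ := ker_surj hs hA h2
    exact ⟨y, subset_closure ⟨DD_of_s h1, hy⟩, rfl⟩
  exact this hx

include hd in
theorem comm_mem (w h : G) (hh : h ∈ (psi s f).ker) : w * h * w⁻¹ * h⁻¹ ∈ H0 s f := by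
  refine dense_ind hd ((fun w => w * h * w⁻¹ * h⁻¹) ⁻¹' (H0 s f)) ?_ ?_ w
  · exact H0_closed.preimage (by fun_prop)
  · intro w hw
    apply mem_H0
    · have : w * h * w⁻¹ * h⁻¹ = w * (h * w⁻¹ * h⁻¹) := by group
      beta_reduce
      rw [this]
      exact Subgroup.mul_mem _ hw ((DD_normal s).conj_mem _ (Subgroup.inv_mem _ hw) h)
    · exact Subgroup.mul_mem _ ((MonoidHom.normal_ker _).conj_mem _ hh w) (Subgroup.inv_mem _ hh)

theorem closed_of_open {H : Subgroup G} (hH : IsClosed (H : Set G)) {U : Subgroup G} [U.Normal]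
    (hc : Continuous s) (hU : IsOpen (U : Set G)) (hx : ∀ x, (∀ n, s^[n] x ∈ U) → x = 1)
    {x : G} (h : ∀ k, x ∈ H ⊔ Un s U k) : x ∈ H := by
  by_contra hxH
  have : IsOpen ((fun g => x * g⁻¹) ⁻¹' (H : Set G)ᶜ) :=
    hH.isOpen_compl.preimage (by fun_prop)
  obtain ⟨k, hk⟩ := Un_small hc hU hx this (by simpa using hxH)
  have h1 := h k
  rw [← SetLike.mem_coe, Subgroup.mul_normal] at h1
  obtain ⟨y, hy, z, hz, rfl⟩ := h1
  have := hk hz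
  simp at this
  exact this hy

include hs he hd hf hA in
theorem nonab [Finite Γ] [IsSimpleGroup Γ] (hn : ∃ a b : Γ, a * b ≠ b * a) :
    (psi s f).ker ≤ H0 s f := by
  obtain ⟨U, hUn, hU, hx⟩ := he.normal
  intro x0 hx0
  refine closed_of_open H0_closed he.cont hU hx fun k => ?_
  set N := H0 s f ⊔ Un s U k with hN
  have hNo : IsOpen (N : Set G) := Subgroup.isOpen_mono le_sup_right (Un_open he.cont hU k)
  let P : ℕ → Subgroup G := fun n =>
    { carrier := {x | ∀ i, i < n → f (s^[i] x) = 1}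
      one_mem' := by intro i _; rw [iterate_map_one, map_one]
      mul_mem' := by
        intro a b ha hb i hi; rw [iterate_map_mul, map_mul, ha i hi, hb i hi, one_mul]
      inv_mem' := by intro a ha i hi; rw [iterate_map_inv, map_inv, ha i hi, inv_one] }
  have hPo : ∀ n, IsOpen (P n : Set G) := by
    intro n
    have : (P n : Set G) = ⋂ i ∈ Finset.range n, (fun x => f (s^[i] x)) ⁻¹' {1} := by
      ext; simp [P]
    rw [this]
    exact isOpen_biInter_finset fun i _ =>
      (isOpen_discrete _).preimage (hf.comp (he.cont.iterate i))
  obtain ⟨n, hn1⟩ := cpt_seq (fun n => (P n : Set G)) (fun m n h x hx i hi => hx i (by omega))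
    (fun n => Subgroup.isClosed_of_isOpen _ (hPo n))
    (((psi s f).ker ⊔ Un s U k : Subgroup G) : Set G)
    (Subgroup.isOpen_mono le_sup_right (Un_open he.cont hU k))
    (fun x hx => (le_sup_left : (psi s f).ker ≤ _)
      (mem_psi_ker.2 fun n => hx (n+1) n (by omega)))
  have hcomm : ∀ w x, x ∈ P n → w * x * w⁻¹ * x⁻¹ ∈ N := by
    intro w x hx
    have h1 := hn1 hx
    rw [Subgroup.mul_normal] at h1
    obtain ⟨h, hh, u, hu, rfl⟩ := h1
    have h2 : w * h * w⁻¹ * h⁻¹ ∈ N := (le_sup_left : H0 s f ≤ N) (comm_mem hd w h hh)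
    have hu' : u ∈ N := (le_sup_right : Un s U k ≤ N) hu
    rw [← QuotientGroup.eq_one_iff] at h2 hu' ⊢
    simp only [QuotientGroup.mk_mul, QuotientGroup.mk_inv] at *
    rw [hu']; simpa using h2
  have claim : ∀ m, ∀ j, j ≤ m → n ≤ m - j → ∀ x ∈ Dk s m, x ∈ P (m - j) → x ∈ N := by
    intro m j
    induction j with
    | zero =>
      intro _ _ x h1 h2
      apply (le_sup_left : H0 s f ≤ N)
      refine mem_H0 ⟨m, h1⟩ (mem_psi_ker.2 fun i => ?_)
      rcases lt_or_ge i m with hi | hi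
      · exact h2 i hi
      · rw [mem_Dk.1 (Dk_mono hi h1), map_one]
    | succ j ih =>
      intro hj hnj x h1 h2
      obtain ⟨i, hi⟩ : ∃ i, i = m - (j+1) := ⟨_, rfl⟩
      have hi2 : m - j = i + 1 := by omega
      rw [← hi] at h2 hnj
      rw [hi2] at ih
      let Y : Subgroup G := Dk s m ⊓ P i
      have hYP : Y ≤ P n := fun y hy j hj => hy.2 j (by omega)
      let Θ : G →* Γ := f.comp (iterHom s i)
      have hΘ : ∀ γ, ∃ y ∈ Y, Θ y = γ := by
        intro γ
        obtain ⟨y, hy1, hy2⟩ := approx hs hA m (Pi.mulSingle i γ)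
        refine ⟨y, ⟨hy1, fun l hl => ?_⟩, ?_⟩
        · rw [hy2 l (by omega), Pi.mulSingle_eq_of_ne (by omega)]
        · change f (s^[i] y) = γ
          rw [hy2 i (by omega), Pi.mulSingle_eq_same]
      have hk : ∀ y ∈ Y, Θ y = 1 → y ∈ N := by
        intro y hy h
        apply ih (by omega) (by omega) y hy.1
        intro l hl
        rcases Nat.lt_succ_iff_lt_or_eq.1 hl with hl | rfl
        · exact hy.2 l hl
        · exact h
      let T : Subgroup Γ := (Y ⊓ N).map Θ
      have hTn : T.Normal := by
        constructor
        rintro _ ⟨y, hy, rfl⟩ g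
        obtain ⟨z, hz, rfl⟩ := hΘ g
        refine ⟨z * y * z⁻¹, ⟨Y.mul_mem (Y.mul_mem hz hy.1) (Y.inv_mem hz), ?_⟩, by simp⟩
        exact (inferInstance : N.Normal).conj_mem _ hy.2 z
      have hT : T = ⊤ := by
        rcases hTn.eq_bot_or_eq_top with h | h
        · exfalso
          obtain ⟨a, b, hab⟩ := hn
          obtain ⟨y, hy, rfl⟩ := hΘ a
          obtain ⟨z, hz, rfl⟩ := hΘ b
          have : Θ (y * z * y⁻¹ * z⁻¹) ∈ T :=
            ⟨_, ⟨Y.mul_mem (Y.mul_mem (Y.mul_mem hy hz) (Y.inv_mem hy)) (Y.inv_mem hz),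
              hcomm y z (hYP hz)⟩, rfl⟩
          rw [h, Subgroup.mem_bot] at this
          apply hab
          simp only [map_mul, map_inv] at this
          have h3 := mul_inv_eq_one.1 this
          exact mul_inv_eq_iff_eq_mul.1 h3
        · exact h
      have hxT : Θ x ∈ T := by rw [hT]; trivial
      obtain ⟨y, hy, hyx⟩ := hxT
      have hxY : x ∈ Y := ⟨h1, h2⟩
      have h4 := hk (x * y⁻¹) (Y.mul_mem hxY (Y.inv_mem hy.1)) (by
        rw [map_mul, map_inv, hyx, mul_inv_cancel])
      have := N.mul_mem h4 hy.2
      simpa using this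
  have hDP : ∀ x ∈ DD s, x ∈ P n → x ∈ N := by
    rintro x ⟨m, hm⟩ hx
    have := claim (m + n) m (by omega) (by omega) x (Dk_mono (by omega) hm)
    rw [Nat.add_sub_cancel_left] at this
    exact this hx
  have hxc : x0 ∈ (DD s).topologicalClosure := by rw [hd]; trivial
  rw [← SetLike.mem_coe, Subgroup.topologicalClosure_coe, mem_closure_iff_nhds] at hxc
  have hx0P : x0 ∈ P n := fun i _ => mem_psi_ker.1 hx0 i
  obtain ⟨d, ⟨hd1, hd1'⟩, hd2⟩ := hxc (((fun g => x0⁻¹ * g) ⁻¹' N) ∩ P n)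
    (((hNo.preimage (continuous_const_mul _)).inter (hPo n)).mem_nhds
      ⟨by simp [N.one_mem], hx0P⟩)
  have h5 := N.mul_mem (hDP d hd2 hd1') (N.inv_mem hd1)
  simpa using h5

end fixf

end Step

set_option linter.unusedSectionVars false
set_option linter.style.haveILetI false

section MaxN
variable {G : Type*} [Group G] [TopologicalSpace G] [IsTopologicalGroup G] [CompactSpace G]
  [T2Space G]

/-- open maximal normal subgroup -/
def MaxN (N : Subgroup G) : Prop :=
  N.Normal ∧ IsOpen (N : Set G) ∧ N ≠ ⊤ ∧ ∀ M : Subgroup G, M.Normal → N ≤ M → M = N ∨ M = ⊤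

theorem exists_MaxN [Nontrivial G] {s : G →* G} (he : IsExp s) : ∃ N : Subgroup G, MaxN N := by
  obtain ⟨U, hUn, hU, hx⟩ := he.normal
  have hUt : U ≠ ⊤ := by
    rintro rfl
    obtain ⟨x, hx1⟩ := exists_ne (1:G)
    exact hx1 (hx x fun n => trivial)
  let S : Set ℕ := {i | ∃ N : Subgroup G, N.Normal ∧ IsOpen (N : Set G) ∧ N ≠ ⊤ ∧ N.index = i}
  have hS : S.Nonempty := ⟨_, U, hUn, hU, hUt, rfl⟩
  obtain ⟨N, h1, h2, h3, h4⟩ := Nat.sInf_mem hS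
  refine ⟨N, h1, h2, h3, fun M hM hNM => ?_⟩
  by_cases hMt : M = ⊤
  · exact Or.inr hMt
  left
  have hMo : IsOpen (M : Set G) := Subgroup.isOpen_mono hNM h2
  have h5 : N.index ≤ M.index := by rw [h4]; exact Nat.sInf_le ⟨M, hM, hMo, hMt, rfl⟩
  have h6 := Subgroup.relIndex_mul_index hNM
  haveI := open_finiteIndex _ h2
  haveI := open_finiteIndex _ hMo
  have h7 : M.index ≠ 0 := Subgroup.FiniteIndex.index_ne_zero
  have h8 : N.index ≠ 0 := Subgroup.FiniteIndex.index_ne_zero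
  have h9 : N.relIndex M = 1 := by
    have : N.relIndex M ≤ 1 := by
      by_contra hc
      push Not at hc
      have : 2 * M.index ≤ N.relIndex M * M.index := Nat.mul_le_mul_right _ hc
      omega
    have : N.relIndex M ≠ 0 := by
      intro h; rw [h] at h6; omega
    omega
  exact le_antisymm (Subgroup.relIndex_eq_one.1 h9) hNM

theorem exists_MaxN_A [Nontrivial G] {s : G →* G} (hs : Surjective s) (he : IsExp s)
    (hd : (DD s).topologicalClosure = ⊤) : ∃ N : Subgroup G, MaxN N ∧ ∃ a, s a = 1 ∧ a ∉ N := by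
  by_contra hc
  push Not at hc
  have key : ∀ n, ∀ N : Subgroup G, MaxN N → Dk s n ≤ N := by
    intro n
    induction n with
    | zero => intro N _ x hx; rw [mem_Dk] at hx; rw [show x = 1 from hx]; exact N.one_mem
    | succ n ih =>
      intro N hN x hx
      have hA := hc N hN
      obtain ⟨h1, h2, h3, h4⟩ := hN
      have hpre : ∀ y, s y ∈ N.map s → y ∈ N := by
        rintro y ⟨z, hz, hzy⟩
        have := N.mul_mem hz (hA (z⁻¹ * y) (by rw [map_mul, map_inv, hzy, inv_mul_cancel]))
        simpa using this
      have hM : MaxN (N.map s) := by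
        refine ⟨h1.map s hs, ?_, ?_, ?_⟩
        · haveI : (N.map s).FiniteIndex := by
            constructor
            haveI := open_finiteIndex _ h2
            have : (N.map s).index ∣ N.index := Subgroup.index_map_dvd N hs
            intro h0
            rw [h0] at this
            exact (Subgroup.FiniteIndex.index_ne_zero (H := N)) (by simpa using this)
          apply Subgroup.isOpen_of_isClosed_of_finiteIndex
          exact ((Subgroup.isClosed_of_isOpen N h2).isCompact.image he.cont).isClosed
        · intro ht
          apply h3
          rw [eq_top_iff]
          intro y _
          exact hpre y (by rw [ht]; trivial)
        · intro M hM hNM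
          rcases h4 (M.comap s) (hM.comap s) (fun y hy => hNM ⟨y, hy, rfl⟩) with h | h
          · left
            refine le_antisymm ?_ hNM
            intro y hy
            obtain ⟨z, rfl⟩ := hs y
            refine ⟨z, ?_, rfl⟩
            rw [← h]; exact hy
          · right
            rw [eq_top_iff]
            intro y _
            obtain ⟨z, rfl⟩ := hs y
            have : z ∈ M.comap s := by rw [h]; trivial
            exact this
      apply hpre
      apply ih _ hM
      rw [mem_Dk, ← iterate_succ_apply]; exact hx
  obtain ⟨N, hN⟩ := exists_MaxN he
  apply hN.2.2.1
  rw [eq_top_iff]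
  intro x _
  refine dense_ind hd N (Subgroup.isClosed_of_isOpen N hN.2.1) ?_ x
  rintro x ⟨n, hx⟩
  exact key n N hN hx

theorem cont_of_open_ker {Γ : FinSimpleGroup} (f : G →* Γ.carrier) (h : IsOpen {x | f x = 1}) :
    Continuous f := by
  refine continuous_of_continuousAt_one f ?_
  rw [ContinuousAt, map_one, nhds_discrete Γ.carrier, Filter.tendsto_pure]
  filter_upwards [h.mem_nhds (map_one f)] with x hx
  exact hx

theorem exists_simple [Nontrivial G] {s : G →* G} (hs : Surjective s) (he : IsExp s)
    (hd : (DD s).topologicalClosure = ⊤) : ∃ (Γ : FinSimpleGroup) (f : G →* Γ.carrier),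
      Continuous f ∧ ∀ γ, ∃ a, s a = 1 ∧ f a = γ := by
  obtain ⟨N, ⟨h1, h2, h3, h4⟩, a, ha, haN⟩ := exists_MaxN_A hs he hd
  haveI : Finite (G ⧸ N) := Subgroup.quotient_finite_of_isOpen N h2
  haveI hsimp : IsSimpleGroup (G ⧸ N) := by
    haveI : Nontrivial (G ⧸ N) := QuotientGroup.nontrivial_iff.2 h3
    refine ⟨fun H hH => ?_⟩
    rcases h4 (H.comap (QuotientGroup.mk' N)) (hH.comap _) (fun x hx => by
      rw [Subgroup.mem_comap, QuotientGroup.mk'_apply, (QuotientGroup.eq_one_iff x).2 hx]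
      exact H.one_mem) with h | h
    · left
      rw [eq_bot_iff]
      intro y hy
      obtain ⟨z, rfl⟩ := QuotientGroup.mk_surjective y
      have : z ∈ H.comap (QuotientGroup.mk' N) := hy
      rw [h] at this
      exact (QuotientGroup.eq_one_iff z).2 this
    · right
      rw [eq_top_iff]
      intro y _
      obtain ⟨z, rfl⟩ := QuotientGroup.mk_surjective y
      have : z ∈ H.comap (QuotientGroup.mk' N) := by rw [h]; trivial
      exact this
  let e : Shrink.{0} (G ⧸ N) ≃* G ⧸ N := Shrink.mulEquiv
  haveI : Finite (Shrink.{0} (G ⧸ N)) := Finite.of_equiv _ e.symm.toEquiv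
  haveI : IsSimpleGroup (Shrink.{0} (G ⧸ N)) := e.isSimpleGroup
  let Γ : FinSimpleGroup := ⟨Shrink.{0} (G ⧸ N)⟩
  let f : G →* Γ.carrier := e.symm.toMonoidHom.comp (QuotientGroup.mk' N)
  have hfs : Surjective f := e.symm.surjective.comp (QuotientGroup.mk'_surjective N)
  have hfk : ∀ x, f x = 1 ↔ x ∈ N := by
    intro x
    change e.symm (x : G ⧸ N) = 1 ↔ _
    rw [EmbeddingLike.map_eq_one_iff, QuotientGroup.eq_one_iff]
  refine ⟨Γ, f, ?_, ?_⟩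
  · refine cont_of_open_ker (Γ := Γ) f ?_
    convert h2 using 1
    ext x
    exact hfk x
  · have hT : ((Dk s 1).map f).Normal := (Dk_normal s 1).map f hfs
    rcases hT.eq_bot_or_eq_top with h | h
    · exfalso
      apply haN
      rw [← hfk]
      have : f a ∈ (Dk s 1).map f := ⟨a, ha, rfl⟩
      rw [h] at this; simpa using this
    · intro γ
      have : γ ∈ (Dk s 1).map f := by rw [h]; trivial
      obtain ⟨a, ha, rfl⟩ := this
      exact ⟨a, ha, rfl⟩

end MaxN

set_option linter.unusedSectionVars false
set_option linter.style.haveILetI false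

section Abel
variable {G : Type*} [Group G] [TopologicalSpace G] [IsTopologicalGroup G] [CompactSpace G]
  [T2Space G] (p : ℕ) [hp : Fact p.Prime]

/-- characters of exponent `p` -/
def MM (G : Type*) [Group G] [TopologicalSpace G] (p : ℕ) : Submodule (ZMod p) (G → ZMod p) where
  carrier := {f | IsLocallyConstant f ∧ ∀ x y, f (x * y) = f x + f y}
  zero_mem' := ⟨IsLocallyConstant.const 0, fun x y => by simp⟩
  add_mem' := by
    rintro f g ⟨h1, h2⟩ ⟨h3, h4⟩
    refine ⟨h1.add h3, fun x y => ?_⟩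
    simp only [Pi.add_apply, h2, h4]; ring
  smul_mem' := by
    rintro c f ⟨h1, h2⟩
    refine ⟨h1.comp (fun z => c • z), fun x y => ?_⟩
    simp only [Pi.smul_apply, h2, smul_add]

variable {p}

theorem MM_mul (f : MM G p) (x y : G) : f.1 (x * y) = f.1 x + f.1 y := f.2.2 x y
theorem MM_one (f : MM G p) : f.1 1 = 0 := by
  have := MM_mul f 1 1
  simpa using this
theorem MM_inv (f : MM G p) (x : G) : f.1 x⁻¹ = - f.1 x := by
  have := MM_mul f x⁻¹ x
  rw [inv_mul_cancel, MM_one] at this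
  exact eq_neg_of_add_eq_zero_left this.symm
theorem MM_pow (f : MM G p) (x : G) (n : ℕ) : f.1 (x ^ n) = n * f.1 x := by
  induction n with
  | zero => simp [MM_one]
  | succ n ih => rw [pow_succ, MM_mul, ih]; push_cast; ring

/-- hom attached to character -/
def fe (f : MM G p) : G →* Multiplicative (ZMod p) where
  toFun x := Multiplicative.ofAdd (f.1 x)
  map_one' := by rw [MM_one]; rfl
  map_mul' x y := by rw [MM_mul]; rfl

theorem mem_kerfe {s : G →* G} {f : MM G p} {x : G} :
    x ∈ (psi s (fe f)).ker ↔ ∀ n, f.1 (s^[n] x) = 0 := by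
  rw [mem_psi_ker]; rfl

/-- composition with `s` -/
def TT {s : G →* G} (hs : Continuous s) : Module.End (ZMod p) (MM G p) where
  toFun f := ⟨fun x => f.1 (s x), f.2.1.comp_continuous hs, fun x y => by
    beta_reduce; rw [map_mul, MM_mul]⟩
  map_add' _ _ := rfl
  map_smul' _ _ := rfl

theorem TT_pow {s : G →* G} (hs : Continuous s) (n : ℕ) (f : MM G p) (x : G) :
    (((TT (p := p) hs) ^ n) f).1 x = f.1 (s^[n] x) := by
  induction n generalizing f with
  | zero => rfl
  | succ n ih => rw [pow_succ, Module.End.mul_apply, ih, iterate_succ_apply']; rfl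

section
variable {s : G →* G} (hs : Surjective s) (hc : Continuous s)

include hs in
theorem TT_inj (f : MM G p) (h : TT hc f = 0) : f = 0 := by
  ext x
  obtain ⟨y, rfl⟩ := hs x
  have := congrFun (congrArg Subtype.val h) y
  exact this

include hs in
theorem TT_of_ker (g : MM G p) (h : ∀ a, s a = 1 → g.1 a = 0) : ∃ g', TT hc g' = g := by
  have key : ∀ x y, s x = s y → g.1 x = g.1 y := by
    intro x y hxy
    have := h (x * y⁻¹) (by rw [map_mul, map_inv, hxy, mul_inv_cancel])
    rw [MM_mul, MM_inv] at this
    linear_combination this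
  have hs2 := hs
  choose r hr using hs
  have hq : Topology.IsQuotientMap s := hc.isClosedMap.isQuotientMap hc hs2
  have h1 : (fun x => g.1 (r x)) ∘ s = g.1 := by
    funext x; exact key _ _ (hr (s x))
  refine ⟨⟨fun x => g.1 (r x), ?_, ?_⟩, ?_⟩
  · intro U
    rw [← hq.isOpen_preimage, ← preimage_comp, h1]
    exact g.2.1 U
  · intro x y
    beta_reduce
    rw [← MM_mul]
    apply key
    simp [hr]
  · exact Subtype.ext h1

open Polynomial in
theorem aeval_CX (c : ZMod p) (Q : (ZMod p)[X]) (f : MM G p) :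
    aeval (TT (p := p) hc) (C c + X * Q) f = c • f + TT hc (aeval (TT hc) Q f) := by
  simp [Module.End.mul_apply]

open Polynomial in
theorem aeval_kill (f : MM G p) (Q : (ZMod p)[X]) (x : G) (h : ∀ n, f.1 (s^[n] x) = 0) :
    ∀ n, (aeval (TT (p := p) hc) Q f).1 (s^[n] x) = 0 := by
  induction Q using Polynomial.induction_on' with
  | add P Q hP hQ =>
    intro n
    rw [map_add, LinearMap.add_apply]
    have : ∀ a b : MM G p, (a + b).1 (s^[n] x) = a.1 (s^[n] x) + b.1 (s^[n] x) := fun _ _ => rfl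
    rw [this, hP, hQ, add_zero]
  | monomial k c =>
    intro n
    rw [aeval_monomial, Module.End.mul_apply, Module.algebraMap_end_apply]
    have : ∀ a : MM G p, (c • a).1 (s^[n] x) = c * a.1 (s^[n] x) := fun _ => rfl
    rw [this, TT_pow, ← iterate_add_apply, h, mul_zero]

include hs in
theorem adjust (f : MM G p) {a0 : G} (ha : s a0 = 1) (hfa : f.1 a0 ≠ 0) (y : G) :
    ∃ y', s y' = s y ∧ f.1 y' = 0 ∧ ∃ k : ℕ, y' = y * a0 ^ k := by
  refine ⟨y * a0 ^ ((- f.1 y / f.1 a0).val), ?_, ?_, _, rfl⟩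
  · rw [map_mul, map_pow, ha, one_pow, mul_one]
  · rw [MM_mul, MM_pow, ZMod.natCast_zmod_val]
    field_simp; ring

open Polynomial in
include hs in
theorem lemK_aux (f : MM G p) {a0 : G} (ha : s a0 = 1) (hfa : f.1 a0 ≠ 0) (n : ℕ) (g : MM G p)
    (h : ∀ x, (∀ i, i < n → f.1 (s^[i] x) = 0) → g.1 x = 0) :
    ∃ Q : (ZMod p)[X], g = aeval (TT hc) Q f := by
  induction n generalizing g with
  | zero =>
    refine ⟨0, ?_⟩
    rw [map_zero]
    ext x
    exact h x fun i hi => by omega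
  | succ n ih =>
    let c := g.1 a0 / f.1 a0
    have hk : ∀ a, s a = 1 → (g - c • f).1 a = 0 := by
      intro a haa
      obtain ⟨y', h1, h2, k, rfl⟩ := adjust hs f ha hfa a
      have h3 := h (a * a0 ^ k) (fun i hi => by
        cases i with
        | zero => exact h2
        | succ i => rw [iterate_succ_apply, h1, haa, iterate_map_one, MM_one])
      change g.1 a - c * f.1 a = 0
      rw [MM_mul, MM_pow] at h2 h3
      simp only [c]
      field_simp
      linear_combination f.1 a0 * h3 - g.1 a0 * h2
    obtain ⟨g', hg'⟩ := TT_of_ker hs hc _ hk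
    obtain ⟨Q, hQ⟩ := ih g' (fun x hx => by
      obtain ⟨y, rfl⟩ := hs x
      obtain ⟨y', h1, h2, -⟩ := adjust hs f ha hfa y
      rw [← h1] at hx ⊢
      have h3 := h y' (fun i hi => by
        cases i with
        | zero => exact h2
        | succ i => exact hx i (by omega))
      have h4 : (TT hc g').1 y' = (g - c • f).1 y' := by rw [hg']
      change g'.1 (s y') = g.1 y' - c * f.1 y' at h4
      rw [h4, h3, h2]; ring)
    refine ⟨C c + X * Q, ?_⟩
    rw [aeval_CX, ← hQ, hg']
    abel

open Polynomial in
include hs in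
theorem lemK (f : MM G p) {a0 : G} (ha : s a0 = 1) (hfa : f.1 a0 ≠ 0) (g : MM G p)
    (h : ∀ x ∈ (psi s (fe f)).ker, g.1 x = 0) :
    ∃ Q : (ZMod p)[X], g = aeval (TT hc) Q f := by
  obtain ⟨n, hn⟩ := cpt_seq (fun n => {x | ∀ i, i < n → f.1 (s^[i] x) = 0})
    (fun m n hmn x hx i hi => hx i (by omega))
    (fun n => by
      have : {x | ∀ i, i < n → f.1 (s^[i] x) = 0} =
        ⋂ i, ⋂ (_ : i < n), (s^[i]) ⁻¹' (f.1 ⁻¹' {0}) := by ext; simp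
      rw [this]
      exact isClosed_iInter fun i => isClosed_iInter fun _ =>
        (f.2.1.isClosed_fiber 0).preimage (hc.iterate i))
    (g.1 ⁻¹' {0}) (g.2.1 _) (by
      intro x hx
      apply h
      rw [mem_kerfe]
      intro n
      exact hx (n+1) n (by omega))
  exact lemK_aux hs hc f ha hfa n g fun x hx => hn hx

open Polynomial in
include hs in
theorem torsfree (hd : (DD s).topologicalClosure = ⊤) (P : (ZMod p)[X]) (hP : P ≠ 0) (m : MM G p)
    (h : aeval (TT hc) P m = 0) : m = 0 := by
  induction P using Polynomial.recOnHorner with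
  | M0 => exact absurd rfl hP
  | MX P hP' ih =>
    apply ih hP'
    rw [mul_comm, map_mul, Module.End.mul_apply, aeval_X] at h
    exact TT_inj hs hc _ h
  | MC P c h0 hc0 ih =>
    let N : Module.End (ZMod p) (MM G p) := aeval (TT hc) (C (-c⁻¹) * P.divX)
    have h1 : TT hc (N m) = m := by
      have hPX : P = X * P.divX := by
        have := Polynomial.X_mul_divX_add P
        rw [h0, C_0, add_zero] at this; exact this.symm
      have : aeval (TT (p := p) hc) (C (-c⁻¹) * (P + C c)) m = 0 := by
        rw [map_mul, Module.End.mul_apply, h, map_zero]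
      have h2 : C (-c⁻¹) * (P + C c) = X * (C (-c⁻¹) * P.divX) - 1 := by
        rw [mul_add, ← C_mul]
        nth_rewrite 1 [hPX]
        have : -c⁻¹ * c = -1 := by field_simp
        rw [this]; simp only [C_neg, C_1]; ring
      rw [h2, map_sub, map_mul, aeval_X, map_one, LinearMap.sub_apply, Module.End.mul_apply,
        sub_eq_zero] at this
      exact this
    have h2 : ∀ n, ∃ m', (TT hc ^ n) m' = m := by
      have hcomm : Commute N (TT hc) := by
        have := Commute.all (C (-c⁻¹) * P.divX) (X : (ZMod p)[X])
        have := this.map (aeval (TT (p := p) (G := G) hc))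
        rwa [aeval_X] at this
      intro n
      refine ⟨(N ^ n) m, ?_⟩
      rw [← Module.End.mul_apply, ← hcomm.symm.mul_pow]
      induction n with
      | zero => rfl
      | succ n ih => rw [pow_succ, Module.End.mul_apply, Module.End.mul_apply, h1, ih]
    ext x
    refine dense_ind hd {x | m.1 x = 0} (m.2.1.isClosed_fiber 0) ?_ x
    rintro x ⟨n, hx⟩
    obtain ⟨m', hm⟩ := h2 n
    rw [mem_ofPred_eq, ← hm, TT_pow, hx, MM_one]

end
end Abel

set_option linter.unusedSectionVars false
set_option linter.style.haveILetI false

section Abel2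
variable {G : Type*} [Group G] [TopologicalSpace G] [IsTopologicalGroup G] [CompactSpace G]
  [T2Space G] {p : ℕ} [hp : Fact p.Prime]
variable {s : G →* G} (hs : Surjective s) (he : IsExp s) (hd : (DD s).topologicalClosure = ⊤)

include he in
theorem H0_relIndex (f : MM G p) (hcl : IsClosed ((psi s (fe f)).ker : Set G)) :
    (H0 s (fe f)).relIndex (psi s (fe f)).ker ≠ 0 := by
  set H := (psi s (fe f)).ker with hH
  have hst : ∀ x ∈ H, s x ∈ H := fun x hx => ker_s hx
  haveI : CompactSpace H := isCompact_iff_compactSpace.1 hcl.isCompact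
  have he' := he.res H hst
  have ho := clD_open he'
  haveI := open_finiteIndex _ ho
  have hle : (DD (resHom s H hst)).topologicalClosure ≤ (H0 s (fe f)).subgroupOf H := by
    apply Subgroup.topologicalClosure_minimal
    · intro x hx
      rw [res_mem_DD] at hx
      exact mem_H0 hx x.2
    · exact H0_closed.preimage continuous_subtype_val
  have : ((H0 s (fe f)).subgroupOf H).FiniteIndex := Subgroup.finiteIndex_of_le hle
  exact this.index_ne_zero

include hd in
theorem comm_H0 (f : MM G p) (x y : G) : x * y * x⁻¹ * y⁻¹ ∈ H0 s (fe f) := by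
  refine dense_ind hd ((fun x => x * y * x⁻¹ * y⁻¹) ⁻¹' (H0 s (fe f)))
    (H0_closed.preimage (by fun_prop)) ?_ x
  intro x hx
  refine dense_ind hd ((fun y => x * y * x⁻¹ * y⁻¹) ⁻¹' (H0 s (fe f)))
    (H0_closed.preimage (by fun_prop)) ?_ y
  intro y hy
  apply mem_H0
  · exact Subgroup.mul_mem _ (Subgroup.mul_mem _ (Subgroup.mul_mem _ hx hy) (Subgroup.inv_mem _ hx))
      (Subgroup.inv_mem _ hy)
  · rw [mem_psi_ker]
    intro n
    simp only [iterate_map_mul, iterate_map_inv, map_mul, map_inv]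
    rw [mul_comm (fe f _) (fe f _)]; group

include hd in
theorem pow_H0 (f : MM G p) (x : G) : x ^ p ∈ H0 s (fe f) := by
  refine dense_ind hd ((fun x => x ^ p) ⁻¹' (H0 s (fe f)))
    (H0_closed.preimage (by fun_prop)) ?_ x
  intro x hx
  apply mem_H0
  · exact Subgroup.pow_mem _ hx p
  · rw [mem_kerfe]
    intro n
    rw [iterate_map_pow, MM_pow]; simp

theorem dualsepF {k Q : Type*} [Field k] [AddCommGroup Q] [Module k Q] {x : Q} (hx : x ≠ 0) :
    ∃ φ : Q →+ k, φ x ≠ 0 := by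
  by_contra hcon
  push Not at hcon
  exact hx ((Module.forall_dual_apply_eq_zero_iff k x).1 fun φ => hcon φ.toAddMonoidHom)

theorem dualsep {Q : Type*} [AddCommGroup Q] (h : ∀ a : Q, p • a = 0) {x : Q} (hx : x ≠ 0) :
    ∃ φ : Q →+ ZMod p, φ x ≠ 0 := by
  letI : Module (ZMod p) Q := AddCommGroup.zmodModule h
  exact dualsepF hx

include he in
theorem sep {H : Subgroup G} [H.Normal] (hH : IsClosed (H : Set G))
    (h1 : ∀ x y, x * y * x⁻¹ * y⁻¹ ∈ H) (h2 : ∀ x, x ^ p ∈ H) {x : G} (hx : x ∉ H) :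
    ∃ g : MM G p, (∀ y ∈ H, g.1 y = 0) ∧ g.1 x ≠ 0 := by
  obtain ⟨U, hUn, hU, hUx⟩ := he.normal
  have : ∃ k, x ∉ H ⊔ Un s U k := by
    by_contra hcon
    push Not at hcon
    exact hx (closed_of_open hH he.cont hU hUx hcon)
  obtain ⟨k, hk⟩ := this
  set N := H ⊔ Un s U k with hN
  have hNo : IsOpen (N : Set G) := Subgroup.isOpen_mono le_sup_right (Un_open he.cont hU k)
  have hHN : H ≤ N := le_sup_left
  letI : CommGroup (G ⧸ N) := { (inferInstance : Group (G ⧸ N)) with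
    mul_comm := by
      intro a b
      obtain ⟨a, rfl⟩ := QuotientGroup.mk_surjective a
      obtain ⟨b, rfl⟩ := QuotientGroup.mk_surjective b
      rw [← QuotientGroup.mk_mul, ← QuotientGroup.mk_mul, QuotientGroup.eq]
      have := hHN (h1 b⁻¹ a⁻¹)
      convert this using 1
      group }
  let v : G → Additive (G ⧸ N) := fun y => Additive.ofMul (y : G ⧸ N)
  have hv : ∀ y, v y = 0 ↔ y ∈ N := fun y => QuotientGroup.eq_one_iff y
  have hvm : ∀ y z, v (y * z) = v y + v z := fun y z => rfl
  have : ∃ φ : Additive (G ⧸ N) →+ ZMod p, φ (v x) ≠ 0 := by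
    apply dualsep
    · intro a
      obtain ⟨b, hb⟩ := QuotientGroup.mk_surjective a.toMul
      have : a = v b := by simp only [v]; rw [hb]; rfl
      rw [this]
      change v (b ^ p) = 0
      exact (hv _).2 (hHN (h2 b))
    · rw [Ne, hv]; exact hk
  obtain ⟨φ, hφ⟩ := this
  refine ⟨⟨fun y => φ (v y), ?_, fun y z => by beta_reduce; rw [hvm, map_add]⟩, ?_, hφ⟩
  · rw [IsLocallyConstant.iff_eventually_eq]
    intro y
    have : {z | y⁻¹ * z ∈ N} ∈ nhds y := by
      apply IsOpen.mem_nhds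
      · exact hNo.preimage (by fun_prop : Continuous fun z => y⁻¹ * z)
      · simp [N.one_mem]
    filter_upwards [this] with z hz
    congr 1
    have := hvm y (y⁻¹ * z)
    rw [(hv _).2 hz, add_zero, mul_inv_cancel_left] at this
    exact this
  · intro y hy
    change φ (v y) = 0
    rw [(hv y).2 (hHN hy), map_zero]

open Polynomial in
include hs he hd in
theorem abel_step (f : MM G p) (hA : ∃ a, s a = 1 ∧ f.1 a ≠ 0) :
    ∃ e : MM G p, (∃ a, s a = 1 ∧ e.1 a ≠ 0) ∧ (psi s (fe e)).ker ≤ H0 s (fe e) := by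
  induction hn : (H0 s (fe f)).relIndex (psi s (fe f)).ker using Nat.strong_induction_on
    generalizing f with
  | _ n ih =>
  have hc := he.cont
  have hkcl : ∀ f : MM G p, IsClosed ((psi s (fe f)).ker : Set G) := by
    intro f
    have : ((psi s (fe f)).ker : Set G) = ⋂ n, (s^[n]) ⁻¹' (f.1 ⁻¹' {0}) := by
      ext x; simp only [SetLike.mem_coe, mem_kerfe]; simp
    rw [this]
    exact isClosed_iInter fun i => (f.2.1.isClosed_fiber 0).preimage (hc.iterate i)
  have hH0le : ∀ f : MM G p, H0 s (fe f) ≤ (psi s (fe f)).ker := fun f =>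
    Subgroup.topologicalClosure_minimal _ inf_le_right (hkcl f)
  by_cases hle : (psi s (fe f)).ker ≤ H0 s (fe f)
  · exact ⟨f, hA, hle⟩
  obtain ⟨a, ha, hfa⟩ := hA
  obtain ⟨x, hxH, hx0⟩ := SetLike.not_le_iff_exists.1 hle
  obtain ⟨g, hg, hgx⟩ := sep he (p := p) H0_closed (comm_H0 hd f) (pow_H0 hd f) hx0
  have hs0 : ∀ y ∈ H0 s (fe f), s y ∈ H0 s (fe f) := by
    intro y hy
    have : H0 s (fe f) ≤ (H0 s (fe f)).comap s := by
      apply Subgroup.topologicalClosure_minimal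
      · rintro z ⟨h1, h2⟩
        exact mem_H0 (DD_s h1) (ker_s h2)
      · exact H0_closed.preimage hc
    exact this hy
  have hs0n : ∀ n, ∀ y ∈ H0 s (fe f), s^[n] y ∈ H0 s (fe f) := by
    intro n
    induction n with
    | zero => exact fun y hy => hy
    | succ n ih => intro y hy; rw [iterate_succ_apply']; exact hs0 _ (ih y hy)
  have hfin := H0_relIndex he f (hkcl f)
  -- pigeonhole
  have hpig : ∃ m k, m < k ∧ ∀ y ∈ (psi s (fe f)).ker, g.1 (s^[m] y) = g.1 (s^[k] y) := by
    let H := (psi s (fe f)).ker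
    haveI : Finite (H ⧸ (H0 s (fe f)).subgroupOf H) := by
      apply Nat.finite_of_card_ne_zero; exact hfin
    let r : ℕ → (H ⧸ (H0 s (fe f)).subgroupOf H) → ZMod p := fun n q => g.1 (s^[n] q.out.1)
    haveI : Finite (ZMod p) := inferInstance
    obtain ⟨m, k, hmk, hr⟩ := Finite.exists_ne_map_eq_of_infinite r
    have hrep : ∀ n, ∀ y : H, g.1 (s^[n] y.1) = r n (y : H ⧸ (H0 s (fe f)).subgroupOf H) := by
      intro n y
      have h1 : ((y : H ⧸ (H0 s (fe f)).subgroupOf H)).out⁻¹ * y ∈ (H0 s (fe f)).subgroupOf H := by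
        rw [← QuotientGroup.eq]; exact Quotient.out_eq' _
      have h2 : (((y : H ⧸ (H0 s (fe f)).subgroupOf H)).out.1)⁻¹ * y.1 ∈ H0 s (fe f) := h1
      have h3 := hg _ (hs0n n _ h2)
      rw [iterate_map_mul, iterate_map_inv, MM_mul, MM_inv] at h3
      simp only [r]
      linear_combination h3
    have hall : ∀ y ∈ (psi s (fe f)).ker, g.1 (s^[m] y) = g.1 (s^[k] y) := by
      intro y hy
      have h1 := hrep m ⟨y, hy⟩
      have h2 := hrep k ⟨y, hy⟩
      rw [hr] at h1
      exact h1.trans h2.symm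
    rcases lt_or_gt_of_ne hmk with h | h
    · exact ⟨m, k, h, hall⟩
    · exact ⟨k, m, h, fun y hy => (hall y hy).symm⟩
  obtain ⟨m, k, hmk, hpig⟩ := hpig
  let P0 : (ZMod p)[X] := X ^ k - X ^ m
  have hP0 : P0 ≠ 0 := by
    intro h
    have h1 := congrArg (fun q => coeff q k) h
    simp [P0, coeff_X_pow, hmk.ne'] at h1
  obtain ⟨Q0, hQ0⟩ := lemK hs hc f ha hfa (aeval (TT hc) P0 g) (by
    intro y hy
    have : (aeval (TT hc) P0 g) = (TT hc ^ k) g - (TT hc ^ m) g := by simp [P0]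
    rw [this]
    change ((TT hc ^ k) g).1 y - ((TT hc ^ m) g).1 y = 0
    rw [TT_pow, TT_pow, hpig y hy, sub_self])
  obtain ⟨P, Q, hcop, hP, hQ⟩ : ∃ P Q : (ZMod p)[X], IsCoprime P Q ∧
      P0 = EuclideanDomain.gcd P0 Q0 * P ∧ Q0 = EuclideanDomain.gcd P0 Q0 * Q := by
    obtain ⟨P, hP⟩ := EuclideanDomain.gcd_dvd_left P0 Q0
    obtain ⟨Q, hQ⟩ := EuclideanDomain.gcd_dvd_right P0 Q0
    refine ⟨P, Q, ?_, hP, hQ⟩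
    have hgne : EuclideanDomain.gcd P0 Q0 ≠ 0 := by
      intro h; rw [h, zero_mul] at hP; exact hP0 hP
    have := EuclideanDomain.gcd_eq_gcd_ab P0 Q0
    refine ⟨EuclideanDomain.gcdA P0 Q0, EuclideanDomain.gcdB P0 Q0, ?_⟩
    apply mul_left_cancel₀ hgne
    linear_combination - EuclideanDomain.gcdA P0 Q0 * hP - EuclideanDomain.gcdB P0 Q0 * hQ - this
  have hgne : EuclideanDomain.gcd P0 Q0 ≠ 0 := by
    intro h; rw [h, zero_mul] at hP; exact hP0 hP
  have hPQ : aeval (TT hc) P g = aeval (TT hc) Q f := by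
    rw [← sub_eq_zero]
    apply torsfree hs hc hd _ hgne
    rw [map_sub, ← Module.End.mul_apply, ← Module.End.mul_apply, ← map_mul, ← map_mul, ← hP, ← hQ,
      hQ0, sub_self]
  obtain ⟨u, v, huv⟩ := hcop
  let e := aeval (TT hc) u f + aeval (TT hc) v g
  have hmulcomm : ∀ A B : (ZMod p)[X], ∀ z : MM G p,
      aeval (TT hc) A (aeval (TT hc) B z) = aeval (TT hc) B (aeval (TT hc) A z) := by
    intro A B z
    rw [← Module.End.mul_apply, ← Module.End.mul_apply, ← map_mul, ← map_mul, mul_comm]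
  have hone : ∀ z : MM G p, aeval (TT hc) u (aeval (TT hc) P z) + aeval (TT hc) v (aeval (TT hc) Q z)
      = z := by
    intro z
    rw [← Module.End.mul_apply, ← Module.End.mul_apply, ← map_mul, ← map_mul, ← LinearMap.add_apply,
      ← map_add, huv, map_one, Module.End.one_apply]
  have hf : aeval (TT hc) P e = f := by
    simp only [e]
    rw [map_add, hmulcomm P v, hPQ, hmulcomm P u, hone]
  have hge : aeval (TT hc) Q e = g := by
    simp only [e]
    rw [map_add, hmulcomm Q u, ← hPQ, hmulcomm Q v, hone]
  have hfe : (psi s (fe e)).ker ≤ (psi s (fe f)).ker := by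
    intro y hy
    rw [mem_kerfe] at *
    rw [← hf]
    exact aeval_kill hc e P y hy
  have hxe : x ∉ (psi s (fe e)).ker := by
    intro hxe
    rw [mem_kerfe] at hxe
    apply hgx
    rw [← hge]
    exact aeval_kill hc e Q x hxe 0
  have h00 : H0 s (fe f) ≤ H0 s (fe e) := by
    apply Subgroup.topologicalClosure_minimal _ _ H0_closed
    rintro z ⟨h1, h2⟩
    apply mem_H0 h1
    rw [mem_kerfe]
    intro n
    have hz0 : z ∈ H0 s (fe f) := mem_H0 h1 h2
    have e1 := aeval_kill hc f u z (mem_kerfe.1 h2) n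
    have e2 := aeval_kill hc g v z (fun n => hg _ (hs0n n _ hz0)) n
    change (aeval (TT hc) u f).1 (s^[n] z) + (aeval (TT hc) v g).1 (s^[n] z) = 0
    rw [e1, e2, add_zero]
  have hea : e.1 a ≠ 0 := by
    intro h0
    apply hfa
    rw [← hf]
    refine aeval_kill hc e P a (fun n => ?_) 0
    cases n with
    | zero => exact h0
    | succ n => rw [iterate_succ_apply, ha, iterate_map_one, MM_one]
  refine ih _ ?_ e ⟨a, ha, hea⟩ rfl
  rw [← hn]
  have h1 : (H0 s (fe f)).relIndex (psi s (fe e)).ker * (psi s (fe e)).ker.relIndex (psi s (fe f)).ker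
     = (H0 s (fe f)).relIndex (psi s (fe f)).ker :=
    Subgroup.relIndex_mul_relIndex _ _ _ (h00.trans (hH0le e)) hfe
  have h2 : (H0 s (fe e)).relIndex (psi s (fe e)).ker ∣ (H0 s (fe f)).relIndex (psi s (fe e)).ker :=
    Subgroup.relIndex_dvd_of_le_left _ h00
  have h3 : (psi s (fe e)).ker.relIndex (psi s (fe f)).ker ≠ 1 := by
    rw [Ne, Subgroup.relIndex_eq_one]
    exact fun h => hxe (h hxH)
  have h4 : (psi s (fe e)).ker.relIndex (psi s (fe f)).ker ≠ 0 := by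
    intro h; rw [h, mul_zero] at h1; exact hfin h1.symm
  have h5 : (H0 s (fe f)).relIndex (psi s (fe e)).ker ≠ 0 := by
    intro h; rw [h, zero_mul] at h1; exact hfin h1.symm
  have h6 := Nat.le_of_dvd (Nat.pos_of_ne_zero h5) h2
  rw [← h1]
  have : (H0 s (fe f)).relIndex (psi s (fe e)).ker * 2 ≤ (H0 s (fe f)).relIndex (psi s (fe e)).ker *
    (psi s (fe e)).ker.relIndex (psi s (fe f)).ker := Nat.mul_le_mul_left _ (by omega)
  omega

end Abel2

set_option linter.unusedSectionVars false
set_option linter.style.haveILetI false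

section Step
variable {G : Type*} [Group G] [TopologicalSpace G] [IsTopologicalGroup G] [CompactSpace G]
  [T2Space G]
variable {s : G →* G} (hs : Surjective s) (he : IsExp s) (hd : (DD s).topologicalClosure = ⊤)

include hs he hd in
theorem step [Nontrivial G] : ∃ (Γ : FinSimpleGroup) (f : G →* Γ.carrier), Continuous f ∧
    (∀ γ, ∃ a, s a = 1 ∧ f a = γ) ∧ (psi s f).ker ≤ H0 s f := by
  obtain ⟨Γ, f, hf, hA⟩ := exists_simple hs he hd
  by_cases hn : ∃ a b : Γ.carrier, a * b ≠ b * a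
  · exact ⟨Γ, f, hf, hA, nonab hs he hd hf hA hn⟩
  push Not at hn
  letI : CommGroup Γ.carrier := { Γ.group with mul_comm := hn }
  let p := Nat.card Γ.carrier
  haveI hp : Fact p.Prime := ⟨IsSimpleGroup.prime_card⟩
  have e0 : Γ.carrier ≃* Multiplicative (ZMod p) := by
    apply mulEquivOfPrimeCardEq (p := p) rfl
    simp
  let f0 : MM G p := ⟨fun x => (e0 (f x)).toAdd, by
    have h1 : IsLocallyConstant f := (IsLocallyConstant.iff_continuous f).2 hf
    exact h1.comp fun γ => (e0 γ).toAdd, fun x y => by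
      beta_reduce
      rw [map_mul, map_mul, toAdd_mul]⟩
  obtain ⟨e, ⟨a, ha, hea⟩, hle⟩ := abel_step hs he hd f0 (by
    obtain ⟨γ, hγ⟩ := exists_ne (1 : Γ.carrier)
    obtain ⟨a, ha, hfa⟩ := hA γ
    refine ⟨a, ha, ?_⟩
    intro h0
    apply hγ
    rw [← hfa]
    have : e0 (f a) = 1 := h0
    exact (EmbeddingLike.map_eq_one_iff).1 this)
  haveI : Finite (Multiplicative (ZMod p)) := inferInstanceAs (Finite (ZMod p))
  haveI : IsSimpleGroup (Multiplicative (ZMod p)) := by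
    refine isSimpleGroup_of_prime_card (p := p) ?_
    simp
  let Γ' : FinSimpleGroup := ⟨Multiplicative (ZMod p)⟩
  refine ⟨Γ', fe e, ?_, ?_, hle⟩
  · refine cont_of_open_ker (Γ := Γ') (fe e) ?_
    exact e.2.1 {0}
  · intro γ0
    let γ : Multiplicative (ZMod p) := γ0
    refine ⟨a ^ (γ.toAdd / e.1 a).val, by rw [map_pow, ha, one_pow], ?_⟩
    have : e.1 (a ^ (γ.toAdd / e.1 a).val) = γ.toAdd := by
      rw [MM_pow, ZMod.natCast_zmod_val]; field_simp
    change Multiplicative.ofAdd (e.1 (a ^ (γ.toAdd / e.1 a).val)) = γ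
    rw [this]; rfl

end Step

set_option linter.unusedSectionVars false
set_option linter.style.haveILetI false

instance : Nonempty FinSimpleGroup := by
  haveI : Fact (Nat.Prime 2) := ⟨Nat.prime_two⟩
  haveI : Finite (Multiplicative (ZMod 2)) := inferInstanceAs (Finite (ZMod 2))
  haveI : IsSimpleGroup (Multiplicative (ZMod 2)) := by
    refine isSimpleGroup_of_prime_card (p := 2) ?_
    simp
  exact ⟨⟨Multiplicative (ZMod 2)⟩⟩

section Chain
variable {G : Type*} [Group G] [TopologicalSpace G]

/-- full shift factor -/
def Factor (s : G →* G) (X Y : Subgroup G) (Γ : FinSimpleGroup) : Prop :=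
  Y ≤ X ∧ ∃ ψ : X →* (ℕ → Γ.carrier), Continuous ψ ∧ Surjective ψ ∧
    (∀ x y : X, (y : G) = s x → ψ y = shiftHom Γ.carrier (ψ x)) ∧
    ∀ x : X, ψ x = 1 ↔ (x : G) ∈ Y

variable [IsTopologicalGroup G] [CompactSpace G] [T2Space G]

theorem chainW {s : G →* G} (he : IsExp s) (W : Subgroup G) (hcl : IsClosed (W : Set G))
    (hst : ∀ x ∈ W, s x ∈ W) (hsu : ∀ x ∈ W, ∃ y ∈ W, s y = x)
    (hd : (W : Set G) ⊆ closure (DD s ⊓ W : Subgroup G)) :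
    ∃ (r : ℕ) (X : ℕ → Subgroup G) (Γ : ℕ → FinSimpleGroup), X 0 = W ∧ X r = ⊥ ∧
      (∀ i, i ≤ r → IsClosed (X i : Set G) ∧ ∀ x ∈ X i, s x ∈ X i) ∧
      ∀ i, i < r → Factor s (X i) (X (i+1)) (Γ i) := by
  induction hn : Nat.card (Dk s 1 ⊓ W : Subgroup G) using Nat.strong_induction_on
    generalizing W with
  | _ n ih =>
  by_cases hW : W = ⊥
  · refine ⟨0, fun _ => W, fun _ => Classical.arbitrary _, rfl, hW, ?_, ?_⟩
    · exact fun i _ => ⟨hcl, hst⟩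
    · intro i hi; omega
  haveI : Nontrivial W := (Subgroup.nontrivial_iff_ne_bot W).2 hW
  haveI : CompactSpace W := isCompact_iff_compactSpace.1 hcl.isCompact
  let t := resHom s W hst
  have het : IsExp t := he.res W hst
  have htv : ∀ x : W, (t x : G) = s x := fun x => rfl
  have hts : Surjective t := by
    intro x
    obtain ⟨y, hy, h⟩ := hsu x x.2
    exact ⟨⟨y, hy⟩, Subtype.ext h⟩
  have htd : (DD t).topologicalClosure = ⊤ := by
    rw [eq_top_iff]
    intro x _
    rw [← SetLike.mem_coe, Subgroup.topologicalClosure_coe, closure_subtype]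
    refine closure_mono ?_ (hd x.2)
    rintro y ⟨h1, h2⟩
    exact ⟨⟨y, h2⟩, (res_mem_DD s W hst ⟨y, h2⟩).2 h1, rfl⟩
  obtain ⟨Γ0, f, hf, hA, hker⟩ := step hts het htd
  let Y : Subgroup G := (psi t f).ker.map W.subtype
  have hYW : Y ≤ W := by rintro _ ⟨y, -, rfl⟩; exact y.2
  have hYcl : IsClosed (Y : Set G) := by
    have := (psi_ker_closed het hf).isCompact.image continuous_subtype_val
    exact this.isClosed
  have hYmem : ∀ x : W, (x : G) ∈ Y ↔ x ∈ (psi t f).ker := by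
    intro x
    constructor
    · rintro ⟨y, hy, h⟩
      rwa [← show y = x from Subtype.ext h]
    · intro h; exact ⟨x, h, rfl⟩
  have hlt : Nat.card (Dk s 1 ⊓ Y : Subgroup G) < n := by
    rw [← hn]
    haveI := Dk_finite he 1
    have hfin : ((Dk s 1 ⊓ W : Subgroup G) : Set G).Finite :=
      (Set.toFinite (Dk s 1 : Set G)).subset inter_subset_left
    have := Set.ncard_lt_ncard (s := ((Dk s 1 ⊓ Y : Subgroup G) : Set G))
      (t := ((Dk s 1 ⊓ W : Subgroup G) : Set G)) ?_ hfin
    · exact this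
    have hsub : ((Dk s 1 ⊓ Y : Subgroup G) : Set G) ⊆ ((Dk s 1 ⊓ W : Subgroup G) : Set G) :=
      fun x hx => ⟨hx.1, hYW hx.2⟩
    rw [Set.ssubset_iff_of_subset hsub]
    obtain ⟨γ, hγ⟩ := exists_ne (1 : Γ0.carrier)
    obtain ⟨a, ha, hfa⟩ := hA γ
    refine ⟨a, ⟨?_, a.2⟩, ?_⟩
    · have : (t a : G) = 1 := by rw [ha]; rfl
      exact this
    · rintro ⟨-, h2⟩
      have := mem_psi_ker.1 ((hYmem a).1 h2) 0
      exact hγ (hfa ▸ this)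
  obtain ⟨r, X, Γ, h0, hr, h1, h2⟩ := ih _ hlt Y hYcl
    (by
      rintro _ ⟨y, hy, rfl⟩
      exact ⟨t y, ker_s hy, rfl⟩)
    (by
      rintro _ ⟨y, hy, rfl⟩
      obtain ⟨z, hz, h⟩ := ker_surj hts hA hy
      exact ⟨z, ⟨z, hz, rfl⟩, by rw [← htv, h]; rfl⟩)
    (by
      rintro _ ⟨y, hy, rfl⟩
      have h3 : y ∈ closure ((DD t ⊓ (psi t f).ker : Subgroup W) : Set W) := by
        have := hker hy
        rw [H0, ← SetLike.mem_coe, Subgroup.topologicalClosure_coe] at this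
        exact this
      have h4 := image_closure_subset_closure_image continuous_subtype_val (mem_image_of_mem _ h3)
      refine closure_mono ?_ h4
      rintro _ ⟨z, ⟨h5, h6⟩, rfl⟩
      exact ⟨(res_mem_DD s W hst z).1 h5, (hYmem z).2 h6⟩) rfl
  refine ⟨r + 1, fun i => Nat.casesOn i W X, fun i => Nat.casesOn i Γ0 Γ, rfl, hr, ?_, ?_⟩
  · intro i hi
    cases i with
    | zero => exact ⟨hcl, hst⟩
    | succ i => exact h1 i (by omega)
  · intro i hi
    cases i with
    | zero =>
      change Factor s W (X 0) Γ0
      rw [h0]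
      refine ⟨hYW, psi t f, psi_cont het hf, psi_surj hts het hf hA, ?_, ?_⟩
      · intro x y hxy
        have : y = t x := Subtype.ext hxy
        subst this
        funext n
        change f (t^[n] (t x)) = f (t^[n+1] x)
        rw [iterate_succ_apply]
      · intro x
        rw [hYmem]; rfl
    | succ i => exact h2 i (by omega)

theorem chainG {s : G →* G} (he : IsExp s) :
    ∃ (r m : ℕ) (X : ℕ → Subgroup G) (Γ : ℕ → FinSimpleGroup),
      X 0 = (DD s).topologicalClosure ∧ (∀ x ∈ X r, s^[m] x = 1) ∧
      (∀ i, i ≤ r → IsClosed (X i : Set G) ∧ ∀ x ∈ X i, s x ∈ X i) ∧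
      ∀ i, i < r → Factor s (X i) (X (i+1)) (Γ i) := by
  set G1 := (DD s).topologicalClosure with hG1
  have hG1cl : IsClosed (G1 : Set G) := Subgroup.isClosed_topologicalClosure _
  obtain ⟨V, hVn, hVo, hV1, hV2, hV3⟩ := open_key he
  have hG1s : ∀ n x, s^[n] x ∈ G1 ↔ x ∈ G1 := by
    intro n
    induction n with
    | zero => intro x; rfl
    | succ n ih => intro x; rw [iterate_succ_apply, ih, clD_preimage he]
  let I : ℕ → Subgroup G := fun k => G1.map (iterHom s k)
  have hImem : ∀ k x, x ∈ I k ↔ ∃ y ∈ G1, s^[k] y = x := fun k x => Iff.rfl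
  have hVI : ∀ k, V ≤ I k := by
    intro k x hx
    obtain ⟨y, hy⟩ := hV2 k x hx
    exact ⟨y, (hG1s k y).1 (by rw [hy]; exact hV1 hx), hy⟩
  have hIle : ∀ k, I (k+1) ≤ I k := by
    rintro k _ ⟨y, hy, rfl⟩
    refine ⟨s y, (clD_preimage he y).2 hy, ?_⟩
    change s^[k] (s y) = s^[k+1] y
    rw [iterate_succ_apply]
  haveI := open_finiteIndex V hVo
  have hrel : ∀ H : Subgroup G, V.relIndex H ≠ 0 := fun H =>
    Subgroup.FiniteIndex.index_ne_zero (H := V.subgroupOf H)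
  have hst : ∃ m, I m ≤ I (m+1) := by
    obtain ⟨m, hm⟩ : ∃ m, V.relIndex (I m) ≤ V.relIndex (I (m+1)) := by
      by_contra hcon
      push Not at hcon
      have : ∀ m, V.relIndex (I m) + m ≤ V.relIndex (I 0) := by
        intro m
        induction m with
        | zero => rfl
        | succ m ih => have := hcon m; omega
      have := this (V.relIndex (I 0) + 1)
      omega
    refine ⟨m, ?_⟩
    have h1 := Subgroup.relIndex_mul_relIndex V (I (m+1)) (I m) (hVI _) (hIle m)
    rw [← Subgroup.relIndex_eq_one]
    have h2 := hrel (I (m+1))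
    have h3 := hrel (I m)
    rcases Nat.lt_or_ge 1 ((I (m+1)).relIndex (I m)) with h | h
    · have : V.relIndex (I (m+1)) * 2 ≤ V.relIndex (I (m+1)) * (I (m+1)).relIndex (I m) :=
        Nat.mul_le_mul_left _ h
      omega
    · have : (I (m+1)).relIndex (I m) ≠ 0 := by
        intro h0; rw [h0, mul_zero] at h1; exact h3 h1.symm
      omega
  obtain ⟨m, hm⟩ := hst
  have hW1 : I m ≤ G1 := by
    rintro _ ⟨y, hy, rfl⟩
    exact (hG1s m y).2 hy
  obtain ⟨r, X, Γ, h0, hr, h1, h2⟩ := chainW he (I m)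
    ((hG1cl.isCompact.image (he.cont.iterate m)).isClosed)
    (by
      rintro _ ⟨y, hy, rfl⟩
      refine ⟨s y, (clD_preimage he y).2 hy, ?_⟩
      change s^[m] (s y) = s (s^[m] y)
      rw [← iterate_succ_apply, iterate_succ_apply'])
    (by
      intro x hx
      obtain ⟨y, hy, rfl⟩ := hm hx
      refine ⟨s^[m] y, ⟨y, hy, rfl⟩, ?_⟩
      exact (iterate_succ_apply' s m y).symm)
    (by
      rintro _ ⟨y, hy, rfl⟩
      have h3 : y ∈ closure (DD s : Set G) := hy
      have h4 := image_closure_subset_closure_image (he.cont.iterate m) (mem_image_of_mem _ h3)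
      refine closure_mono ?_ h4
      rintro _ ⟨z, hz, rfl⟩
      refine ⟨?_, z, Subgroup.le_topologicalClosure _ hz, rfl⟩
      clear h4
      obtain ⟨k, hk⟩ := hz
      refine ⟨k, ?_⟩
      have hk : s^[k] z = 1 := hk
      change s^[k] (s^[m] z) = 1
      rw [← iterate_add_apply, add_comm, iterate_add_apply, hk, iterate_map_one])
  have hXW : ∀ i, i ≤ r → X i ≤ I m := by
    intro i
    induction i with
    | zero => intro _; rw [h0]
    | succ i ih => intro hi; exact (h2 i (by omega)).1.trans (ih (by omega))
  have hcomm : ∀ x, s^[m] (s x) = s (s^[m] x) := fun x => by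
    rw [← iterate_succ_apply, iterate_succ_apply']
  refine ⟨r, m, fun i => (X i).comap (iterHom s m), Γ, ?_, ?_, ?_, ?_⟩
  · ext x
    beta_reduce
    rw [h0]
    constructor
    · intro hx; exact (hG1s m x).1 (hW1 hx)
    · intro hx; exact ⟨x, hx, rfl⟩
  · intro x hx
    beta_reduce at hx
    rw [hr] at hx
    exact hx
  · intro i hi
    refine ⟨(h1 i hi).1.preimage (he.cont.iterate m), fun x hx => ?_⟩
    change s^[m] (s x) ∈ X i
    rw [hcomm]
    exact (h1 i hi).2 _ hx
  · intro i hi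
    obtain ⟨hle, ψ, hψc, hψs, hψe, hψk⟩ := h2 i hi
    refine ⟨Subgroup.comap_mono hle, ?_⟩
    let q : ((X i).comap (iterHom s m)) →* X i :=
      ((iterHom s m).comp (Subgroup.subtype _)).codRestrict (X i) (fun x => x.2)
    have hqv : ∀ x, (q x : G) = s^[m] x := fun x => rfl
    refine ⟨ψ.comp q, ?_, ?_, ?_, ?_⟩
    · refine hψc.comp ?_
      exact Continuous.subtype_mk ((he.cont.iterate m).comp continuous_subtype_val) _
    · intro γ
      obtain ⟨x, hx⟩ := hψs γ
      obtain ⟨y, hy, hyx⟩ := hXW i (by omega) x.2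
      have hyx : s^[m] y = x := hyx
      refine ⟨⟨y, ?_⟩, ?_⟩
      · change s^[m] y ∈ X i
        rw [hyx]; exact x.2
      · rw [← hx, MonoidHom.comp_apply]
        congr 1
        exact Subtype.ext hyx
    · intro x y hxy
      apply hψe
      rw [hqv, hqv, hxy, hcomm]
    · intro x
      exact hψk (q x)

end Chain

set_option linter.unusedSectionVars false
set_option linter.style.haveILetI false

section CF
universe u v w
variable (Δ : Type) [Group Δ]

open Classical in
/-- indicator of being isomorphic to `Δ` -/
noncomputable def ind (S : Type u) [Group S] : ℕ := if Nonempty (S ≃* Δ) then 1 else 0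

/-- number of composition factors isomorphic to `Δ` -/
inductive CF : (G : Type u) → [Group G] → ℕ → Prop
  | triv (G : Type u) [Group G] [Subsingleton G] : CF G 0
  | step (G : Type u) [Group G] (N : Subgroup G) [N.Normal] [IsSimpleGroup (G ⧸ N)] (n : ℕ)
      (h : CF N n) : CF G (n + ind Δ (G ⧸ N))

variable {Δ}

theorem ind_congr {S : Type u} {T : Type v} [Group S] [Group T] (e : S ≃* T) :
    ind Δ S = ind Δ T := by
  have : Nonempty (S ≃* Δ) ↔ Nonempty (T ≃* Δ) :=
    ⟨fun ⟨f⟩ => ⟨e.symm.trans f⟩, fun ⟨f⟩ => ⟨e.trans f⟩⟩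
  unfold ind
  by_cases h : Nonempty (S ≃* Δ)
  · rw [if_pos h, if_pos (this.1 h)]
  · rw [if_neg h, if_neg (fun h' => h (this.2 h'))]

theorem ind_le (S : Type u) [Group S] : ind Δ S ≤ 1 := by
  unfold ind; split_ifs <;> simp

theorem CF.iso {G : Type u} [Group G] {n : ℕ} (h : CF Δ G n) :
    ∀ {H : Type v} [Group H] (_ : G ≃* H), CF Δ H n := by
  induction h with
  | triv G =>
    intro H _ e
    haveI : Subsingleton H := e.symm.toEquiv.subsingleton
    exact CF.triv H
  | step G N n h ih =>
    intro H _ e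
    haveI hn : (N.map e.toMonoidHom).Normal := Subgroup.Normal.map inferInstance _ e.surjective
    let e2 : G ⧸ N ≃* H ⧸ N.map e.toMonoidHom := QuotientGroup.congr N _ e rfl
    haveI : IsSimpleGroup (H ⧸ N.map e.toMonoidHom) := e2.symm.isSimpleGroup
    rw [ind_congr e2]
    exact CF.step H _ n (ih (e.subgroupMap N))

theorem CF.step' {G : Type u} [Group G] {S : Type v} [Group S] [IsSimpleGroup S] (φ : G →* S)
    (hφ : Surjective φ) {n : ℕ} (h : CF Δ φ.ker n) : CF Δ G (n + ind Δ S) := by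
  let e := QuotientGroup.quotientKerEquivOfSurjective φ hφ
  haveI : IsSimpleGroup (G ⧸ φ.ker) := e.isSimpleGroup
  rw [← ind_congr e]
  exact CF.step G _ n h

theorem CF.add {Q : Type v} [Group Q] {b : ℕ} (h : CF Δ Q b) :
    ∀ {G : Type u} [Group G] (φ : G →* Q) (_ : Surjective φ) {a : ℕ} (_ : CF Δ φ.ker a),
      CF Δ G (a + b) := by
  induction h with
  | triv Q =>
    intro G _ φ _ a ha
    have : φ.ker = ⊤ := by
      rw [eq_top_iff]; intro x _; exact Subsingleton.elim _ _
    rw [this] at ha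
    exact ha.iso Subgroup.topEquiv
  | step Q N c h ih =>
    intro G _ φ hφ a ha
    let q : G →* Q ⧸ N := (QuotientGroup.mk' N).comp φ
    have hq : ∀ x, x ∈ q.ker ↔ φ x ∈ N := fun x => QuotientGroup.eq_one_iff (φ x)
    let r : q.ker →* N := (φ.comp q.ker.subtype).codRestrict N (fun x => (hq x).1 x.2)
    have hr : Surjective r := by
      intro y
      obtain ⟨x, hx⟩ := hφ y
      exact ⟨⟨x, (hq x).2 (hx ▸ y.2)⟩, Subtype.ext hx⟩
    have hrk : ∀ x, r x = 1 ↔ φ x.1 = 1 := fun x => by rw [← Subtype.coe_inj]; rfl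
    let e : φ.ker ≃* r.ker :=
      { toFun := fun x => ⟨⟨x.1, (hq _).2 (by rw [show φ x.1 = 1 from x.2]; exact N.one_mem)⟩,
          (hrk _).2 x.2⟩
        invFun := fun x => ⟨x.1.1, (hrk _).1 x.2⟩
        left_inv := fun _ => rfl
        right_inv := fun _ => rfl
        map_mul' := fun _ _ => rfl }
    rw [← add_assoc]
    exact CF.step' q ((QuotientGroup.mk'_surjective N).comp hφ) (ih r hr (ha.iso e))

theorem CF.lt_card {G : Type u} [Group G] {n : ℕ} (h : CF Δ G n) : Finite G → n < Nat.card G := by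
  induction h with
  | triv G => intro _; exact Nat.card_pos
  | step G N n h ih =>
    intro _
    have h1 := ih inferInstance
    have h2 := Subgroup.card_mul_index N
    have h3 : 1 < N.index := Finite.one_lt_card (α := G ⧸ N)
    have h4 := ind_le (Δ := Δ) (G ⧸ N)
    have : Nat.card N * 2 ≤ Nat.card N * N.index := Nat.mul_le_mul_left _ h3
    omega

theorem exists_simple_quot (G : Type u) [Group G] [Finite G] [Nontrivial G] :
    ∃ N : Subgroup G, ∃ _ : N.Normal, IsSimpleGroup (G ⧸ N) := by
  have hfin : Finite {N : Subgroup G // N.Normal ∧ N ≠ ⊤} := inferInstance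
  haveI : Nonempty {N : Subgroup G // N.Normal ∧ N ≠ ⊤} := ⟨⟨⊥, inferInstance, bot_ne_top⟩⟩
  obtain ⟨⟨N, hN, hNt⟩, hmax⟩ := Finite.exists_max
    (fun N : {N : Subgroup G // N.Normal ∧ N ≠ ⊤} => Nat.card N.1)
  refine ⟨N, hN, ?_⟩
  haveI : Nontrivial (G ⧸ N) := QuotientGroup.nontrivial_iff.2 hNt
  refine ⟨fun H hH => ?_⟩
  have hle : N ≤ H.comap (QuotientGroup.mk' N) := fun x hx => by
    rw [Subgroup.mem_comap, QuotientGroup.mk'_apply, (QuotientGroup.eq_one_iff x).2 hx]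
    exact H.one_mem
  by_cases ht : H.comap (QuotientGroup.mk' N) = ⊤
  · right
    rw [eq_top_iff]
    intro y _
    obtain ⟨z, rfl⟩ := QuotientGroup.mk_surjective y
    have : z ∈ H.comap (QuotientGroup.mk' N) := by rw [ht]; trivial
    exact this
  · left
    have h1 := hmax ⟨H.comap (QuotientGroup.mk' N), hH.comap _, ht⟩
    have h2 : N = H.comap (QuotientGroup.mk' N) := Subgroup.eq_of_le_of_card_ge hle h1
    rw [eq_bot_iff]
    intro y hy
    obtain ⟨z, rfl⟩ := QuotientGroup.mk_surjective y
    have : z ∈ H.comap (QuotientGroup.mk' N) := hy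
    rw [← h2] at this
    exact (QuotientGroup.eq_one_iff z).2 this

theorem card_lt_of_quot {G : Type u} [Group G] [Finite G] (N : Subgroup G) [Nontrivial (G ⧸ N)] :
    Nat.card N < Nat.card G := by
  have h2 := Subgroup.card_mul_index N
  have h3 : 1 < N.index := Finite.one_lt_card (α := G ⧸ N)
  have h5 : 0 < Nat.card N := Nat.card_pos
  have : Nat.card N * 2 ≤ Nat.card N * N.index := Nat.mul_le_mul_left _ h3
  omega

variable (Δ) in
theorem CF.ex (G : Type u) [Group G] [Finite G] : ∃ n, CF Δ G n := by
  induction hn : Nat.card G using Nat.strong_induction_on generalizing G with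
  | _ n ih =>
  rcases subsingleton_or_nontrivial G with h | h
  · exact ⟨0, CF.triv G⟩
  · obtain ⟨N, hN, hS⟩ := exists_simple_quot G
    obtain ⟨c, hc⟩ := ih _ (hn ▸ card_lt_of_quot N) N rfl
    exact ⟨_, CF.step G N c hc⟩

theorem le_or_surj {G : Type u} [Group G] (N M : Subgroup G) [N.Normal] [hM : M.Normal]
    [IsSimpleGroup (G ⧸ N)] :
    M ≤ N ∨ Surjective ((QuotientGroup.mk' N).comp M.subtype) := by
  have hT : (M.map (QuotientGroup.mk' N)).Normal := hM.map _ (QuotientGroup.mk'_surjective N)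
  rcases hT.eq_bot_or_eq_top with h | h
  · left
    intro x hx
    have : (QuotientGroup.mk' N) x ∈ M.map (QuotientGroup.mk' N) := ⟨x, hx, rfl⟩
    rw [h] at this
    exact (QuotientGroup.eq_one_iff x).1 this
  · right
    intro y
    have : y ∈ M.map (QuotientGroup.mk' N) := by rw [h]; trivial
    obtain ⟨x, hx, rfl⟩ := this
    exact ⟨⟨x, hx⟩, rfl⟩

theorem not_le_of_ne {G : Type u} [Group G] (N M : Subgroup G) [N.Normal] [hM : M.Normal]
    [IsSimpleGroup (G ⧸ N)] [IsSimpleGroup (G ⧸ M)] (h : N ≠ M) : ¬ M ≤ N := by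
  intro hle
  rcases le_or_surj M N with h1 | h1
  · exact h (le_antisymm h1 hle)
  · have : N = ⊤ := by
      rw [eq_top_iff]
      intro x _
      obtain ⟨y, hy⟩ := h1 (x : G ⧸ M)
      have h2 : y.1⁻¹ * x ∈ M := QuotientGroup.eq.1 hy
      have := N.mul_mem y.2 (hle h2)
      simpa using this
    exact (QuotientGroup.nontrivial_iff.1 (inferInstance : Nontrivial (G ⧸ N))) this

theorem CF.unique {G : Type u} [Group G] [Finite G] {n m : ℕ} (hn : CF Δ G n) (hm : CF Δ G m) :
    n = m := by
  induction hc : Nat.card G using Nat.strong_induction_on generalizing G n m with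
  | _ c ih =>
  cases hn with
  | triv =>
    cases hm with
    | triv => rfl
    | step _ N m hm =>
      exact absurd (inferInstance : Nontrivial (G ⧸ N)) (not_nontrivial_iff_subsingleton.2 inferInstance)
  | step _ N a ha =>
    cases hm with
    | triv =>
      exact absurd (inferInstance : Nontrivial (G ⧸ N)) (not_nontrivial_iff_subsingleton.2 inferInstance)
    | step _ M b hb =>
      by_cases hNM : N = M
      · subst hNM
        rw [ih _ (hc ▸ card_lt_of_quot N) ha hb rfl]
      · have h1 := (le_or_surj N M).resolve_left (not_le_of_ne N M hNM)
        have h2 := (le_or_surj M N).resolve_left (not_le_of_ne M N (Ne.symm hNM))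
        obtain ⟨k, hk⟩ := CF.ex Δ ((QuotientGroup.mk' N).comp M.subtype).ker
        have k1 : ∀ x : M, x ∈ ((QuotientGroup.mk' N).comp M.subtype).ker ↔ x.1 ∈ N :=
          fun x => QuotientGroup.eq_one_iff x.1
        have k2 : ∀ x : N, x ∈ ((QuotientGroup.mk' M).comp N.subtype).ker ↔ x.1 ∈ M :=
          fun x => QuotientGroup.eq_one_iff x.1
        let e : ((QuotientGroup.mk' N).comp M.subtype).ker ≃*
            ((QuotientGroup.mk' M).comp N.subtype).ker :=
          { toFun := fun x => ⟨⟨x.1.1, (k1 _).1 x.2⟩, (k2 _).2 x.1.2⟩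
            invFun := fun x => ⟨⟨x.1.1, (k2 _).1 x.2⟩, (k1 _).2 x.1.2⟩
            left_inv := fun _ => rfl
            right_inv := fun _ => rfl
            map_mul' := fun _ _ => rfl }
        have hM := CF.step' _ h1 hk
        have hN := CF.step' _ h2 (hk.iso e)
        have e1 := ih _ (hc ▸ card_lt_of_quot N) ha hN rfl
        have e2 := ih _ (hc ▸ card_lt_of_quot M) hb hM rfl
        omega

theorem CF.pow (Γ : Type v) [Group Γ] [IsSimpleGroup Γ] (k : ℕ) :
    CF Δ (Fin k → Γ) (k * ind Δ Γ) := by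
  induction k with
  | zero => rw [zero_mul]; exact CF.triv _
  | succ k ih =>
    let φ : (Fin (k+1) → Γ) →* Γ := Pi.evalMonoidHom _ 0
    let e : (Fin k → Γ) ≃* φ.ker :=
      { toFun := fun x => ⟨Fin.cons 1 x, rfl⟩
        invFun := fun x => Fin.tail x.1
        left_inv := fun _ => rfl
        right_inv := fun x => by
          apply Subtype.ext
          have : x.1 0 = 1 := x.2
          change Fin.cons 1 (Fin.tail x.1) = x.1
          rw [← this]; exact Fin.cons_self_tail _
        map_mul' := fun x y => by
          apply Subtype.ext
          funext i
          change (Fin.cons 1 (x * y) : Fin (k+1) → Γ) i = (Fin.cons 1 x : Fin (k+1) → Γ) i *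
            (Fin.cons 1 y : Fin (k+1) → Γ) i
          refine Fin.cases ?_ (fun j => ?_) i
          · simp
          · simp }
    rw [add_mul, one_mul]
    exact CF.step' φ (fun γ => ⟨fun _ => γ, rfl⟩) (ih.iso e)

end CF

set_option linter.unusedSectionVars false
set_option linter.style.haveILetI false

section Count
universe u v
variable (Δ : Type) [Group Δ]

/-- number of composition factors -/
noncomputable def cnt (G : Type u) [Group G] [Finite G] : ℕ := (CF.ex Δ G).choose

variable {Δ}
theorem cnt_spec (G : Type u) [Group G] [Finite G] : CF Δ G (cnt Δ G) := (CF.ex Δ G).choose_spec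

theorem cnt_eq {G : Type u} [Group G] [Finite G] {n : ℕ} (h : CF Δ G n) : cnt Δ G = n :=
  (cnt_spec G).unique h

theorem cnt_iso {G : Type u} {H : Type v} [Group G] [Finite G] [Group H] [Finite H] (e : G ≃* H) :
    cnt Δ G = cnt Δ H := (cnt_eq ((cnt_spec G).iso e)).symm

theorem cnt_lt (G : Type u) [Group G] [Finite G] : cnt Δ G < Nat.card G :=
  (cnt_spec G).lt_card inferInstance

theorem cnt_add {G : Type u} {Q : Type v} [Group G] [Finite G] [Group Q] [Finite Q]
    (φ : G →* Q) (hφ : Surjective φ) : cnt Δ G = cnt Δ φ.ker + cnt Δ Q :=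
  cnt_eq ((cnt_spec Q).add φ hφ (cnt_spec φ.ker))

/-- kernel/range comparison -/
theorem cnt_range {G : Type u} {Q : Type v} [Group G] [Finite G] [Group Q] [Finite Q]
    (φ : G →* Q) [hn : φ.range.Normal] : cnt Δ G ≤ cnt Δ φ.ker + cnt Δ Q ∧
      cnt Δ φ.ker + cnt Δ Q ≤ cnt Δ G + φ.range.index := by
  have h1 := cnt_add (Δ := Δ) φ.rangeRestrict φ.rangeRestrict_surjective
  rw [MonoidHom.ker_rangeRestrict] at h1
  have h2 := cnt_add (Δ := Δ) (QuotientGroup.mk' φ.range) (QuotientGroup.mk'_surjective _)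
  have h3 : cnt Δ (QuotientGroup.mk' φ.range).ker = cnt Δ φ.range := by
    exact cnt_iso (MulEquiv.subgroupCongr (QuotientGroup.ker_mk' _))
  have h4 : cnt Δ (Q ⧸ φ.range) < φ.range.index := cnt_lt (Δ := Δ) (Q ⧸ φ.range)
  omega

variable {G : Type u} [Group G] [TopologicalSpace G] [IsTopologicalGroup G] [CompactSpace G]
  [T2Space G]

theorem shift_iter {Γ : Type*} [Group Γ] (k : ℕ) (a : ℕ → Γ) (n : ℕ) :
    ((shiftHom Γ)^[k] a) n = a (n + k) := by
  induction k generalizing a with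
  | zero => rfl
  | succ k ih => rw [iterate_succ_apply, ih]; rfl

theorem factor_count {s : G →* G} (he : IsExp s) {X Y : Subgroup G} {Γ : FinSimpleGroup}
    (hXs : ∀ x ∈ X, s x ∈ X) (hYcl : IsClosed (Y : Set G)) (hYs : ∀ x ∈ Y, s x ∈ Y)
    (hF : Factor s X Y Γ) :
    ∃ C : ℕ, ∀ k, ∀ _ : Finite (Dk s k ⊓ X : Subgroup G), ∀ _ : Finite (Dk s k ⊓ Y : Subgroup G),
      cnt Δ (Dk s k ⊓ X : Subgroup G) ≤ cnt Δ (Dk s k ⊓ Y : Subgroup G) + k * ind Δ Γ.carrier ∧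
      cnt Δ (Dk s k ⊓ Y : Subgroup G) + k * ind Δ Γ.carrier ≤
        cnt Δ (Dk s k ⊓ X : Subgroup G) + C := by
  obtain ⟨hYX, ψ, -, hψs, hψe, hψk⟩ := hF
  haveI : CompactSpace Y := isCompact_iff_compactSpace.1 hYcl.isCompact
  obtain ⟨V, hVn, hVo, -, hV, -⟩ := open_key (he.res Y hYs)
  haveI := open_finiteIndex V hVo
  have hXk : ∀ k, ∀ x ∈ X, s^[k] x ∈ X := by
    intro k
    induction k with
    | zero => exact fun x hx => hx
    | succ k ih => intro x hx; rw [iterate_succ_apply']; exact hXs _ (ih x hx)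
  have hψit : ∀ k (x : X) (hx : s^[k] x ∈ X), ψ ⟨s^[k] x, hx⟩ = (shiftHom Γ.carrier)^[k] (ψ x) := by
    intro k
    induction k with
    | zero => intro x hx; rfl
    | succ k ih =>
      intro x hx
      rw [iterate_succ_apply' (shiftHom Γ.carrier), ← ih x (hXk k _ x.2)]
      apply hψe
      exact iterate_succ_apply' s k x
  refine ⟨V.index, fun k _ _ => ?_⟩
  let φ : (Dk s k ⊓ X : Subgroup G) →* (Fin k → Γ.carrier) :=
    { toFun := fun x i => ψ ⟨x.1, x.2.2⟩ i
      map_one' := by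
        funext i
        have : ψ (1 : X) i = 1 := by rw [map_one]; rfl
        exact this
      map_mul' := fun x y => by
        funext i
        have : ψ ((⟨x.1, x.2.2⟩ : X) * ⟨y.1, y.2.2⟩) i = ψ ⟨x.1, x.2.2⟩ i * ψ ⟨y.1, y.2.2⟩ i := by
          rw [map_mul]; rfl
        exact this }
  have hφ : ∀ x i, φ x i = ψ ⟨x.1, x.2.2⟩ i := fun _ _ => rfl
  have hker : ∀ x, φ x = 1 ↔ x.1 ∈ Y := by
    intro x
    rw [← hψk ⟨x.1, x.2.2⟩]
    constructor
    · intro h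
      funext n
      by_cases hn : n < k
      · exact congrFun h ⟨n, hn⟩
      · have h1 := hψit k ⟨x.1, x.2.2⟩ (hXk k _ x.2.2)
        have h2 : (⟨s^[k] x.1, hXk k _ x.2.2⟩ : X) = 1 := Subtype.ext x.2.1
        rw [h2, map_one] at h1
        have h3 := congrFun h1 (n - k)
        rw [shift_iter, Nat.sub_add_cancel (by omega)] at h3
        exact h3.symm
    · intro h
      funext i
      rw [hφ, h]; rfl
  haveI hnorm : φ.range.Normal := by
    constructor
    rintro _ ⟨x, rfl⟩ γ
    obtain ⟨g, hg⟩ := hψs (fun n => if h : n < k then γ ⟨n, h⟩ else 1)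
    refine ⟨⟨g * x * g⁻¹, (Dk_normal s k).conj_mem _ x.2.1 _,
      X.mul_mem (X.mul_mem g.2 x.2.2) (X.inv_mem g.2)⟩, ?_⟩
    funext i
    rw [hφ]
    have : ψ (g * ⟨x.1, x.2.2⟩ * g⁻¹) i = ψ g i * ψ ⟨x.1, x.2.2⟩ i * (ψ g i)⁻¹ := by
      rw [map_mul, map_mul, map_inv]; rfl
    refine this.trans ?_
    rw [hg]
    simp [hφ]
  have hidx : φ.range.index ≤ V.index := by
    have hlift : ∀ γ : Fin k → Γ.carrier, ∃ g : X, (∀ i : Fin k, ψ g i = γ i) ∧ s^[k] g.1 ∈ Y := by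
      intro γ
      obtain ⟨g, hg⟩ := hψs (fun n => if h : n < k then γ ⟨n, h⟩ else 1)
      refine ⟨g, fun i => by rw [hg]; simp, ?_⟩
      rw [← hψk ⟨_, hXk k _ g.2⟩, hψit]
      funext n
      rw [shift_iter, hg]
      simp
    choose L hL1 hL2 using hlift
    let F : (Fin k → Γ.carrier) ⧸ φ.range → Y ⧸ V := fun q =>
      ((⟨s^[k] (L q.out).1, hL2 _⟩ : Y) : Y ⧸ V)
    have hF : Injective F := by
      intro a b hab
      have h1 := QuotientGroup.eq.1 hab
      obtain ⟨y, hy⟩ := hV k _ h1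
      have hy2 : s^[k] y.1 = (s^[k] (L a.out).1)⁻¹ * s^[k] (L b.out).1 := by
        rw [← resHom_iter s Y hYs k y, hy]; rfl
      have hz : (L a.out)⁻¹ * (L b.out) * (⟨y.1, hYX y.2⟩ : X)⁻¹ ∈ (Dk s k).subgroupOf X := by
        rw [Subgroup.mem_subgroupOf, mem_Dk]
        change s^[k] ((L a.out).1⁻¹ * (L b.out).1 * y.1⁻¹) = 1
        rw [iterate_map_mul, iterate_map_mul, iterate_map_inv, iterate_map_inv, hy2, mul_inv_cancel]
      have h3 : (a.out)⁻¹ * b.out ∈ φ.range := by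
        refine ⟨⟨((L a.out)⁻¹ * (L b.out) * (⟨y.1, hYX y.2⟩ : X)⁻¹ : X), hz, Subtype.prop _⟩, ?_⟩
        funext i
        rw [hφ]
        have h4 : ψ ((L a.out)⁻¹ * (L b.out) * (⟨y.1, hYX y.2⟩ : X)⁻¹) i =
            (ψ (L a.out) i)⁻¹ * ψ (L b.out) i * (ψ ⟨y.1, hYX y.2⟩ i)⁻¹ := by
          rw [map_mul, map_mul, map_inv, map_inv]; rfl
        refine h4.trans ?_
        rw [(hψk ⟨y.1, hYX y.2⟩).2 y.2, hL1, hL1]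
        simp
      rw [← QuotientGroup.out_eq' a, ← QuotientGroup.out_eq' b]
      exact QuotientGroup.eq.2 h3
    haveI : Finite (Y ⧸ V) := inferInstance
    exact Nat.card_le_card_of_injective F hF
  have hmain := cnt_range (Δ := Δ) φ
  rw [cnt_eq (CF.pow Γ.carrier k)] at hmain
  let e : φ.ker ≃* (Dk s k ⊓ Y : Subgroup G) :=
    { toFun := fun x => ⟨x.1.1, x.1.2.1, (hker _).1 x.2⟩
      invFun := fun x => ⟨⟨x.1, x.2.1, hYX x.2.2⟩, (hker _).2 x.2.2⟩
      left_inv := fun _ => rfl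
      right_inv := fun _ => rfl
      map_mul' := fun _ _ => rfl }
  rw [cnt_iso e] at hmain
  omega

theorem series_count {s : G →* G} (he : IsExp s) (r m : ℕ) (X : ℕ → Subgroup G)
    (Γ : ℕ → FinSimpleGroup) (h0 : DD s ≤ X 0) (hr : ∀ x ∈ X r, s^[m] x = 1)
    (h1 : ∀ i, i ≤ r → IsClosed (X i : Set G) ∧ ∀ x ∈ X i, s x ∈ X i)
    (h2 : ∀ i, i < r → Factor s (X i) (X (i+1)) (Γ i)) :
    ∃ C : ℕ, ∀ k, ∀ _ : Finite (Dk s k),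
      cnt Δ (Dk s k) ≤ k * (∑ i ∈ Finset.range r, ind Δ (Γ i).carrier) + C ∧
      k * (∑ i ∈ Finset.range r, ind Δ (Γ i).carrier) ≤ cnt Δ (Dk s k) + C := by
  have hfin : ∀ k (Y : Subgroup G), Finite (Dk s k ⊓ Y : Subgroup G) := by
    intro k Y
    haveI := Dk_finite he k
    exact Finite.Set.subset (Dk s k : Set G) inter_subset_left
  have key : ∀ j, j ≤ r → ∃ C : ℕ, ∀ k,
      cnt Δ (Dk s k ⊓ X 0 : Subgroup G) ≤ cnt Δ (Dk s k ⊓ X j : Subgroup G) +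
        k * (∑ i ∈ Finset.range j, ind Δ (Γ i).carrier) + C ∧
      cnt Δ (Dk s k ⊓ X j : Subgroup G) + k * (∑ i ∈ Finset.range j, ind Δ (Γ i).carrier) ≤
        cnt Δ (Dk s k ⊓ X 0 : Subgroup G) + C := by
    intro j
    induction j with
    | zero => intro _; exact ⟨0, fun k => by simp⟩
    | succ j ih =>
      intro hj
      obtain ⟨C, hC⟩ := ih (by omega)
      obtain ⟨C', hC'⟩ := factor_count (Δ := Δ) he (h1 j (by omega)).2 (h1 (j+1) hj).1
        (h1 (j+1) hj).2 (h2 j (by omega))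
      refine ⟨C + C', fun k => ?_⟩
      have e1 := hC k
      have e2 := hC' k (hfin _ _) (hfin _ _)
      rw [Finset.sum_range_succ, mul_add]
      omega
  obtain ⟨C, hC⟩ := key r le_rfl
  haveI := Dk_finite he m
  refine ⟨C + Nat.card (Dk s m), fun k _ => ?_⟩
  have e1 := hC k
  have e2 : cnt Δ (Dk s k ⊓ X r : Subgroup G) < Nat.card (Dk s k ⊓ X r : Subgroup G) := cnt_lt _
  have e3 : Nat.card (Dk s k ⊓ X r : Subgroup G) ≤ Nat.card (Dk s m) := by
    apply Nat.card_le_card_of_injective (Subgroup.inclusion (H := Dk s k ⊓ X r) (K := Dk s m)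
      (fun x hx => hr x hx.2))
    exact Subgroup.inclusion_injective _
  have e4 : cnt Δ (Dk s k ⊓ X 0 : Subgroup G) = cnt Δ (Dk s k) := by
    have : Dk s k ⊓ X 0 = Dk s k := inf_eq_left.2 (fun x hx => h0 ⟨k, hx⟩)
    exact cnt_iso (MulEquiv.subgroupCongr this)
  omega

open Classical in
theorem series_unique {s : G →* G} (he : IsExp s) (r m : ℕ) (X : ℕ → Subgroup G)
    (Γ : ℕ → FinSimpleGroup) (h0 : DD s ≤ X 0) (hr : ∀ x ∈ X r, s^[m] x = 1)
    (h1 : ∀ i, i ≤ r → IsClosed (X i : Set G) ∧ ∀ x ∈ X i, s x ∈ X i)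
    (h2 : ∀ i, i < r → Factor s (X i) (X (i+1)) (Γ i))
    (r' m' : ℕ) (X' : ℕ → Subgroup G)
    (Γ' : ℕ → FinSimpleGroup) (h0' : DD s ≤ X' 0) (hr' : ∀ x ∈ X' r', s^[m'] x = 1)
    (h1' : ∀ i, i ≤ r' → IsClosed (X' i : Set G) ∧ ∀ x ∈ X' i, s x ∈ X' i)
    (h2' : ∀ i, i < r' → Factor s (X' i) (X' (i+1)) (Γ' i)) :
    r' = r ∧ ∃ e : Fin r ≃ Fin r', ∀ i : Fin r, Nonempty ((Γ i).carrier ≃* (Γ' (e i)).carrier) := by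
  have hsum : ∀ (Δ : Type) [Group Δ], ∑ i ∈ Finset.range r, ind Δ (Γ i).carrier =
      ∑ i ∈ Finset.range r', ind Δ (Γ' i).carrier := by
    intro Δ _
    obtain ⟨C, hC⟩ := series_count (Δ := Δ) he r m X Γ h0 hr h1 h2
    obtain ⟨C', hC'⟩ := series_count (Δ := Δ) he r' m' X' Γ' h0' hr' h1' h2'
    generalize ∑ i ∈ Finset.range r, ind Δ (Γ i).carrier = A at *
    generalize ∑ i ∈ Finset.range r', ind Δ (Γ' i).carrier = B at *
    have e1 := hC (C + C' + 1) (Dk_finite he _)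
    have e2 := hC' (C + C' + 1) (Dk_finite he _)
    rcases lt_trichotomy A B with h | h | h
    · have : (C + C' + 1) * (A + 1) ≤ (C + C' + 1) * B := Nat.mul_le_mul_left _ h
      rw [mul_add] at this
      omega
    · exact h
    · have : (C + C' + 1) * (B + 1) ≤ (C + C' + 1) * A := Nat.mul_le_mul_left _ h
      rw [mul_add] at this
      omega
  let st : Setoid FinSimpleGroup :=
    { r := fun A B => Nonempty (A.carrier ≃* B.carrier)
      iseqv := ⟨fun _ => ⟨MulEquiv.refl _⟩, fun ⟨e⟩ => ⟨e.symm⟩, fun ⟨e⟩ ⟨f⟩ => ⟨e.trans f⟩⟩ }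
  let f : Fin r → Quotient st := fun i => ⟦Γ i⟧
  let f' : Fin r' → Quotient st := fun i => ⟦Γ' i⟧
  have hcard : ∀ q, Nonempty ({a // f a = q} ≃ {b // f' b = q}) := by
    intro q
    induction q using Quotient.inductionOn with
    | _ D =>
    rw [← Fintype.card_eq, Fintype.card_subtype, Fintype.card_subtype]
    have h := hsum D.carrier
    rw [Finset.sum_range, Finset.sum_range] at h
    rw [Finset.card_filter, Finset.card_filter]
    convert h using 2
    · simp only [ind]
      congr 1
      exact propext Quotient.eq
    · simp only [ind]
      congr 1
      exact propext Quotient.eq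
  let e : Fin r ≃ Fin r' := Equiv.ofFiberEquiv fun q => (hcard q).some
  refine ⟨?_, e, fun i => ?_⟩
  · have := Fintype.card_congr e
    simpa using this.symm
  · have : f' (e i) = f i := Equiv.ofFiberEquiv_map _ i
    exact Quotient.eq.1 this.symm

end Count

set_option linter.unusedSectionVars false
set_option linter.style.haveILetI false

section Gal
variable {F L : Type*} [Field F] [Field L] [Algebra F L]

theorem mem_fix_adjoin (S : Set L) (g : L ≃ₐ[F] L) :
    g ∈ (IntermediateField.adjoin F S).fixingSubgroup ↔ ∀ x ∈ S, g x = x := by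
  rw [IntermediateField.mem_fixingSubgroup_iff]
  constructor
  · intro h x hx
    exact h x (IntermediateField.subset_adjoin F S hx)
  · intro h x hx
    have h1 : IntermediateField.adjoin F S ≤ IntermediateField.fixedField (Subgroup.zpowers g) := by
      rw [IntermediateField.adjoin_le_iff]
      intro y hy
      rw [SetLike.mem_coe, IntermediateField.mem_fixedField_iff]
      intro f hf
      have h2 : Subgroup.zpowers g ≤ MulAction.stabilizer (L ≃ₐ[F] L) y := by
        rw [Subgroup.zpowers_le]
        exact h y hy
      exact h2 hf
    exact (IntermediateField.mem_fixedField_iff _ _).1 (h1 hx) g (Subgroup.mem_zpowers g)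

theorem exists_fin_nhds {A : Set (L ≃ₐ[F] L)} (hA : A ∈ nhds (1 : L ≃ₐ[F] L)) :
    ∃ S : Finset L, ∀ g : L ≃ₐ[F] L, (∀ x ∈ S, g x = x) → g ∈ A := by
  rw [krullTopology_mem_nhds_one_iff] at hA
  obtain ⟨E, hE, hEA⟩ := hA
  obtain ⟨S, hS⟩ := IntermediateField.essFiniteType_iff.1 (inferInstance : Algebra.EssFiniteType F E)
  refine ⟨S, fun g hg => hEA ?_⟩
  rw [← hS]
  exact (mem_fix_adjoin _ g).2 hg

variable [IsGalois F L]

theorem nhds_fin (S : Finset L) : {g : L ≃ₐ[F] L | ∀ x ∈ S, g x = x} ∈ nhds (1 : L ≃ₐ[F] L) := by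
  have : FiniteDimensional F (IntermediateField.adjoin F (S : Set L)) :=
    IntermediateField.finiteDimensional_adjoin fun x _ => Algebra.IsIntegral.isIntegral x
  have h := (IntermediateField.fixingSubgroup_isOpen
    (IntermediateField.adjoin F (S : Set L))).mem_nhds (one_mem _)
  filter_upwards [h] with g hg
  exact (mem_fix_adjoin _ g).1 hg

variable (σ : L →+* L)

theorem sig_exists (hσ : ∀ x : F, ∃ y : F, σ (algebraMap F L x) = algebraMap F L y)
    (g : L ≃ₐ[F] L) (x : L) : ∃ y, σ y = g (σ x) := by
  have hs := Normal.splits (F := F) (K := L) inferInstance x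
  have h1 : Polynomial.eval₂ (σ.comp (algebraMap F L)) (g (σ x)) (minpoly F x) = 0 := by
    have h2 : (σ.comp (algebraMap F L)) = (g : L →+* L).comp (σ.comp (algebraMap F L)) := by
      ext a
      obtain ⟨y, hy⟩ := hσ a
      simp [hy]
    rw [h2]
    have h3 := Polynomial.hom_eval₂ (minpoly F x) (algebraMap F L) ((g : L →+* L).comp σ) x
    rw [← Polynomial.aeval_def, minpoly.aeval, map_zero] at h3
    exact h3.symm
  rw [← Polynomial.eval₂_map, hs.eq_prod_roots_of_monic ((minpoly.monic
    (Algebra.IsIntegral.isIntegral x)).map _), Polynomial.eval₂_multiset_prod,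
    Multiset.prod_eq_zero_iff] at h1
  simp only [Multiset.map_map, Multiset.mem_map, Function.comp, Polynomial.eval₂_sub,
    Polynomial.eval₂_X, Polynomial.eval₂_C] at h1
  obtain ⟨r, -, hr⟩ := h1
  exact ⟨r, (sub_eq_zero.1 hr).symm⟩

variable (hσ : ∀ x : F, ∃ y : F, σ (algebraMap F L x) = algebraMap F L y)

/-- g^σ as a function -/
noncomputable def sigFun (g : L ≃ₐ[F] L) (x : L) : L := (sig_exists σ hσ g x).choose

theorem sigFun_spec (g : L ≃ₐ[F] L) (x : L) : σ (sigFun σ hσ g x) = g (σ x) :=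
  (sig_exists σ hσ g x).choose_spec

/-- g^σ -/
noncomputable def sigEquiv (g : L ≃ₐ[F] L) : L ≃ₐ[F] L where
  toFun := sigFun σ hσ g
  invFun := sigFun σ hσ g⁻¹
  left_inv x := σ.injective (by
    rw [sigFun_spec, sigFun_spec]; exact g.symm_apply_apply _)
  right_inv x := σ.injective (by
    rw [sigFun_spec, sigFun_spec]; exact g.apply_symm_apply _)
  map_mul' x y := σ.injective (by
    rw [map_mul, sigFun_spec, sigFun_spec, sigFun_spec, map_mul, map_mul])
  map_add' x y := σ.injective (by
    rw [map_add, sigFun_spec, sigFun_spec, sigFun_spec, map_add, map_add])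
  commutes' a := σ.injective (by
    rw [sigFun_spec]
    obtain ⟨y, hy⟩ := hσ a
    rw [hy, g.commutes])

theorem sigEquiv_spec (g : L ≃ₐ[F] L) (x : L) : σ (sigEquiv σ hσ g x) = g (σ x) :=
  sigFun_spec σ hσ g x

/-- g ↦ g^σ -/
noncomputable def sig : (L ≃ₐ[F] L) →* (L ≃ₐ[F] L) where
  toFun := sigEquiv σ hσ
  map_one' := AlgEquiv.ext fun x => σ.injective (by rw [sigEquiv_spec]; rfl)
  map_mul' g h := AlgEquiv.ext fun x => σ.injective (by
    rw [sigEquiv_spec, AlgEquiv.mul_apply, AlgEquiv.mul_apply, sigEquiv_spec, sigEquiv_spec])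

theorem sig_spec (g : L ≃ₐ[F] L) (x : L) : σ (sig σ hσ g x) = g (σ x) :=
  sigFun_spec σ hσ g x

theorem sig_unique {g h : L ≃ₐ[F] L} (H : ∀ x, σ (h x) = g (σ x)) : h = sig σ hσ g :=
  AlgEquiv.ext fun x => σ.injective (by rw [H, sig_spec])

theorem sig_iter (n : ℕ) (g : L ≃ₐ[F] L) (x : L) :
    σ^[n] ((sig σ hσ)^[n] g x) = g (σ^[n] x) := by
  induction n generalizing g x with
  | zero => rfl
  | succ n ih =>
    rw [iterate_succ_apply, iterate_succ_apply', sig_spec, ih, ← iterate_succ_apply]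

theorem sig_fix (n : ℕ) (S : Set L) (g : L ≃ₐ[F] L) :
    (∀ y ∈ σ^[n] '' S, g y = y) ↔ ∀ x ∈ S, (sig σ hσ)^[n] g x = x := by
  rw [forall_mem_image]
  refine forall₂_congr fun x _ => ?_
  rw [← sig_iter σ hσ]
  exact (σ.injective.iterate n).eq_iff

theorem sig_cont : Continuous (sig σ hσ) := by
  classical
  apply continuous_of_continuousAt_one
  intro A hA
  rw [map_one] at hA
  obtain ⟨S, hS⟩ := exists_fin_nhds hA
  rw [Filter.mem_map]
  filter_upwards [nhds_fin (F := F) (S.image σ)] with g hg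
  apply hS
  intro x hx
  apply σ.injective
  rw [sig_spec]
  exact hg _ (Finset.mem_image_of_mem _ hx)

theorem sig_exp (hfg : ∃ A : Finset L,
      IntermediateField.adjoin F (⋃ n : ℕ, (⇑σ)^[n] '' (A : Set L)) = ⊤) : IsExp (sig σ hσ) := by
  refine ⟨sig_cont σ hσ, ?_⟩
  obtain ⟨A, hA⟩ := hfg
  have : FiniteDimensional F (IntermediateField.adjoin F (A : Set L)) :=
    IntermediateField.finiteDimensional_adjoin fun x _ => Algebra.IsIntegral.isIntegral x
  refine ⟨(IntermediateField.adjoin F (A : Set L)).fixingSubgroup,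
    IntermediateField.fixingSubgroup_isOpen _, fun g hg => ?_⟩
  have h1 : g ∈ (IntermediateField.adjoin F (⋃ n : ℕ, (⇑σ)^[n] '' (A : Set L))).fixingSubgroup := by
    rw [mem_fix_adjoin]
    intro y hy
    obtain ⟨n, hn⟩ := mem_iUnion.1 hy
    exact (sig_fix σ hσ n A g).2 ((mem_fix_adjoin _ _).1 (hg n)) y hn
  rw [hA] at h1
  exact AlgEquiv.ext fun x => (IntermediateField.mem_fixingSubgroup_iff _ _).1 h1 x trivial

end Gal

set_option linter.unusedSectionVars false
set_option linter.style.haveILetI false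

section Ben
variable {F L : Type*} [Field F] [Field L] [Algebra F L] [IsGalois F L]

theorem fix_fixed (H : Subgroup (L ≃ₐ[F] L)) (hH : IsClosed (H : Set (L ≃ₐ[F] L))) :
    (IntermediateField.fixedField H).fixingSubgroup = H :=
  InfiniteGalois.fixingSubgroup_fixedField ⟨H, hH⟩

theorem le_of_fix {M N : IntermediateField F L} (h : N.fixingSubgroup ≤ M.fixingSubgroup) :
    M ≤ N := by
  rw [← InfiniteGalois.fixedField_fixingSubgroup N, IntermediateField.le_iff_le]
  exact h

theorem eq_of_fix {M N : IntermediateField F L} (h : N.fixingSubgroup = M.fixingSubgroup) :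
    M = N := le_antisymm (le_of_fix h.le) (le_of_fix h.ge)

theorem index_of_surj {G H : Type*} [Group G] [Group H] (φ : G →* H) (hφ : Surjective φ)
    (X : Subgroup G) (hX : ∀ g, g ∈ X ↔ φ g = 1) : X.index = Nat.card H := by
  have : X = φ.ker := by ext g; rw [hX]; rfl
  rw [this, Subgroup.index_ker, MonoidHom.range_eq_top.2 hφ, Subgroup.card_top]

theorem benign_aux (σ : L →+* L) (hσ : ∀ x : F, ∃ y : F, σ (algebraMap F L x) = algebraMap F L y)
    (E : IntermediateField F L) (Γ : FinSimpleGroup) (ψ : (L ≃ₐ[F] L) →* (ℕ → Γ.carrier))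
    (hc : Continuous ψ) (hs : Surjective ψ)
    (he : ∀ g, ψ (sig σ hσ g) = shiftHom Γ.carrier (ψ g))
    (hk : ∀ g, ψ g = 1 ↔ g ∈ E.fixingSubgroup) :
    ∃ M : IntermediateField F L,
    M ≤ E ∧
    FiniteDimensional F ↥M ∧
    IsGalois F ↥M ∧
    IntermediateField.adjoin F (⋃ n : ℕ, (⇑σ)^[n] '' (M : Set L)) = E ∧
    (∀ n : ℕ,
      Module.finrank F ↥(IntermediateField.adjoin F ((⇑σ)^[n] '' (M : Set L))) =
        Module.finrank F ↥M) ∧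
    (∀ n : ℕ,
      Module.finrank F
          ↥(IntermediateField.adjoin F (⋃ k : Fin (n + 1), (⇑σ)^[(k : ℕ)] '' (M : Set L))) =
        Module.finrank F ↥M ^ (n + 1)) := by
  have hei : ∀ n g, ψ ((sig σ hσ)^[n] g) = (shiftHom Γ.carrier)^[n] (ψ g) := by
    intro n g
    induction n with
    | zero => rfl
    | succ n ih => rw [iterate_succ_apply', iterate_succ_apply', he, ih]
  let φ : ℕ → (L ≃ₐ[F] L) →* Γ.carrier := fun n => (Pi.evalMonoidHom _ n).comp ψ
  have hφ : ∀ n g, φ n g = ψ g n := fun _ _ => rfl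
  have hφs : ∀ n, Surjective (φ n) := by
    intro n γ
    obtain ⟨g, hg⟩ := hs (fun _ => γ)
    exact ⟨g, by rw [hφ, hg]⟩
  have hφc : Continuous (φ 0) := (continuous_apply 0).comp hc
  have hopen : IsOpen ((φ 0).ker : Set (L ≃ₐ[F] L)) := by
    have : ((φ 0).ker : Set (L ≃ₐ[F] L)) = φ 0 ⁻¹' {1} := rfl
    rw [this]
    exact (isOpen_discrete _).preimage hφc
  have hMf : (IntermediateField.fixedField (φ 0).ker).fixingSubgroup = (φ 0).ker :=
    fix_fixed _ (Subgroup.isClosed_of_isOpen _ hopen)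
  generalize IntermediateField.fixedField (φ 0).ker = M at hMf
  have hfix : ∀ n g, (∀ y ∈ σ^[n] '' (M : Set L), g y = y) ↔ ψ g n = 1 := by
    intro n g
    rw [sig_fix σ hσ]
    have : (∀ x ∈ (M : Set L), (sig σ hσ)^[n] g x = x) ↔ (sig σ hσ)^[n] g ∈ M.fixingSubgroup :=
      (IntermediateField.mem_fixingSubgroup_iff _ _).symm
    rw [this, hMf, MonoidHom.mem_ker, hφ, hei, shift_iter, zero_add]
  have hcM : Module.finrank F M = Nat.card Γ.carrier := by
    rw [IntermediateField.finrank_eq_fixingSubgroup_index, hMf]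
    exact index_of_surj (φ 0) (hφs 0) _ fun g => Iff.rfl
  have h12 := (InfiniteGalois.isOpen_and_normal_iff_finite_and_isGalois M).1
    ⟨by rw [hMf]; exact hopen, by rw [hMf]; infer_instance⟩
  have hun : IntermediateField.adjoin F (⋃ n : ℕ, (⇑σ)^[n] '' (M : Set L)) = E := by
    apply eq_of_fix
    ext g
    rw [← hk, mem_fix_adjoin]
    constructor
    · intro h y hy
      obtain ⟨n, hn⟩ := mem_iUnion.1 hy
      exact (hfix n g).2 (by rw [h]; rfl) y hn
    · intro h
      funext n
      exact (hfix n g).1 fun y hy => h y (mem_iUnion.2 ⟨n, hy⟩)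
  refine ⟨M, ?_, h12.1, h12.2, hun, ?_, ?_⟩
  · rw [← hun]
    intro x hx
    exact IntermediateField.subset_adjoin F _ (mem_iUnion.2 ⟨0, x, hx, rfl⟩)
  · intro n
    rw [hcM, IntermediateField.finrank_eq_fixingSubgroup_index]
    apply index_of_surj (φ n) (hφs n)
    intro g
    rw [mem_fix_adjoin, hfix]
    rfl
  · intro n
    rw [hcM, IntermediateField.finrank_eq_fixingSubgroup_index]
    let Φ : (L ≃ₐ[F] L) →* (Fin (n+1) → Γ.carrier) := MonoidHom.pi fun i => φ i
    have hΦs : Surjective Φ := by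
      intro γ
      obtain ⟨g, hg⟩ := hs (fun i => if h : i < n + 1 then γ ⟨i, h⟩ else 1)
      refine ⟨g, ?_⟩
      funext i
      change ψ g i = γ i
      rw [hg]
      exact dif_pos i.2
    rw [index_of_surj Φ hΦs]
    · rw [Nat.card_fun, Nat.card_fin]
    · intro g
      rw [mem_fix_adjoin]
      constructor
      · intro h
        funext i
        exact (hfix i g).1 fun y hy => h y (mem_iUnion.2 ⟨i, hy⟩)
      · intro h y hy
        obtain ⟨i, hi⟩ := mem_iUnion.1 hy
        exact (hfix i g).2 (congrFun h i) y hi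

end Ben

section Tr
variable {K L : Type*} [Field K] [Field L] [Algebra K L] [IsGalois K L]

theorem fixEquiv_symm_cont (F : IntermediateField K L) :
    Continuous (F.fixingSubgroupEquiv.symm) := by
  apply Continuous.subtype_mk (f := fun g => ((F.fixingSubgroupEquiv.symm g : F.fixingSubgroup) : L ≃ₐ[K] L))
  change Continuous (F.fixingSubgroup.subtype.comp F.fixingSubgroupEquiv.symm.toMonoidHom)
  apply continuous_of_continuousAt_one
  intro A hA
  rw [map_one] at hA
  obtain ⟨S, hS⟩ := exists_fin_nhds hA
  rw [Filter.mem_map]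
  filter_upwards [nhds_fin (F := F) S] with g hg
  exact hS _ hg

theorem fixEquiv_cont (F : IntermediateField K L) : Continuous (F.fixingSubgroupEquiv) := by
  have h := (fixEquiv_symm_cont F).isClosedMap
  rw [continuous_iff_isClosed]
  intro s hs
  have := h s hs
  have h2 : F.fixingSubgroupEquiv.symm '' s = F.fixingSubgroupEquiv ⁻¹' s :=
    F.fixingSubgroupEquiv.toEquiv.image_symm_eq_preimage s
  rwa [h2] at this

variable (σ : L →+* L) (hσ : ∀ x : K, ∃ y : K, σ (algebraMap K L x) = algebraMap K L y)

theorem factor_to {F E : IntermediateField K L} (hFE : F ≤ E) {Γ : FinSimpleGroup}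
    (hF : ∀ x ∈ F, σ x ∈ F)
    (h : Factor (sig σ hσ) F.fixingSubgroup E.fixingSubgroup Γ) :
    BenignExtension σ F E hFE ∧ GaloisFactorIsFullShift σ F E Γ := by
  obtain ⟨-, ψ, hc, hs, he, hk⟩ := h
  let Ψ := ψ.comp F.fixingSubgroupEquiv.symm.toMonoidHom
  have hΨ : ∀ g, Ψ g = ψ (F.fixingSubgroupEquiv.symm g) := fun _ => rfl
  have hcΨ : Continuous Ψ := hc.comp (fixEquiv_symm_cont F)
  have hsΨ : Surjective Ψ := hs.comp F.fixingSubgroupEquiv.symm.surjective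
  have heΨ : ∀ g h : L ≃ₐ[↥F] L, (∀ x : L, σ (h x) = g (σ x)) →
      Ψ h = shiftHom Γ.carrier (Ψ g) := by
    intro g h hgh
    apply he
    exact sig_unique σ hσ hgh
  have hkΨ : ∀ g : L ≃ₐ[↥F] L, Ψ g = 1 ↔ ∀ x ∈ E, g x = x := by
    intro g
    rw [hΨ, hk, IntermediateField.mem_fixingSubgroup_iff]
    rfl
  have hσF : ∀ x : F, ∃ y : F, σ (algebraMap F L x) = algebraMap F L y :=
    fun x => ⟨⟨σ x, hF x x.2⟩, rfl⟩
  refine ⟨?_, Ψ, hcΨ, hsΨ, heΨ, hkΨ⟩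
  apply benign_aux σ hσF _ Γ Ψ hcΨ hsΨ
  · intro g
    exact heΨ _ _ fun x => sig_spec σ hσF g x
  · intro g
    rw [hkΨ, IntermediateField.mem_fixingSubgroup_iff]
    rfl

theorem factor_from {F E : IntermediateField K L} (hFE : F ≤ E) {Γ : FinSimpleGroup}
    (h : GaloisFactorIsFullShift σ F E Γ) :
    Factor (sig σ hσ) F.fixingSubgroup E.fixingSubgroup Γ := by
  obtain ⟨ψ, hc, hs, he, hk⟩ := h
  refine ⟨IntermediateField.fixingSubgroup_le hFE, ψ.comp F.fixingSubgroupEquiv.toMonoidHom,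
    hc.comp (fixEquiv_cont F), hs.comp F.fixingSubgroupEquiv.surjective, ?_, ?_⟩
  · intro x y hxy
    apply he
    intro z
    have := sig_spec σ hσ x z
    rw [← hxy] at this
    exact this
  · intro x
    refine (hk _).trans ?_
    rw [IntermediateField.mem_fixingSubgroup_iff]
    rfl

theorem stable_fix {M : IntermediateField K L} (h : ∀ x ∈ M, σ x ∈ M) :
    ∀ g ∈ M.fixingSubgroup, sig σ hσ g ∈ M.fixingSubgroup := by
  intro g hg
  rw [IntermediateField.mem_fixingSubgroup_iff] at *
  intro x hx
  apply σ.injective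
  rw [sig_spec, hg _ (h x hx)]

theorem stable_fixed {X : Subgroup (L ≃ₐ[K] L)} (h : ∀ x ∈ X, sig σ hσ x ∈ X) :
    ∀ x ∈ IntermediateField.fixedField X, σ x ∈ IntermediateField.fixedField X := by
  intro x hx
  rw [IntermediateField.mem_fixedField_iff] at *
  intro f hf
  rw [← sig_spec σ hσ, hx _ (h f hf)]

end Tr

set_option linter.unusedSectionVars false
set_option linter.style.haveILetI false

section Pi0
variable {K L : Type*} [Field K] [Field L] [Algebra K L]

theorem sigma_span (σ : L →+* L) (hσ : ∀ x : K, ∃ y : K, σ (algebraMap K L x) = algebraMap K L y)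
    (S : Set L) {x : L} (hx : x ∈ Submodule.span K S) : σ x ∈ Submodule.span K (σ '' S) := by
  induction hx using Submodule.span_induction with
  | mem x h => exact Submodule.subset_span ⟨x, h, rfl⟩
  | zero => rw [map_zero]; exact zero_mem _
  | add x y _ _ h1 h2 => rw [map_add]; exact add_mem h1 h2
  | smul a x _ h =>
    obtain ⟨b, hb⟩ := hσ a
    rw [Algebra.smul_def, map_mul, hb, ← Algebra.smul_def]
    exact Submodule.smul_mem _ _ h

theorem basis_span (M : IntermediateField K L) {ι : Type*} (b : Module.Basis ι K M) :
    Submodule.span K (range fun i => (b i : L)) = Subalgebra.toSubmodule M.toSubalgebra := by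
  have h := congrArg (Submodule.map M.val.toLinearMap) b.span_eq
  rw [Submodule.map_span, ← range_comp] at h
  refine Eq.trans h ?_
  ext x
  simp

theorem sep_of_span (σ : L →+* L) (hσ : ∀ x : K, ∃ y : K, σ (algebraMap K L x) = algebraMap K L y)
    (M : IntermediateField K L) [FiniteDimensional K M]
    (hM : ∀ x ∈ M, σ x ∈ M)
    (h : ∀ x ∈ M, x ∈ Submodule.span K (σ '' (M : Set L))) : SigmaSeparable σ M := by
  intro k f hf hli
  let f' : Fin k → M := fun i => ⟨f i, hf i⟩
  have hli' : LinearIndependent K f' := LinearIndependent.of_comp M.val.toLinearMap hli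
  have hl2 : LinearIndepOn K id (range f') := hli'.linearIndepOn_id
  let b := Module.Basis.extend hl2
  haveI : Finite (hl2.extend (subset_univ _)) := Module.Finite.finite_basis b
  haveI := Fintype.ofFinite (hl2.extend (subset_univ (range f')))
  have hsp : Submodule.span K (range fun i => σ (b i)) = Subalgebra.toSubmodule M.toSubalgebra := by
    have hr : (range fun i => σ (b i)) = σ '' (range fun i => (b i : L)) := by
      rw [← range_comp]; rfl
    apply le_antisymm
    · rw [Submodule.span_le]
      rintro _ ⟨i, rfl⟩
      exact hM _ (b i).2
    · intro x hx
      have hx2 := h x hx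
      refine Submodule.span_le.2 ?_ hx2
      rintro _ ⟨y, hy, rfl⟩
      rw [hr]
      apply sigma_span σ hσ
      rw [basis_span]
      exact hy
  have hind : LinearIndependent K (fun i => σ (b i)) := by
    rw [linearIndependent_iff_card_eq_finrank_span, Set.finrank, hsp,
      ← Module.finrank_eq_card_basis b]
    rfl
  let j : Fin k → hl2.extend (subset_univ (range f')) := fun i =>
    ⟨f' i, hl2.subset_extend (subset_univ _) ⟨i, rfl⟩⟩
  have hj : Injective j := by
    intro a c hac
    exact hli'.injective (congrArg Subtype.val hac)
  have h3 := hind.comp j hj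
  convert h3 using 1
  funext i
  have : b (j i) = f' i := Module.Basis.extend_apply_self hl2 _
  simp only [Function.comp, this]
  rfl

theorem span_of_sep (σ : L →+* L) (M : IntermediateField K L) [FiniteDimensional K M]
    (hM : ∀ x ∈ M, σ x ∈ M) (hs : SigmaSeparable σ M) :
    ∀ x ∈ M, x ∈ Submodule.span K (σ '' (M : Set L)) := by
  let b := Module.finBasis K M
  have h1 : LinearIndependent K (fun i => (b i : L)) :=
    b.linearIndependent.map' M.val.toLinearMap (LinearMap.ker_eq_bot.2 M.val.injective)
  have h2 := hs _ (fun i => (b i : L)) (fun i => (b i).2) h1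
  have h3 := finrank_span_eq_card h2
  rw [Fintype.card_fin] at h3
  have hle : Submodule.span K (range (σ ∘ fun i => (b i : L))) ≤
      Subalgebra.toSubmodule M.toSubalgebra := by
    rw [Submodule.span_le]
    rintro _ ⟨i, rfl⟩
    exact hM _ (b i).2
  haveI : FiniteDimensional K (Subalgebra.toSubmodule M.toSubalgebra) :=
    inferInstanceAs (FiniteDimensional K M)
  have h4 := Submodule.eq_of_le_of_finrank_eq hle h3
  intro x hx
  have hx2 : x ∈ Subalgebra.toSubmodule M.toSubalgebra := hx
  rw [← h4] at hx2
  refine Submodule.span_mono ?_ hx2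
  rintro _ ⟨i, rfl⟩
  exact ⟨_, (b i).2, rfl⟩

variable [IsGalois K L]
variable (σ : L →+* L) (hσ : ∀ x : K, ∃ y : K, σ (algebraMap K L x) = algebraMap K L y)

theorem fix_image (M : IntermediateField K L) (g : L ≃ₐ[K] L) :
    g ∈ (IntermediateField.adjoin K (σ '' (M : Set L))).fixingSubgroup ↔
      sig σ hσ g ∈ M.fixingSubgroup := by
  rw [mem_fix_adjoin, IntermediateField.mem_fixingSubgroup_iff]
  exact sig_fix σ hσ 1 M g

theorem adjoin_span (M : IntermediateField K L) {x : L}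
    (hx : x ∈ IntermediateField.adjoin K (σ '' (M : Set L))) :
    x ∈ Submodule.span K (σ '' (M : Set L)) := by
  have h1 : x ∈ (IntermediateField.adjoin K (σ '' (M : Set L))).toSubalgebra := hx
  rw [IntermediateField.adjoin_toSubalgebra_of_isAlgebraic
    (fun x _ => Algebra.IsAlgebraic.isAlgebraic x), ← Subalgebra.mem_toSubmodule,
    Algebra.adjoin_eq_span] at h1
  have h2 : Submonoid.closure (σ '' (M : Set L)) = M.toSubalgebra.toSubmonoid.map σ := by
    have : σ '' (M : Set L) = (M.toSubalgebra.toSubmonoid.map σ : Submonoid L) := rfl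
    rw [this, Submonoid.closure_eq]
  rw [h2] at h1
  exact h1

theorem pi0_field (he : IsExp (sig σ hσ)) :
    IsPi0Field σ (IntermediateField.fixedField (DD (sig σ hσ)).topologicalClosure) := by
  have hfix := fix_fixed (DD (sig σ hσ)).topologicalClosure
    (Subgroup.isClosed_topologicalClosure _)
  have hst := stable_fixed σ hσ (X := (DD (sig σ hσ)).topologicalClosure)
    fun x hx => (clD_preimage he x).2 hx
  have hon : IsOpen ((DD (sig σ hσ)).topologicalClosure : Set (L ≃ₐ[K] L)) := clD_open he
  have hn : ((DD (sig σ hσ)).topologicalClosure).Normal := inferInstance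
  have hpre := fun x => clD_preimage he x
  generalize (DD (sig σ hσ)).topologicalClosure = N at *
  have h12 := (InfiniteGalois.isOpen_and_normal_iff_finite_and_isGalois
    (IntermediateField.fixedField N)).1 ⟨by rw [hfix]; exact hon, by rw [hfix]; exact hn⟩
  haveI := h12.1
  refine ⟨hst, h12.1, h12.2, sep_of_span σ hσ _ hst fun x hx => adjoin_span σ _ ?_⟩
  have : IntermediateField.fixedField N ≤
      IntermediateField.adjoin K (σ '' (IntermediateField.fixedField N : Set L)) := by
    apply le_of_fix
    intro g hg
    rw [fix_image σ hσ, hfix, hpre] at hg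
    rw [hfix]
    exact hg
  exact this hx

theorem pi0_le (M : IntermediateField K L) (h : IsPi0Field σ M) :
    M ≤ IntermediateField.fixedField (DD (sig σ hσ)).topologicalClosure := by
  obtain ⟨h1, h2, -, h4⟩ := h
  rw [IntermediateField.le_iff_le]
  apply Subgroup.topologicalClosure_minimal _ _ (InfiniteGalois.fixingSubgroup_isClosed M)
  have key : ∀ g, sig σ hσ g ∈ M.fixingSubgroup → g ∈ M.fixingSubgroup := by
    intro g hg
    rw [← fix_image] at hg
    refine IntermediateField.fixingSubgroup_le ?_ hg
    intro x hx
    have h5 := span_of_sep σ M h1 h4 x hx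
    have h6 : Submodule.span K (σ '' (M : Set L)) ≤ Subalgebra.toSubmodule
      (IntermediateField.adjoin K (σ '' (M : Set L))).toSubalgebra :=
      Submodule.span_le.2 (IntermediateField.subset_adjoin K _)
    exact h6 h5
  intro g hg
  obtain ⟨n, hn⟩ := mem_DD.1 hg
  have : ∀ n g, (sig σ hσ)^[n] g ∈ M.fixingSubgroup → g ∈ M.fixingSubgroup := by
    intro n
    induction n with
    | zero => exact fun g hg => hg
    | succ n ih =>
      intro g hg
      rw [iterate_succ_apply] at hg
      exact key _ (ih _ hg)
  exact this n g (by rw [hn]; exact one_mem _)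

theorem radicial_bound (hfg : ∃ A : Finset L,
      IntermediateField.adjoin K (⋃ n : ℕ, (⇑σ)^[n] '' (A : Set L)) = ⊤)
    (M : IntermediateField K L) (hM : ∀ x ∈ M, σ x ∈ M) (h : ∀ a : L, ∃ k : ℕ, (⇑σ)^[k] a ∈ M) :
    ∃ m, ∀ x ∈ M.fixingSubgroup, (sig σ hσ)^[m] x = 1 := by
  obtain ⟨A, hA⟩ := hfg
  choose k hk using h
  have hMi : ∀ n, ∀ x ∈ M, σ^[n] x ∈ M := by
    intro n
    induction n with
    | zero => exact fun x hx => hx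
    | succ n ih => intro x hx; rw [iterate_succ_apply']; exact hM _ (ih x hx)
  refine ⟨A.sup k, fun g hg => ?_⟩
  have h1 : (sig σ hσ)^[A.sup k] g ∈
      (IntermediateField.adjoin K (⋃ n : ℕ, (⇑σ)^[n] '' (A : Set L))).fixingSubgroup := by
    rw [mem_fix_adjoin]
    intro y hy
    obtain ⟨n, a, ha, rfl⟩ := mem_iUnion.1 hy
    apply (σ.injective.iterate (A.sup k))
    rw [sig_iter]
    apply (IntermediateField.mem_fixingSubgroup_iff _ _).1 hg
    have hle : k a ≤ A.sup k := Finset.le_sup ha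
    obtain ⟨d, hd⟩ := Nat.exists_eq_add_of_le hle
    rw [← iterate_add_apply, hd, show k a + d + n = (d + n) + k a by omega, iterate_add_apply]
    exact hMi _ _ (hk a)
  rw [hA] at h1
  exact AlgEquiv.ext fun x => (IntermediateField.mem_fixingSubgroup_iff _ _).1 h1 x trivial

end Pi0

theorem babbitt_decomposition
    {K L : Type*} [Field K] [Field L] [Algebra K L] [IsGalois K L]
    (σ : L →+* L)
    (hσK : ∀ x : K, ∃ y : K, σ (algebraMap K L x) = algebraMap K L y)
    (hfg : ∃ A : Finset L,
      IntermediateField.adjoin K (⋃ n : ℕ, (⇑σ)^[n] '' (A : Set L)) = ⊤) :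
    ∃ (n : ℕ) (Li : ℕ → IntermediateField K L) (Γ : ℕ → FinSimpleGroup),
      BabbittSeries σ n Li Γ ∧
      ∀ (m : ℕ) (Li' : ℕ → IntermediateField K L) (Δ : ℕ → FinSimpleGroup),
        BabbittSeries σ m Li' Δ →
        m = n ∧
        ∃ π : Equiv.Perm (Fin (n - 1)),
          ∀ i : Fin (n - 1),
            Nonempty ((Γ (i : ℕ)).carrier ≃* (Δ ((π i : Fin (n - 1)) : ℕ)).carrier) := by
  have he := sig_exp σ hσK hfg
  obtain ⟨r, m, X, Γ, h0, hr, h1, h2⟩ := chainG he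
  have hfix : ∀ i, i ≤ r → (IntermediateField.fixedField (X i)).fixingSubgroup = X i :=
    fun i hi => fix_fixed _ (h1 i hi).1
  have hst : ∀ i, i ≤ r → ∀ x ∈ IntermediateField.fixedField (X i),
      σ x ∈ IntermediateField.fixedField (X i) :=
    fun i hi => stable_fixed σ hσK (h1 i hi).2
  refine ⟨r + 1, fun i => IntermediateField.fixedField (X i), Γ, ⟨by omega, ?_, ?_, ⟨?_, ?_⟩, ?_, ?_⟩,
    ?_⟩
  · intro i hi
    exact hst i (by omega)
  · intro i hi
    apply le_of_fix
    rw [hfix _ (by omega), hfix _ (by omega)]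
    exact (h2 i (by omega)).1
  · beta_reduce
    rw [h0]
    exact pi0_field σ hσK he
  · intro M hM
    beta_reduce
    rw [h0]
    exact pi0_le σ hσK M hM
  · intro i hi
    apply factor_to σ hσK
    · exact hst i (by omega)
    · rw [hfix _ (by omega), hfix _ (by omega)]
      exact h2 i (by omega)
  · intro a
    refine ⟨m, ?_⟩
    rw [Nat.add_sub_cancel]
    rw [IntermediateField.mem_fixedField_iff]
    intro g hg
    rw [← sig_iter σ hσK, hr g hg]
    rfl
  · intro m' Li' Δ hB
    obtain ⟨hm, hs', hch, ⟨hp, -⟩, hbe, hrad⟩ := hB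
    obtain ⟨M, hM⟩ := radicial_bound σ hσK hfg _ (hs' (m' - 1) (by omega)) hrad
    have hle : (DD (sig σ hσK)).topologicalClosure ≤ (Li' 0).fixingSubgroup := by
      have := pi0_le σ hσK _ hp
      rwa [IntermediateField.le_iff_le] at this
    obtain ⟨e1, e, he'⟩ := series_unique he r m X Γ
      (by rw [h0]; exact Subgroup.le_topologicalClosure _) hr h1 h2 (m' - 1) M
      (fun i => (Li' i).fixingSubgroup) Δ ((Subgroup.le_topologicalClosure _).trans hle) hM
      (fun i hi => ⟨InfiniteGalois.fixingSubgroup_isClosed _,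
        stable_fix σ hσK (hs' i (by omega))⟩)
      (fun i hi => factor_from σ hσK (hch i (by omega)) (hbe i (by omega)).2)
    obtain rfl : m' = r + 1 := by omega
    exact ⟨rfl, e, he'⟩
end

section
/- Let Γ be a finite group and G a one-sided group shift on Γ. Then there exists n ≥ 1 such that G is an n-step group shift of finite type; in particular, every one-sided group shift is a one-sided subshift of finite type (it is defined inside Γ^ℕ by the exclusion of a finite set of forbidden blocks). -/
open Function Set

/-- The one-sided shift map on sequences. -/
def oneShift {A : Type*} (a : ℕ → A) : ℕ → A := fun n => a (n + 1)

/-- Let `Γ` be a finite group and `G` a one-sided group shift on `Γ`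
(a closed shift-stable subgroup of `Γ^ℕ`). Then there exists `n ≥ 1` such that `G` is an
`n`-step group shift of finite type: for some subgroup `H ≤ Γ^{n+1}`, `G` consists of
exactly those sequences all of whose blocks of length `n+1` lie in `H`. In particular,
`G` is a one-sided subshift of finite type: it is cut out in `Γ^ℕ` by the exclusion of a
finite set `F` of forbidden blocks. -/
theorem group_shift_is_finite_type
    {Γ : Type*} [Group Γ] [Finite Γ] [TopologicalSpace Γ] [DiscreteTopology Γ]
    (G : Subgroup (ℕ → Γ)) (hclosed : IsClosed (G : Set (ℕ → Γ)))
    (hstable : ∀ g ∈ G, oneShift g ∈ G) :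
    ∃ n : ℕ, 1 ≤ n ∧
      (∃ H : Subgroup (Fin (n + 1) → Γ),
        ∀ g : ℕ → Γ, g ∈ G ↔ ∀ i : ℕ, (fun k : Fin (n + 1) => g (i + (k : ℕ))) ∈ H) ∧
      (∃ F : Set (Fin (n + 1) → Γ), F.Finite ∧
        ∀ g : ℕ → Γ, g ∈ G ↔ ∀ i : ℕ, (fun k : Fin (n + 1) => g (i + (k : ℕ))) ∉ F) := by
  let F : ℕ → Set Γ := fun n => {c | ∃ g ∈ G, (∀ i < n, g i = 1) ∧ g n = c}
  have hF : ∀ n, F (n + 1) ⊆ F n := by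
    rintro n c ⟨g, hg, h1, h2⟩
    exact ⟨oneShift g, hstable g hg, fun i hi => h1 (i + 1) (by omega), h2⟩
  have hanti : Antitone F := antitone_nat_of_succ_le hF
  obtain ⟨N, hN⟩ := WellFoundedGT.monotone_chain_condition
    (α := (Set Γ)ᵒᵈ) ⟨fun n => OrderDual.toDual (F n), fun a b h => hanti h⟩
  have hN' : ∀ m, N ≤ m → F m = F N := fun m hm => (hN m hm).symm
  have key : ∀ x : ℕ → Γ, (∀ i, ∃ g ∈ G, ∀ k < N + 2, g k = x (i + k)) → x ∈ G := by
    intro x hx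
    have hall : ∀ d i, ∃ g ∈ G, ∀ k < N + 2 + d, g k = x (i + k) := by
      intro d
      induction d with
      | zero => exact hx
      | succ d ih =>
        intro i
        obtain ⟨g, hg, hgx⟩ := ih i
        obtain ⟨h, hh, hhx⟩ := ih (i + 1)
        have hmem : ((oneShift g)⁻¹ * h) (N + 1 + d) ∈ F (N + 1 + d) := by
          refine ⟨_, G.mul_mem (G.inv_mem (hstable g hg)) hh, fun j hj => ?_, rfl⟩
          have e1 := hgx (j + 1) (by omega)
          have e2 := hhx j (by omega)
          have e3 : i + 1 + j = i + (j + 1) := by omega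
          rw [e3] at e2
          simp [oneShift, e1, e2]
        rw [hN' _ (by omega), ← hN' (N + 2 + d) (by omega)] at hmem
        obtain ⟨k, hk, hk1, hk2⟩ := hmem
        refine ⟨g * k, G.mul_mem hg hk, fun j hj => ?_⟩
        by_cases hj' : j < N + 2 + d
        · simp [hk1 j hj', hgx j hj']
        · have hj2 : j = N + 2 + d := by omega
          subst hj2
          have e2 := hhx (N + 1 + d) (by omega)
          have e3 : i + 1 + (N + 1 + d) = i + (N + 2 + d) := by omega
          have e4 : N + 1 + d + 1 = N + 2 + d := by omega
          rw [e3] at e2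
          simp only [Pi.mul_apply, hk2, Pi.inv_apply, oneShift, e4, e2]
          group
    choose g hg hgx using fun d => hall d 0
    refine hclosed.mem_of_tendsto (f := g) (b := Filter.atTop) ?_
      (Filter.Eventually.of_forall hg)
    rw [tendsto_pi_nhds]
    intro k
    refine tendsto_const_nhds.congr' ?_
    filter_upwards [Filter.eventually_ge_atTop k] with d hd
    simpa using (hgx d k (by omega)).symm
  have hshift : ∀ g ∈ G, ∀ i, (fun k => g (i + k)) ∈ G := by
    intro g hg i
    induction i with
    | zero => simpa using hg
    | succ i ih =>
      have := hstable _ ih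
      convert this using 1
      funext k
      simp only [oneShift]
      congr 1
      omega
  let r : (ℕ → Γ) →* (Fin (N + 1 + 1) → Γ) :=
    { toFun := fun g k => g k, map_one' := rfl, map_mul' := fun _ _ => rfl }
  have main : ∀ g : ℕ → Γ, g ∈ G ↔
      ∀ i : ℕ, (fun k : Fin (N + 1 + 1) => g (i + (k : ℕ))) ∈ G.map r := by
    intro x
    constructor
    · intro hx i
      exact ⟨_, hshift x hx i, rfl⟩
    · intro h
      refine key x fun i => ?_
      obtain ⟨g, hg, e⟩ := h i
      exact ⟨g, hg, fun k hk => congrFun e ⟨k, hk⟩⟩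
  refine ⟨N + 1, by omega, ⟨G.map r, main⟩, ((G.map r : Subgroup _) : Set _)ᶜ,
    Set.toFinite _, fun g => ?_⟩
  rw [main g]
  simp only [Set.mem_compl_iff, SetLike.mem_coe, not_not]
end

section
/- Let G be a one-sided group shift on a finite group Γ, and for i ≥ 1 let d_i denote the cardinality of the image of G under the projection Γ^ℕ → Γ^i, (g₀,g₁,…) ↦ (g₀,…,g_{i−1}) (the number of blocks of length i occurring in elements of G). Then the sequence (log(d_i)/i)_{i≥1} converges, and its limit equals log(d) for an integer d ≥ 1; in fact d = ld(G). -/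
open Function Set Filter

/-- `blocks G m` is the set of blocks of length `m` occurring in elements of `G`,
i.e. the image of `G` under the projection `Γ^ℕ → Γ^m`, `(g₀,g₁,…) ↦ (g₀,…,g_{m-1})`. -/
def blocks {Γ : Type*} [Group Γ] (G : Subgroup (ℕ → Γ)) (m : ℕ) : Set (Fin m → Γ) :=
  (fun g : ℕ → Γ => fun k : Fin m => g k) '' (G : Set (ℕ → Γ))

/-- `kerCard G i` is the cardinality of the kernel of the truncation map
`π_i : G[i] → G[i-1]`, i.e. the number of blocks of length `i+1` occurring in `G` whose
first `i` entries are `1`. -/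
noncomputable def kerCard {Γ : Type*} [Group Γ] (G : Subgroup (ℕ → Γ)) (i : ℕ) : ℕ :=
  Nat.card {b : Fin (i + 1) → Γ |
    b ∈ blocks G (i + 1) ∧ ∀ k : Fin (i + 1), (k : ℕ) < i → b k = 1}

/-- The projection to the first `m` coordinates, as a homomorphism. -/
def projHom (Γ : Type*) [Group Γ] (m : ℕ) : (ℕ → Γ) →* (Fin m → Γ) where
  toFun g := fun k => g k
  map_one' := rfl
  map_mul' _ _ := rfl

/-- Deleting the last coordinate, as a homomorphism. -/
def initHom (Γ : Type*) [Group Γ] (m : ℕ) : (Fin (m + 1) → Γ) →* (Fin m → Γ) where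
  toFun b := fun k => b k.castSucc
  map_one' := rfl
  map_mul' _ _ := rfl

theorem card_blocks_succ {Γ : Type*} [Group Γ] [Finite Γ] (G : Subgroup (ℕ → Γ)) (m : ℕ) :
    Nat.card (blocks G (m + 1)) = kerCard G m * Nat.card (blocks G m) := by
  let B : Subgroup (Fin (m + 1) → Γ) := G.map (projHom Γ (m + 1))
  let f : B →* (Fin m → Γ) := (initHom Γ m).comp B.subtype
  have h := f.ker.card_mul_index
  rw [Subgroup.index_ker] at h
  have h1 : Nat.card f.range = Nat.card (blocks G m) := by
    have : ((f.range : Subgroup _) : Set (Fin m → Γ)) = blocks G m := by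
      ext b
      constructor
      · rintro ⟨⟨_, g, hg, rfl⟩, rfl⟩
        exact ⟨g, hg, rfl⟩
      · rintro ⟨g, hg, rfl⟩
        exact ⟨⟨_, g, hg, rfl⟩, rfl⟩
    rw [← this]
    rfl
  have h2 : Nat.card f.ker = kerCard G m := by
    refine Nat.card_congr ⟨fun x => ⟨x.1.1, x.1.2, ?_⟩, fun b => ⟨⟨b.1, b.2.1⟩, ?_⟩,
      fun _ => rfl, fun _ => rfl⟩
    · intro k hk
      exact congrFun (MonoidHom.mem_ker.1 x.2) ⟨k, hk⟩
    · rw [MonoidHom.mem_ker]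
      funext k
      exact b.2.2 k.castSucc k.2
  rw [h1, h2] at h
  exact h.symm

theorem kerCard_pos {Γ : Type*} [Group Γ] [Finite Γ] (G : Subgroup (ℕ → Γ)) (m : ℕ) :
    1 ≤ kerCard G m := by
  have : Nonempty {b : Fin (m + 1) → Γ |
      b ∈ blocks G (m + 1) ∧ ∀ k : Fin (m + 1), (k : ℕ) < m → b k = 1} :=
    ⟨⟨1, ⟨1, G.one_mem, rfl⟩, fun _ _ => rfl⟩⟩
  exact Nat.card_pos

theorem kerCard_succ_le {Γ : Type*} [Group Γ] [Finite Γ] (G : Subgroup (ℕ → Γ))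
    (hstable : ∀ g ∈ G, oneShift g ∈ G) (m : ℕ) :
    kerCard G (m + 1) ≤ kerCard G m := by
  refine Nat.card_le_card_of_injective
    (fun b => ⟨fun k => b.1 k.succ, ?_, ?_⟩) ?_
  · obtain ⟨g, hg, hb⟩ := b.2.1
    refine ⟨oneShift g, hstable g hg, ?_⟩
    rw [← hb]
    rfl
  · intro k hk
    exact b.2.2 k.succ (by simpa using hk)
  · intro b c hbc
    apply Subtype.ext
    funext k
    refine Fin.cases ?_ (fun j => ?_) k
    · rw [b.2.2 0 (by simp), c.2.2 0 (by simp)]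
    · exact congrFun (congrArg Subtype.val hbc) j

/-- Let `G` be a one-sided group shift on a finite group `Γ`, and let
`d_i` be the number of blocks of length `i` occurring in elements of `G`. Then the
sequence `log(d_i)/i` converges, and its limit is `log d` for an integer `d ≥ 1`;
in fact `d = ld(G)`, the eventual value of the sequence `i ↦ |ker π_i|`. -/
theorem entropy_eq_log_limitDegree
    {Γ : Type*} [Group Γ] [Finite Γ] [TopologicalSpace Γ] [DiscreteTopology Γ]
    (G : Subgroup (ℕ → Γ)) (hclosed : IsClosed (G : Set (ℕ → Γ)))
    (hstable : ∀ g ∈ G, oneShift g ∈ G) :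
    ∃ d : ℕ, 1 ≤ d ∧ (∀ᶠ i in atTop, kerCard G i = d) ∧
      Tendsto (fun i : ℕ => Real.log (Nat.card (blocks G i)) / (i : ℝ)) atTop
        (nhds (Real.log d)) := by
  have hanti : Antitone (kerCard G) := antitone_nat_of_succ_le (kerCard_succ_le G hstable)
  obtain ⟨N, hN⟩ := WellFoundedLT.antitone_chain_condition hanti
  have hev : ∀ᶠ i in atTop, kerCard G i = kerCard G N := by
    filter_upwards [eventually_ge_atTop N] with i hi
    exact (hN i hi).symm
  refine ⟨kerCard G N, kerCard_pos G N, hev, ?_⟩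
  have hlim : Tendsto (fun i => Real.log (kerCard G i)) atTop
      (nhds (Real.log (kerCard G N))) := by
    refine tendsto_const_nhds.congr' ?_
    filter_upwards [hev] with i hi
    rw [hi]
  have hpos : ∀ i, Nat.card (blocks G i) ≠ 0 := by
    intro i
    have : Nonempty (blocks G i) := ⟨⟨1, 1, G.one_mem, rfl⟩⟩
    exact Nat.card_pos.ne'
  have hsum : ∀ n, ∑ i ∈ Finset.range n, Real.log (kerCard G i)
      = Real.log (Nat.card (blocks G n)) := by
    intro n
    induction n with
    | zero =>
      have : Nat.card (blocks G 0) ≤ 1 := Finite.card_le_one_iff_subsingleton.2 inferInstance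
      have h1 : Nat.card (blocks G 0) = 1 := le_antisymm this (Nat.pos_of_ne_zero (hpos 0))
      rw [h1]
      simp
    | succ n ih =>
      rw [Finset.sum_range_succ, ih, card_blocks_succ, Nat.cast_mul, Real.log_mul, add_comm]
      · exact_mod_cast (Nat.pos_iff_ne_zero.1 (kerCard_pos G n))
      · exact_mod_cast hpos n
  refine hlim.cesaro.congr fun n => ?_
  rw [hsum, div_eq_inv_mul]
end

section
/- Let G be a one-sided group shift on a finite group Γ. Then the sequence (|ker(π_i : G[i] → G[i-1])|)_{i≥1} is non-increasing, hence eventually constant with eventual value ld(G); and if n ≥ 1 is the smallest index with |ker(π_n : G[n] → G[n-1])| = ld(G), then G is an n-step group shift of finite type (with defining subgroup H = G[n] ≤ Γ^{n+1}). -/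
open Function Set Filter

/-- Entries at position `i` of elements of `G` trivial before `i`. -/
def kerSet {Γ : Type*} [Group Γ] (G : Subgroup (ℕ → Γ)) (i : ℕ) : Set Γ :=
  {x | ∃ g ∈ G, (∀ k < i, g k = 1) ∧ g i = x}

theorem kerCard_eq_ncard {Γ : Type*} [Group Γ] (G : Subgroup (ℕ → Γ)) (i : ℕ) :
    kerCard G i = (kerSet G i).ncard := by
  unfold kerCard
  rw [Nat.card_coe_set_eq]
  refine Set.ncard_congr (fun b _ => b (Fin.last i)) ?_ ?_ ?_
  · rintro b ⟨⟨g, hg, rfl⟩, hb⟩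
    exact ⟨g, hg, fun k hk => hb ⟨k, by omega⟩ hk, by simp⟩
  · rintro b c ⟨_, hb⟩ ⟨_, hc⟩ h
    funext k
    by_cases hk : (k : ℕ) < i
    · rw [hb k hk, hc k hk]
    · have : k = Fin.last i := by
        apply Fin.ext
        have := k.2
        simp only [Fin.val_last]
        omega
      rw [this]; exact h
  · rintro x ⟨g, hg, h1, rfl⟩
    exact ⟨fun k => g k, ⟨⟨g, hg, rfl⟩, fun k hk => h1 k hk⟩, by simp⟩

theorem kerSet_antitone {Γ : Type*} [Group Γ] (G : Subgroup (ℕ → Γ))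
    (hstable : ∀ g ∈ G, oneShift g ∈ G) : Antitone (kerSet G) := by
  apply antitone_nat_of_succ_le
  rintro i x ⟨g, hg, h1, rfl⟩
  exact ⟨oneShift g, hstable g hg, fun k hk => h1 (k + 1) (by omega), rfl⟩

theorem shift_mem {Γ : Type*} [Group Γ] (G : Subgroup (ℕ → Γ))
    (hstable : ∀ g ∈ G, oneShift g ∈ G) (g : ℕ → Γ) (hg : g ∈ G) (i : ℕ) :
    (fun k => g (i + k)) ∈ G := by
  induction i with
  | zero => simpa using hg
  | succ i ih =>
    have := hstable _ ih
    convert this using 1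
    funext k
    simp only [oneShift]
    congr 1
    omega

/-- Let `G` be a one-sided group shift on a finite group `Γ`. Then the
sequence `(|ker π_i|)_{i ≥ 1}` is non-increasing, hence eventually constant with eventual
value `ld(G)`; and if `n ≥ 1` is the smallest index with `|ker π_n| = ld(G)`, then `G` is
an `n`-step group shift of finite type, with defining subgroup `H = G[n] ≤ Γ^{n+1}`. -/
theorem kerCard_antitone_and_nStep
    {Γ : Type*} [Group Γ] [Finite Γ] [TopologicalSpace Γ] [DiscreteTopology Γ]
    (G : Subgroup (ℕ → Γ)) (hclosed : IsClosed (G : Set (ℕ → Γ)))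
    (hstable : ∀ g ∈ G, oneShift g ∈ G) :
    (∀ i : ℕ, 1 ≤ i → kerCard G (i + 1) ≤ kerCard G i) ∧
    ∃ d : ℕ, (∀ᶠ i in atTop, kerCard G i = d) ∧
      ∀ n : ℕ, 1 ≤ n → kerCard G n = d → (∀ m : ℕ, 1 ≤ m → m < n → kerCard G m ≠ d) →
        ∃ H : Subgroup (Fin (n + 1) → Γ),
          (H : Set (Fin (n + 1) → Γ)) = blocks G (n + 1) ∧
          ∀ g : ℕ → Γ, g ∈ G ↔ ∀ i : ℕ, (fun k : Fin (n + 1) => g (i + (k : ℕ))) ∈ H := by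
  have hanti := kerSet_antitone G hstable
  have hcard : Antitone (kerCard G) := by
    intro i j hij
    rw [kerCard_eq_ncard, kerCard_eq_ncard]
    exact Set.ncard_le_ncard (hanti hij) (Set.toFinite _)
  refine ⟨fun i _ => hcard (Nat.le_succ i), ?_⟩
  obtain ⟨N, hN⟩ := Nat.sInf_mem (Set.range_nonempty (kerCard G))
  have hN' : ∀ m, N ≤ m → kerCard G N = kerCard G m := fun m hm =>
    le_antisymm (hN.trans_le (Nat.sInf_le (Set.mem_range_self m))) (hcard hm)
  refine ⟨kerCard G N, ?_, ?_⟩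
  · filter_upwards [eventually_ge_atTop N] with i hi using (hN' i hi).symm
  intro n _ hn _
  have hK : ∀ m, n ≤ m → kerSet G m = kerSet G n := by
    intro m hm
    apply Set.eq_of_subset_of_ncard_le (hanti hm) _ (Set.toFinite _)
    rw [← kerCard_eq_ncard, ← kerCard_eq_ncard, hn]
    rcases le_total N m with h | h
    · exact (hN' m h).le
    · exact hcard h
  let φ : (ℕ → Γ) →* (Fin (n + 1) → Γ) :=
    { toFun := fun g k => g k, map_one' := rfl, map_mul' := fun _ _ => rfl }
  refine ⟨G.map φ, rfl, fun g => ⟨fun hg i => ⟨_, shift_mem G hstable g hg i, rfl⟩, fun hg => ?_⟩⟩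
  have hblk : ∀ i, ∃ f ∈ G, ∀ k ≤ n, f k = g (i + k) := by
    intro i
    obtain ⟨f, hf, he⟩ := hg i
    exact ⟨f, hf, fun k hk => congrFun he ⟨k, by omega⟩⟩
  have key : ∀ m, ∃ h ∈ G, ∀ k < m, h k = g k := by
    intro m
    induction m with
    | zero => exact ⟨1, G.one_mem, fun k hk => by omega⟩
    | succ m ih =>
      by_cases hm : m ≤ n
      · obtain ⟨f, hf, he⟩ := hblk 0
        exact ⟨f, hf, fun k hk => by simpa using he k (by omega)⟩
      · obtain ⟨h, hh, hhe⟩ := ih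
        obtain ⟨f, hf, he⟩ := hblk (m - n)
        have hmn : m - n + n = m := by omega
        have hmem : (h m)⁻¹ * g m ∈ kerSet G n := by
          refine ⟨_, G.mul_mem (G.inv_mem (shift_mem G hstable h hh (m - n))) hf, ?_, ?_⟩
          · intro k hk
            simp only [Pi.mul_apply, Pi.inv_apply]
            rw [he k hk.le, hhe _ (by omega), inv_mul_cancel]
          · simp only [Pi.mul_apply, Pi.inv_apply]
            rw [he n le_rfl, hmn]
        rw [← hK m (by omega)] at hmem
        obtain ⟨u, hu, hu1, hum⟩ := hmem
        refine ⟨h * u, G.mul_mem hh hu, fun k hk => ?_⟩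
        rcases Nat.lt_succ_iff_lt_or_eq.mp hk with hk | rfl
        · simp [hu1 k hk, hhe k hk]
        · simp [hum]
  choose h hh hhe using key
  refine hclosed.mem_of_tendsto (f := h) (b := atTop) ?_ (Eventually.of_forall hh)
  rw [tendsto_pi_nhds]
  intro k
  apply tendsto_const_nhds.congr'
  filter_upwards [eventually_gt_atTop k] with m hm using (hhe m k hm).symm
end

section
/- Let G be a one-sided group shift on a finite group Γ and let N be a closed σ-stable normal subgroup of G (so N is itself a one-sided group shift on Γ, and the quotient G/N with the quotient topology and induced endomorphism is an expansive profinite group). Then ld(N) divides ld(G); moreover, for every finite group H and every injective continuous σ-equivariant group homomorphism ψ : G/N → H^ℕ, the one-sided group shift ψ(G/N) on H satisfies ld(ψ(G/N)) = ld(G)/ld(N). -/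
open Function Set Filter

namespace LimDeg

/-- Sequences whose first `n` entries are trivial. -/
def K (Γ : Type*) [Group Γ] (n : ℕ) : Subgroup (ℕ → Γ) where
  carrier := {g | ∀ k < n, g k = 1}
  one_mem' := fun _ _ => rfl
  mul_mem' := by
    intro a b ha hb k hk
    simp [ha k hk, hb k hk]
  inv_mem' := by
    intro a ha k hk
    simp [ha k hk]

theorem mem_K {Γ : Type*} [Group Γ] {n : ℕ} {g : ℕ → Γ} : g ∈ K Γ n ↔ ∀ k < n, g k = 1 := Iff.rfl

instance {Γ : Type*} [Group Γ] (n : ℕ) : (K Γ n).Normal := by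
  constructor
  intro a ha g k hk
  simp [ha k hk]

theorem K_anti {Γ : Type*} [Group Γ] {m n : ℕ} (h : m ≤ n) : K Γ n ≤ K Γ m :=
  fun _ hg k hk => hg k (lt_of_lt_of_le hk h)

theorem K_zero {Γ : Type*} [Group Γ] : K Γ 0 = ⊤ := by
  ext g; simp [mem_K]

theorem K_succ {Γ : Type*} [Group Γ] (n : ℕ) :
    K Γ (n + 1) = (Pi.evalMonoidHom (fun _ : ℕ => Γ) n).ker ⊓ K Γ n := by
  ext g
  simp only [mem_K, Subgroup.mem_inf, MonoidHom.mem_ker, Pi.evalMonoidHom_apply]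
  constructor
  · intro h
    exact ⟨h n (by omega), fun k hk => h k (by omega)⟩
  · rintro ⟨h1, h2⟩ k hk
    rcases Nat.lt_succ_iff_lt_or_eq.1 hk with h | h
    · exact h2 k h
    · exact h ▸ h1

/-- Possible first nontrivial entries at position `i`. -/
def E {Γ : Type*} [Group Γ] (G : Subgroup (ℕ → Γ)) (i : ℕ) : Subgroup Γ :=
  (G ⊓ K Γ i).map (Pi.evalMonoidHom (fun _ : ℕ => Γ) i)

theorem mem_E {Γ : Type*} [Group Γ] {G : Subgroup (ℕ → Γ)} {i : ℕ} {a : Γ} :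
    a ∈ E G i ↔ ∃ g ∈ G, (∀ k < i, g k = 1) ∧ g i = a := by
  simp [E, Subgroup.mem_map, mem_K, and_assoc]

theorem kerCard_eq {Γ : Type*} [Group Γ] (G : Subgroup (ℕ → Γ)) (i : ℕ) :
    kerCard G i = Nat.card (E G i) := by
  unfold kerCard
  refine Nat.card_congr (Equiv.ofBijective
    (fun b => ⟨b.1 (Fin.last i), ?_⟩) ⟨?_, ?_⟩)
  · obtain ⟨b, ⟨g, hg, rfl⟩, hb⟩ := b
    refine mem_E.2 ⟨g, hg, fun k hk => ?_, by simp⟩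
    exact hb ⟨k, by omega⟩ hk
  · rintro ⟨b, hb, hb'⟩ ⟨c, hc, hc'⟩ h
    apply Subtype.ext
    funext k
    simp only [Subtype.mk.injEq] at h
    by_cases hk : (k : ℕ) < i
    · exact (hb' k hk).trans (hc' k hk).symm
    · have : k = Fin.last i := by
        apply Fin.ext
        have := k.2
        simp only [Fin.val_last]
        omega
      rw [this]; exact h
  · rintro ⟨a, ha⟩
    obtain ⟨g, hg, h1, rfl⟩ := mem_E.1 ha
    exact ⟨⟨fun k => g k, ⟨g, hg, rfl⟩, fun k hk => h1 k hk⟩, by simp⟩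

theorem E_succ_le {Γ : Type*} [Group Γ] {G : Subgroup (ℕ → Γ)}
    (hG : ∀ g ∈ G, oneShift g ∈ G) (i : ℕ) : E G (i + 1) ≤ E G i := by
  intro a ha
  obtain ⟨g, hg, h1, rfl⟩ := mem_E.1 ha
  exact mem_E.2 ⟨oneShift g, hG g hg, fun k hk => h1 (k + 1) (by omega), rfl⟩

theorem E_anti {Γ : Type*} [Group Γ] {G : Subgroup (ℕ → Γ)}
    (hG : ∀ g ∈ G, oneShift g ∈ G) : Antitone (E G) := antitone_nat_of_succ_le (E_succ_le hG)

theorem E_eq {Γ : Type*} [Group Γ] [Finite Γ] {G : Subgroup (ℕ → Γ)}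
    (hG : ∀ g ∈ G, oneShift g ∈ G) {i j d : ℕ} (hij : i ≤ j) (hi : kerCard G i = d)
    (hj : kerCard G j = d) : E G i = E G j := by
  rw [kerCard_eq] at hi hj
  exact (Subgroup.eq_of_le_of_card_ge (E_anti hG hij) (by rw [hi, hj])).symm

theorem relIndex_K_succ {Γ : Type*} [Group Γ] (G : Subgroup (ℕ → Γ)) (n : ℕ) :
    (K Γ (n + 1)).relIndex G = kerCard G n * (K Γ n).relIndex G := by
  have h := Subgroup.relIndex_mul_relIndex (G ⊓ K Γ (n + 1)) (G ⊓ K Γ n) G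
    (inf_le_inf_left _ (K_anti (Nat.le_succ n))) inf_le_left
  rw [Subgroup.inf_relIndex_left, Subgroup.inf_relIndex_left] at h
  rw [← h, kerCard_eq, E, ← Subgroup.relIndex_ker, K_succ]
  congr 1
  rw [← Subgroup.inf_relIndex_right (MonoidHom.ker _), ← Subgroup.inf_relIndex_right (G ⊓ _)]
  congr 1
  ext x
  simp only [Subgroup.mem_inf]
  tauto

theorem kerCard_pos {Γ : Type*} [Group Γ] [Finite Γ] (G : Subgroup (ℕ → Γ)) (n : ℕ) :
    0 < kerCard G n := by
  rw [kerCard_eq]; exact Nat.card_pos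

theorem relIndex_K_pos {Γ : Type*} [Group Γ] [Finite Γ] (G : Subgroup (ℕ → Γ)) (n : ℕ) :
    0 < (K Γ n).relIndex G := by
  induction n with
  | zero => simp [K_zero]
  | succ n ih => rw [relIndex_K_succ]; exact Nat.mul_pos (kerCard_pos G n) ih

theorem relIndex_K_add {Γ : Type*} [Group Γ] {G : Subgroup (ℕ → Γ)} {s d : ℕ}
    (h : ∀ i ≥ s, kerCard G i = d) (t : ℕ) :
    (K Γ (s + t)).relIndex G = (K Γ s).relIndex G * d ^ t := by
  induction t with
  | zero => simp
  | succ t ih =>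
    rw [← add_assoc, relIndex_K_succ, ih, h _ (by omega)]; ring

theorem eventually_const {Γ : Type*} [Group Γ] [Finite Γ] {G : Subgroup (ℕ → Γ)}
    (hG : ∀ g ∈ G, oneShift g ∈ G) : ∃ s d, ∀ i ≥ s, kerCard G i = d := by
  have hex : ∃ d, ∃ s, kerCard G s = d := ⟨_, 0, rfl⟩
  classical
  obtain ⟨s, hs⟩ := Nat.find_spec hex
  refine ⟨s, Nat.find hex, fun i hi => le_antisymm ?_ (Nat.find_min' hex ⟨i, rfl⟩)⟩
  rw [← hs, kerCard_eq, kerCard_eq]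
  exact Subgroup.card_le_of_le (E_anti hG hi)

theorem le_of_pow_le {x y C : ℕ} (h : ∀ t : ℕ, x ^ t ≤ C * y ^ t) : x ≤ y := by
  by_contra! hlt
  rcases Nat.eq_zero_or_pos y with rfl | hy
  · have := h 1
    simp at this; omega
  · have hy' : (0 : ℝ) < y := by exact_mod_cast hy
    have h1 : (1 : ℝ) < x / y := by
      rw [one_lt_div hy']; exact_mod_cast hlt
    obtain ⟨t, ht⟩ := pow_unbounded_of_one_lt (C : ℝ) h1
    rw [div_pow, lt_div_iff₀ (by positivity)] at ht
    have := h t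
    have h2 : (x : ℝ) ^ t ≤ C * (y : ℝ) ^ t := by exact_mod_cast this
    linarith

theorem isOpen_K {Γ : Type*} [Group Γ] [TopologicalSpace Γ] [DiscreteTopology Γ] (n : ℕ) :
    IsOpen (K Γ n : Set (ℕ → Γ)) := by
  have : (K Γ n : Set (ℕ → Γ)) = ⋂ k ∈ Set.Iio n, (fun g : ℕ → Γ => g k) ⁻¹' {1} := by
    ext g; simp [mem_K]
  rw [this]
  exact (Set.finite_Iio n).isOpen_biInter fun k _ =>
    (isOpen_discrete _).preimage (continuous_apply k)

theorem isClosed_K {Γ : Type*} [Group Γ] [TopologicalSpace Γ] [DiscreteTopology Γ] (n : ℕ) :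
    IsClosed (K Γ n : Set (ℕ → Γ)) := Subgroup.isClosed_of_isOpen _ (isOpen_K n)

theorem exists_le {X : Type*} [Group X] [TopologicalSpace X] [CompactSpace X]
    (V : ℕ → Subgroup X) (hV : Antitone V) (hVc : ∀ n, IsClosed (V n : Set X))
    (U : Subgroup X) (hU : IsOpen (U : Set X)) (h : ∀ x, (∀ n, x ∈ V n) → x ∈ U) :
    ∃ n, V n ≤ U := by
  obtain ⟨n, hn⟩ := exists_subset_nhds_of_isCompact' (V := fun n => (V n : Set X))
    (directed_of_isDirected_le (fun i j hij => hV hij)) (fun n => (hVc n).isCompact) hVc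
    (U := (U : Set X)) (fun x hx => hU.mem_nhds (h x (by simpa using hx)))
  exact ⟨n, hn⟩

theorem iter_mem {A : Type*} [Group A] {G : Subgroup (ℕ → A)} (hG : ∀ g ∈ G, oneShift g ∈ G)
    (k : ℕ) (g : ℕ → A) (hg : g ∈ G) : (fun n => g (n + k)) ∈ G := by
  induction k with
  | zero => exact hg
  | succ k ih =>
    have := hG _ ih
    convert this using 1
    funext n
    simp [oneShift, add_assoc, add_comm 1]

end LimDeg

/-- Let `G` be a one-sided group shift on a finite group `Γ` and `N` a
closed shift-stable normal subgroup of `G`. Then `ld(N)` divides `ld(G)`, and for every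
finite group `H` and every injective continuous σ-equivariant homomorphism
`ψ : G/N → H^ℕ`, the one-sided group shift `ψ(G/N)` on `H` has limit degree
`ld(G)/ld(N)`.  (Limit degrees are expressed via the eventual values of the sequences
`i ↦ |ker π_i|`.) -/
theorem limitDegree_multiplicative
    {Γ : Type*} [Group Γ] [Finite Γ] [TopologicalSpace Γ] [DiscreteTopology Γ]
    (G N : Subgroup (ℕ → Γ))
    (hGclosed : IsClosed (G : Set (ℕ → Γ))) (hGstable : ∀ g ∈ G, oneShift g ∈ G)
    (hNclosed : IsClosed (N : Set (ℕ → Γ))) (hNstable : ∀ g ∈ N, oneShift g ∈ N)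
    (hNG : N ≤ G) [hNnormal : (N.subgroupOf G).Normal] :
    ∀ dG dN : ℕ,
      (∀ᶠ i in atTop, kerCard G i = dG) → (∀ᶠ i in atTop, kerCard N i = dN) →
      dN ∣ dG ∧
      ∀ (H : Type) (_ : Group H) (_ : Finite H) (_ : TopologicalSpace H),
        DiscreteTopology H →
        ∀ ψ : (G ⧸ N.subgroupOf G) →* (ℕ → H),
          Function.Injective ψ → Continuous ψ →
          (∀ x y : G, (y : ℕ → Γ) = oneShift (x : ℕ → Γ) →
            ψ (QuotientGroup.mk y) = shiftHom H (ψ (QuotientGroup.mk x))) →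
          ∀ᶠ i in atTop, kerCard ψ.range i = dG / dN := by
  intro dG dN hdG hdN
  have hdvd : dN ∣ dG := by
    obtain ⟨i, h1, h2⟩ := (hdG.and hdN).exists
    rw [← h1, ← h2, LimDeg.kerCard_eq, LimDeg.kerCard_eq]
    exact Subgroup.card_dvd_of_le (Subgroup.map_mono (inf_le_inf_right _ hNG))
  refine ⟨hdvd, ?_⟩
  intro H _ _ _ hdisc ψ hinj hcont hequiv
  haveI : CompactSpace G := isCompact_iff_compactSpace.1 hGclosed.isCompact
  let φ : G →* (ℕ → H) := ψ.comp (QuotientGroup.mk' (N.subgroupOf G))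
  have hφ : ∀ x, φ x = ψ (QuotientGroup.mk x) := fun _ => rfl
  have hφc : Continuous φ := hcont.comp continuous_quot_mk
  have hφker : ∀ x : G, φ x = 1 ↔ (x : ℕ → Γ) ∈ N := by
    intro x
    rw [hφ, map_eq_one_iff ψ hinj, QuotientGroup.eq_one_iff, Subgroup.mem_subgroupOf]
  have hrange : φ.range = ψ.range := by
    rw [MonoidHom.range_comp, QuotientGroup.range_mk', ← MonoidHom.range_eq_map]
  have hRstable : ∀ g ∈ ψ.range, oneShift g ∈ ψ.range := by
    rw [← hrange]
    rintro _ ⟨x, rfl⟩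
    exact ⟨⟨oneShift x, hGstable _ x.2⟩, hequiv x _ rfl⟩
  -- iterated shift on G
  let S : ℕ → G → G := fun k x => ⟨fun n => (x : ℕ → Γ) (n + k), LimDeg.iter_mem hGstable k _ x.2⟩
  have hS : ∀ k x n, (S k x : ℕ → Γ) n = (x : ℕ → Γ) (n + k) := fun _ _ _ => rfl
  have hφS : ∀ k x n, φ (S k x) n = φ x (n + k) := by
    intro k
    induction k with
    | zero => intro x n; rfl
    | succ k ih =>
      intro x n
      have h1 : φ (S (k + 1) x) = shiftHom H (φ (S k x)) := by
        refine hequiv (S k x) (S (k + 1) x) ?_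
        funext n
        simp [hS, oneShift, add_assoc, add_comm 1]
      rw [h1]
      change φ (S k x) (n + 1) = _
      rw [ih, show n + 1 + k = n + (k + 1) by omega]
  let P : ℕ → Subgroup G := fun n => (LimDeg.K H n).comap φ
  have hP : ∀ n x, x ∈ P n ↔ ∀ k < n, φ x k = 1 := fun _ _ => Iff.rfl
  let K' : ℕ → Subgroup G := fun n => (LimDeg.K Γ n).subgroupOf G
  have hK' : ∀ n x, x ∈ K' n ↔ ∀ k < n, (x : ℕ → Γ) k = 1 := fun _ _ => Iff.rfl
  let A : ℕ → Subgroup G := fun n => N.subgroupOf G ⊔ K' n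
  have hA : ∀ n x, x ∈ A n ↔ ∃ y ∈ N, ∀ k < n, (x : ℕ → Γ) k = y k := by
    intro n x
    constructor
    · intro hx
      obtain ⟨y, hy, z, hz, rfl⟩ := Subgroup.mem_sup_of_normal_left.1 hx
      refine ⟨y, hy, fun k hk => ?_⟩
      simp [(hK' n z).1 hz k hk]
    · rintro ⟨y, hy, hxy⟩
      have hyG := hNG hy
      refine Subgroup.mem_sup_of_normal_left.2 ⟨⟨y, hyG⟩, hy, ⟨y, hyG⟩⁻¹ * x, ?_, by group⟩
      rw [hK']
      intro k hk
      simp [hxy k hk]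
  have hAanti : Antitone A := fun m n h => sup_le_sup_left
    (fun x hx => LimDeg.K_anti h hx) _
  have hPanti : Antitone P := fun m n h x hx => LimDeg.K_anti h hx
  have hKopen : ∀ n, IsOpen (K' n : Set G) := fun n =>
    (LimDeg.isOpen_K n).preimage continuous_subtype_val
  have hKclosed : ∀ n, IsClosed (K' n : Set G) := fun n =>
    (LimDeg.isClosed_K n).preimage continuous_subtype_val
  have hPopen : ∀ n, IsOpen (P n : Set G) := fun n => (LimDeg.isOpen_K n).preimage hφc
  have hPclosed : ∀ n, IsClosed (P n : Set G) := fun n => (LimDeg.isClosed_K n).preimage hφc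
  have hAopen : ∀ n, IsOpen (A n : Set G) := fun n => by
    have : (A n : Set G) = ⋃ y ∈ (A n : Set G), (fun x => y⁻¹ * x) ⁻¹' (K' n : Set G) := by
      ext x
      simp only [Set.mem_iUnion, Set.mem_preimage, SetLike.mem_coe]
      constructor
      · intro hx
        exact ⟨x, hx, by simpa using one_mem _⟩
      · rintro ⟨y, hy, hx⟩
        have := mul_mem hy ((le_sup_right : K' n ≤ A n) hx)
        simpa using this
    rw [this]
    exact isOpen_biUnion fun y _ => (hKopen n).preimage (continuous_const.mul continuous_id)
  obtain ⟨s1, hs1⟩ := eventually_atTop.1 hdG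
  obtain ⟨s2, hs2⟩ := eventually_atTop.1 hdN
  obtain ⟨s3, d', hs3⟩ := LimDeg.eventually_const hRstable
  -- first inclusion
  obtain ⟨l, hl⟩ : ∃ l, K' l ≤ P 1 := by
    refine LimDeg.exists_le K' (fun m n h x hx => LimDeg.K_anti h hx) hKclosed _ (hPopen 1) ?_
    intro x hx
    have : x = 1 := by
      apply Subtype.ext
      funext k
      exact hx (k + 1) k (by omega)
    rw [this]; exact one_mem _
  have hAP : ∀ n, A (n + l) ≤ P n := by
    intro n
    refine sup_le ?_ ?_
    · intro x hx
      have := (hφker x).2 hx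
      rw [hP]; intro k _; rw [this]; rfl
    · intro x hx k hk
      have h1 : S k x ∈ K' l := fun j hj => hx (j + k) (by omega)
      have h2 := hl h1 0 (by omega)
      rw [hφS] at h2
      simpa using h2
  -- second inclusion
  obtain ⟨m, hm⟩ : ∃ m, P m ≤ A (s2 + 1) := by
    refine LimDeg.exists_le P hPanti hPclosed _ (hAopen _) ?_
    intro x hx
    refine (le_sup_left : N.subgroupOf G ≤ A _) ((hφker x).1 ?_)
    funext k
    exact hx (k + 1) k (by omega)
  have hPA' : ∀ n, P (n + m) ≤ A (n + (s2 + 1)) := by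
    intro n
    induction n with
    | zero => simpa using hm
    | succ n ih =>
      intro g hg
      obtain ⟨x, hx, hgx⟩ := (hA _ _).1 (ih (hPanti (by omega) hg))
      have h1 : S (n + 1) g ∈ P m := fun j hj => by
        rw [hφS]; exact hg _ (by omega)
      obtain ⟨y, hy, hgy⟩ := (hA _ _).1 (hm h1)
      have hw : (x (s2 + (n + 1)))⁻¹ * y s2 ∈ LimDeg.E N s2 := by
        refine LimDeg.mem_E.2 ⟨(fun j => x (j + (n + 1)))⁻¹ * y,
          mul_mem (inv_mem (LimDeg.iter_mem hNstable _ _ hx)) hy, ?_, by simp⟩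
        intro k hk
        have e1 := hgx (k + (n + 1)) (by omega)
        have e2 := hgy k (by omega)
        rw [hS] at e2
        simp [← e1, ← e2]
      rw [LimDeg.E_eq hNstable (show s2 ≤ s2 + (n + 1) by omega) (hs2 _ le_rfl)
        (hs2 _ (by omega))] at hw
      obtain ⟨z, hz, hz1, hz2⟩ := LimDeg.mem_E.1 hw
      refine (hA _ _).2 ⟨x * z, mul_mem hx hz, fun k hk => ?_⟩
      by_cases hk' : k < s2 + (n + 1)
      · rw [hgx k (by omega), Pi.mul_apply, hz1 k hk', mul_one]
      · obtain rfl : k = s2 + (n + 1) := by omega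
        have e2 := hgy s2 (by omega)
        rw [hS] at e2
        rw [Pi.mul_apply, hz2, e2]; group
  have hPA : ∀ n, P (n + m) ≤ A n := fun n => (hPA' n).trans (hAanti (by omega))
  -- indices
  have hPidx : ∀ n, (P n).index = (LimDeg.K H n).relIndex ψ.range := fun n => by
    rw [← hrange]; exact Subgroup.index_comap _ _
  have hAidx : ∀ n, (LimDeg.K Γ n).relIndex N * (A n).index = (LimDeg.K Γ n).relIndex G := by
    intro n
    haveI : (K' n).Normal := inferInstanceAs ((LimDeg.K Γ n).subgroupOf G).Normal
    have h := Subgroup.relIndex_mul_index (le_sup_right : K' n ≤ A n)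
    have h2 : (K' n).relIndex (A n) = (LimDeg.K Γ n).relIndex N := by
      rw [show A n = N.subgroupOf G ⊔ K' n from rfl, Subgroup.relIndex_sup_right]
      exact Subgroup.relIndex_subgroupOf hNG
    rw [h2] at h
    exact h
  have hApos : ∀ n, (A n).index ≠ 0 := fun n h => by
    have := hAidx n
    rw [h, mul_zero] at this
    exact (LimDeg.relIndex_K_pos G n).ne this
  have hPpos : ∀ n, (P n).index ≠ 0 := fun n h => by
    rw [hPidx] at h
    exact (LimDeg.relIndex_K_pos ψ.range n).ne' h
  have hle1 : ∀ n, (P n).index ≤ (A (n + l)).index := fun n =>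
    Nat.le_of_dvd (Nat.pos_of_ne_zero (hApos _)) (Subgroup.index_dvd_of_le (hAP n))
  have hle2 : ∀ n, (A n).index ≤ (P (n + m)).index := fun n =>
    Nat.le_of_dvd (Nat.pos_of_ne_zero (hPpos _)) (Subgroup.index_dvd_of_le (hPA n))
  obtain ⟨q, hq⟩ := hdvd
  have hdNpos : 0 < dN := by
    rw [← hs2 s2 le_rfl]; exact LimDeg.kerCard_pos _ _
  have hdq : dG / dN = q := by rw [hq]; exact Nat.mul_div_cancel_left _ hdNpos
  rw [hdq]
  set s := s1 + s2 + s3 with hsdef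
  have hG' := LimDeg.relIndex_K_add (s := s) (fun i hi => hs1 i (by omega))
  have hN' := LimDeg.relIndex_K_add (s := s) (fun i hi => hs2 i (by omega))
  have hR' := LimDeg.relIndex_K_add (s := s) (fun i hi => hs3 i (by omega))
  have ha := LimDeg.relIndex_K_pos G s
  have hb := LimDeg.relIndex_K_pos N s
  have hc := LimDeg.relIndex_K_pos ψ.range s
  set a := (LimDeg.K Γ s).relIndex G
  set b := (LimDeg.K Γ s).relIndex N
  set c := (LimDeg.K H s).relIndex ψ.range
  have hAt : ∀ t, b * (A (s + t)).index = a * q ^ t := by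
    intro t
    have h := hAidx (s + t)
    rw [hG', hN', hq, mul_pow] at h
    have : 0 < dN ^ t := by positivity
    apply Nat.eq_of_mul_eq_mul_left this
    linarith
  have hPt : ∀ t, (P (s + t)).index = c * d' ^ t := fun t => by rw [hPidx, hR']
  have hd : d' = q := by
    apply le_antisymm
    · apply LimDeg.le_of_pow_le (C := a * q ^ l)
      intro t
      calc d' ^ t ≤ b * (c * d' ^ t) := by
            rw [← mul_assoc]; exact Nat.le_mul_of_pos_left _ (by positivity)
        _ ≤ b * (A (s + (t + l))).index := by
            rw [← hPt, ← add_assoc]; exact Nat.mul_le_mul_left _ (hle1 _)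
        _ = _ := by rw [hAt]; ring
    · apply LimDeg.le_of_pow_le (C := b * c * d' ^ m)
      intro t
      calc q ^ t ≤ a * q ^ t := Nat.le_mul_of_pos_left _ ha
        _ = b * (A (s + t)).index := (hAt t).symm
        _ ≤ b * (P (s + (t + m))).index := by
            rw [← add_assoc]; exact Nat.mul_le_mul_left _ (hle2 _)
        _ = _ := by rw [hPt]; ring
  exact eventually_atTop.2 ⟨s3, fun i hi => by rw [hs3 i hi, hd]⟩
end

section
/- Let A be a finite set and let X ⊆ A^ℕ be a one-sided subshift of finite type, i.e., a closed shift-stable subset consisting of exactly those sequences containing no block from some fixed finite set of forbidden blocks. Then X has only finitely many σ-connected components (connected components in the σ-topology). -/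
open Function Set

/-- The σ-topology on a topological space `X` with a self-map `σ`: its closed sets are
exactly the subsets of `X` that are closed and σ-stable. -/
def sigmaTopology {X : Type*} [TopologicalSpace X] (σ : X → X) : TopologicalSpace X where
  IsOpen s := IsClosed sᶜ ∧ ∀ x ∈ sᶜ, σ x ∈ sᶜ
  isOpen_univ := by simp
  isOpen_inter s t hs ht := by
    show IsClosed (s ∩ t)ᶜ ∧ _
    rw [Set.compl_inter]
    exact ⟨hs.1.union ht.1, by rintro x (hx | hx); exacts [Or.inl (hs.2 x hx), Or.inr (ht.2 x hx)]⟩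
  isOpen_sUnion S hS := by
    show IsClosed (⋃₀ S)ᶜ ∧ _
    rw [Set.compl_sUnion]
    constructor
    · exact isClosed_sInter (by rintro _ ⟨t, ht, rfl⟩; exact (hS t ht).1)
    · intro x hx
      rw [Set.mem_sInter] at hx ⊢
      rintro _ ⟨t, ht, rfl⟩
      exact (hS t ht).2 x (hx _ ⟨t, ht, rfl⟩)

theorem sigma_comp_props {X : Type*} [t : TopologicalSpace X] (σ : X → X) (x : X) :
    IsClosed (@connectedComponent X (sigmaTopology σ) x) ∧
      ∀ z ∈ @connectedComponent X (sigmaTopology σ) x,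
        σ z ∈ @connectedComponent X (sigmaTopology σ) x := by
  have h := @isClosed_connectedComponent X (sigmaTopology σ) x
  have h2 := (@isOpen_compl_iff X _ (sigmaTopology σ)).2 h
  have h3 : IsClosed (@connectedComponent X (sigmaTopology σ) x)ᶜᶜ ∧
      ∀ z ∈ (@connectedComponent X (sigmaTopology σ) x)ᶜᶜ,
        σ z ∈ (@connectedComponent X (sigmaTopology σ) x)ᶜᶜ := h2
  rwa [compl_compl] at h3

theorem sigma_comp_iterate {X : Type*} [t : TopologicalSpace X] (σ : X → X) (x : X) (n : ℕ) :
    @connectedComponent X (sigmaTopology σ) (σ^[n] x)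
      = @connectedComponent X (sigmaTopology σ) x := by
  induction n with
  | zero => rfl
  | succ n ih =>
    rw [Function.iterate_succ_apply', ← ih]
    refine (@connectedComponent_eq X (sigmaTopology σ) _ _ ?_).symm
    exact (sigma_comp_props σ _).2 _ (@mem_connectedComponent X (sigmaTopology σ) _)

theorem oneShift_restrict_iterate {A : Type*} (X : Set (ℕ → A))
    (hs : Set.MapsTo oneShift X X) (x : X) (n m : ℕ) :
    (((Set.MapsTo.restrict oneShift X X hs)^[n] x : X) : ℕ → A) m = x.1 (m + n) := by
  induction n generalizing m with
  | zero => rfl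
  | succ n ih =>
    rw [Function.iterate_succ_apply']
    show (((Set.MapsTo.restrict oneShift X X hs)^[n] x : X) : ℕ → A) (m + 1) = _
    rw [ih, Nat.add_assoc, Nat.add_comm 1 n]

/-- Let `A` be a finite set and `X ⊆ A^ℕ` a one-sided subshift of finite
type (a closed shift-stable subset cut out by the exclusion of a finite set `F` of
forbidden blocks, of possibly varying lengths). Then `X` has only finitely many
σ-connected components, i.e. connected components in the σ-topology of the subspace `X`
with the restricted shift map. -/
theorem sft_finitely_many_sigma_components
    {A : Type*} [Finite A] [TopologicalSpace A] [DiscreteTopology A]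
    (X : Set (ℕ → A)) (hclosed : IsClosed X) (hstable : Set.MapsTo oneShift X X)
    (F : Set ((k : ℕ) × (Fin k → A))) (hF : F.Finite)
    (hX : X = {a : ℕ → A | ∀ b ∈ F, ∀ i : ℕ, ∃ j : Fin b.1, a (i + (j : ℕ)) ≠ b.2 j}) :
    (Set.range fun x : X =>
      @connectedComponent X (sigmaTopology (Set.MapsTo.restrict oneShift X X hstable)) x).Finite := by
  classical
  obtain ⟨N, hN⟩ : ∃ N : ℕ, ∀ b ∈ F, b.1 ≤ N := by
    obtain ⟨N, hN⟩ := (hF.image Sigma.fst).bddAbove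
    exact ⟨N, fun b hb => hN ⟨b, hb, rfl⟩⟩
  have hw : ∀ x : X, ∃ w : Fin N → A, {i : ℕ | ∀ s : Fin N, x.1 (i + s) = w s}.Infinite := by
    intro x
    obtain ⟨w, hw⟩ := Finite.exists_infinite_fiber (fun (i : ℕ) (s : Fin N) => x.1 (i + s))
    refine ⟨w, ?_⟩
    have h := Set.infinite_coe_iff.1 hw
    refine h.mono ?_
    intro i hi s
    exact congrFun hi s
  choose w hw using hw
  have key : ∀ x y : X, w x = w y →
      @connectedComponent X (sigmaTopology (Set.MapsTo.restrict oneShift X X hstable)) x =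
      @connectedComponent X (sigmaTopology (Set.MapsTo.restrict oneShift X X hstable)) y := by
    intro x y hxy
    obtain ⟨j, hj⟩ := (hw y).nonempty
    have hi : ∀ k : ℕ, ∃ i, k ≤ i ∧ ∀ s : Fin N, x.1 (i + s) = w x s := by
      intro k
      obtain ⟨i, hi, hk⟩ := (hw x).exists_gt k
      exact ⟨i, hk.le, hi⟩
    choose i hki hi using hi
    have hmem : ∀ k, (fun n => if n < i k then x.1 n else y.1 (n - i k + j)) ∈ X := by
      intro k
      have hx := hX.subset x.2
      have hy := hX.subset y.2
      refine hX.superset ?_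
      intro b hb m
      by_cases hm : m < i k
      · obtain ⟨t, ht⟩ := hx b hb m
        refine ⟨t, ?_⟩
        by_cases hmt : m + (t : ℕ) < i k
        · simpa [hmt] using ht
        · have hs : m + (t : ℕ) - i k < N := by
            have := hN b hb
            have := t.2
            omega
          have h1 := hi k ⟨_, hs⟩
          have h2 := hj ⟨_, hs⟩
          rw [hxy, ← h2] at h1
          simp only [hmt, if_false]
          rw [show m + (t : ℕ) - i k + j = j + (m + (t : ℕ) - i k) by omega]
          simp only at h1
          rw [← h1, show i k + (m + (t : ℕ) - i k) = m + t by omega]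
          exact ht
      · obtain ⟨t, ht⟩ := hy b hb (m - i k + j)
        refine ⟨t, ?_⟩
        have hmt : ¬ m + (t : ℕ) < i k := by omega
        simp only [hmt, if_false]
        rw [show m + (t : ℕ) - i k + j = m - i k + j + t by omega]
        exact ht
    let z : ℕ → X := fun k => ⟨_, hmem k⟩
    have hz : ∀ k, z k ∈ @connectedComponent X
        (sigmaTopology (Set.MapsTo.restrict oneShift X X hstable)) y := by
      intro k
      have he : (Set.MapsTo.restrict oneShift X X hstable)^[i k] (z k)
          = (Set.MapsTo.restrict oneShift X X hstable)^[j] y := by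
        apply Subtype.ext
        funext m
        rw [oneShift_restrict_iterate, oneShift_restrict_iterate]
        simp [z]
      rw [← sigma_comp_iterate _ y j, ← he, sigma_comp_iterate]
      exact @mem_connectedComponent X (sigmaTopology _) _
    have hlim : Filter.Tendsto z Filter.atTop (nhds x) := by
      rw [tendsto_subtype_rng, tendsto_pi_nhds]
      intro n
      refine tendsto_const_nhds.congr' ?_
      filter_upwards [Filter.eventually_gt_atTop n] with k hk
      have : n < i k := lt_of_lt_of_le hk (hki k)
      simp [z, this]
    have hxm := (sigma_comp_props (Set.MapsTo.restrict oneShift X X hstable) y).1.mem_of_tendsto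
      hlim (Filter.Eventually.of_forall hz)
    exact (@connectedComponent_eq X (sigmaTopology _) _ _ hxm).symm
  refine Set.Finite.subset (Set.finite_range (fun v : Fin N → A =>
    if h : ∃ x : X, w x = v then
      @connectedComponent X (sigmaTopology (Set.MapsTo.restrict oneShift X X hstable)) h.choose
    else ∅)) ?_
  rintro _ ⟨x, rfl⟩
  refine ⟨w x, ?_⟩
  have h : ∃ y : X, w y = w x := ⟨x, rfl⟩
  simp only [h, dif_pos]
  exact key _ _ h.choose_spec
end
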